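/- Let Γ be a group, R a Γ-graded ring, and P, Q ∈ 𝔐(R). There exist a Γ-graded division ring K and a homomorphism of Γ-graded rings φ : R → K such that P^φ is invertible over K and Q^φ is not invertible over K, if and only if no matrix of the form (P ⊕ ⋯ ⊕ P) ⊕ I_m (the diagonal sum of r ≥ 1 copies of P with an m×m identity matrix, m ≥ 0) can be expressed as an iterated determinantal sum of matrices each of which either is a square homogeneous matrix that is not gr-full, or has the form E(Q ⊕ A)F for some A ∈ 𝔐(R) (A possibly absent, i.e., EQF) and permutation matrices E, F of appropriate size. -/

import Mathlib

open Matrix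

universe u v w

section GradedDefs

variable {Γ : Type u} [Group Γ] {R : Type v} [Ring R]

/-- `A` is a homogeneous matrix of distribution `(α, β)`:
its `(i,j)` entry lies in `𝒜 (α i * (β j)⁻¹)`. -/
def IsHomog (𝒜 : Γ → AddSubgroup R) {m n : ℕ}
    (A : Matrix (Fin m) (Fin n) R) (α : Fin m → Γ) (β : Fin n → Γ) : Prop :=
  ∀ i j, A i j ∈ 𝒜 (α i * (β j)⁻¹)

/-- `A` is a homogeneous matrix for some distribution. -/
def IsHomogSq (𝒜 : Γ → AddSubgroup R) {m n : ℕ}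
    (A : Matrix (Fin m) (Fin n) R) : Prop :=
  ∃ (α : Fin m → Γ) (β : Fin n → Γ), IsHomog 𝒜 A α β

end GradedDefs

/-- Square matrices over `R` of arbitrary finite size. -/
abbrev SqMat (R : Type v) : Type v := Σ n : ℕ, Matrix (Fin n) (Fin n) R

section GradedDefs

variable {Γ : Type u} [Group Γ] {R : Type v} [Ring R]

/-- Diagonal sum `A ⊕ B` of two (rectangular) matrices. -/
def diagSum {m n m' n' : ℕ} (A : Matrix (Fin m) (Fin n) R)
    (B : Matrix (Fin m') (Fin n') R) : Matrix (Fin (m + m')) (Fin (n + n')) R :=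
  Matrix.reindex finSumFinEquiv finSumFinEquiv (Matrix.fromBlocks A 0 0 B)

/-- Block lower triangular matrix `[[A, 0], [C, B]]`. -/
def lowerBlockSum {n m : ℕ} (A : Matrix (Fin n) (Fin n) R) (B : Matrix (Fin m) (Fin m) R)
    (C : Matrix (Fin m) (Fin n) R) : Matrix (Fin (n + m)) (Fin (n + m)) R :=
  Matrix.reindex finSumFinEquiv finSumFinEquiv (Matrix.fromBlocks A 0 C B)

/-- Block upper triangular matrix `[[A, C], [0, B]]` with rectangular blocks. -/
def upperBlockSum {m n m' n' : ℕ} (A : Matrix (Fin m) (Fin n) R)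
    (B : Matrix (Fin m') (Fin n') R) (C : Matrix (Fin m) (Fin n') R) :
    Matrix (Fin (m + m')) (Fin (n + n')) R :=
  Matrix.reindex finSumFinEquiv finSumFinEquiv (Matrix.fromBlocks A C 0 B)

/-- `C` is the determinantal sum of `A` and `B` with respect to some column or row:
`A` and `B` agree away from that column (row) and the distinguished column (row) of `C`
is the sum of the corresponding columns (rows) of `A` and `B`. -/
def IsDetSum {n : ℕ} (A B C : Matrix (Fin n) (Fin n) R) : Prop :=
  (∃ c : Fin n, (∀ i j, j ≠ c → A i j = B i j) ∧
      ∀ i j, C i j = if j = c then A i j + B i j else A i j) ∨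
  (∃ r : Fin n, (∀ i j, i ≠ r → A i j = B i j) ∧
      ∀ i j, C i j = if i = r then A i j + B i j else A i j)

/-- `C` is the determinantal sum of the homogeneous matrices `A` and `B`
(which have a common distribution). -/
def GrDetSum (𝒜 : Γ → AddSubgroup R) {n : ℕ} (A B C : Matrix (Fin n) (Fin n) R) : Prop :=
  (∃ α β : Fin n → Γ, IsHomog 𝒜 A α β ∧ IsHomog 𝒜 B α β) ∧ IsDetSum A B C

/-- A square homogeneous matrix `A` is gr-full if whenever `A = P * Q` with `P`
homogeneous of distribution `(α, lam)` and `Q` homogeneous of distribution `(lam, β)`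
where `lam` has length `r`, then `r ≥ n`. -/
def IsGrFull (𝒜 : Γ → AddSubgroup R) {n : ℕ} (A : Matrix (Fin n) (Fin n) R) : Prop :=
  ∀ (r : ℕ) (P : Matrix (Fin n) (Fin r) R) (Q : Matrix (Fin r) (Fin n) R)
    (α : Fin n → Γ) (lam : Fin r → Γ) (β : Fin n → Γ),
    IsHomog 𝒜 P α lam → IsHomog 𝒜 Q lam β → A = P * Q → n ≤ r

/-- gr-prime matrix ideal: a set of square homogeneous matrices satisfying (PM1)–(PM6). -/
structure IsGrPrimeMatrixIdeal (𝒜 : Γ → AddSubgroup R) (P : Set (SqMat R)) : Prop where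
  subset_homog : ∀ p ∈ P, IsHomogSq 𝒜 p.2
  pm1 : ∀ {n : ℕ} (A : Matrix (Fin n) (Fin n) R),
    IsHomogSq 𝒜 A → ¬ IsGrFull 𝒜 A → (⟨n, A⟩ : SqMat R) ∈ P
  pm2 : ∀ {n : ℕ} (A B C : Matrix (Fin n) (Fin n) R),
    (⟨n, A⟩ : SqMat R) ∈ P → (⟨n, B⟩ : SqMat R) ∈ P → GrDetSum 𝒜 A B C →
    (⟨n, C⟩ : SqMat R) ∈ P
  pm3 : ∀ {m n : ℕ} (A : Matrix (Fin m) (Fin m) R) (B : Matrix (Fin n) (Fin n) R),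
    (⟨m, A⟩ : SqMat R) ∈ P → IsHomogSq 𝒜 B → (⟨m + n, diagSum A B⟩ : SqMat R) ∈ P
  pm4 : ∀ {m n : ℕ} (A : Matrix (Fin m) (Fin m) R) (B : Matrix (Fin n) (Fin n) R),
    IsHomogSq 𝒜 A → IsHomogSq 𝒜 B → (⟨m + n, diagSum A B⟩ : SqMat R) ∈ P →
    (⟨m, A⟩ : SqMat R) ∈ P ∨ (⟨n, B⟩ : SqMat R) ∈ P
  pm5 : (⟨1, (1 : Matrix (Fin 1) (Fin 1) R)⟩ : SqMat R) ∉ P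
  pm6 : ∀ {n : ℕ} (A : Matrix (Fin n) (Fin n) R) (e f : Equiv.Perm (Fin n)),
    (⟨n, A⟩ : SqMat R) ∈ P → (⟨n, A.submatrix ⇑e ⇑f⟩ : SqMat R) ∈ P

/-- gr-matrix ideal: a set of square homogeneous matrices satisfying (I1)–(I5). -/
structure IsGrMatrixIdeal (𝒜 : Γ → AddSubgroup R) (I : Set (SqMat R)) : Prop where
  subset_homog : ∀ p ∈ I, IsHomogSq 𝒜 p.2
  i1 : ∀ {n : ℕ} (A : Matrix (Fin n) (Fin n) R),
    IsHomogSq 𝒜 A → ¬ IsGrFull 𝒜 A → (⟨n, A⟩ : SqMat R) ∈ I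
  i2 : ∀ {n : ℕ} (A B C : Matrix (Fin n) (Fin n) R),
    (⟨n, A⟩ : SqMat R) ∈ I → (⟨n, B⟩ : SqMat R) ∈ I → GrDetSum 𝒜 A B C →
    (⟨n, C⟩ : SqMat R) ∈ I
  i3 : ∀ {m n : ℕ} (A : Matrix (Fin m) (Fin m) R) (B : Matrix (Fin n) (Fin n) R),
    (⟨m, A⟩ : SqMat R) ∈ I → IsHomogSq 𝒜 B → (⟨m + n, diagSum A B⟩ : SqMat R) ∈ I
  i4 : ∀ {n : ℕ} (A : Matrix (Fin n) (Fin n) R) (e f : Equiv.Perm (Fin n)),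
    (⟨n, A⟩ : SqMat R) ∈ I → (⟨n, A.submatrix ⇑e ⇑f⟩ : SqMat R) ∈ I
  i5 : ∀ {n : ℕ} (A : Matrix (Fin n) (Fin n) R),
    (⟨n + 1, diagSum A (1 : Matrix (Fin 1) (Fin 1) R)⟩ : SqMat R) ∈ I →
    (⟨n, A⟩ : SqMat R) ∈ I

/-- The diagonal sum of `r` copies of `A`. -/
def diagIter {n : ℕ} (A : Matrix (Fin n) (Fin n) R) :
    (r : ℕ) → Matrix (Fin (n * r)) (Fin (n * r)) R
  | 0 => 0
  | r + 1 => diagSum (diagIter A r) A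

/-- Iterated determinantal sums (with arbitrary bracketing) of elements of `W`. -/
inductive IsDetSumOf (𝒜 : Γ → AddSubgroup R) (W : Set (SqMat R)) : SqMat R → Prop
  | base (p : SqMat R) (hp : p ∈ W) : IsDetSumOf 𝒜 W p
  | step {n : ℕ} (A B C : Matrix (Fin n) (Fin n) R)
      (hA : IsDetSumOf 𝒜 W ⟨n, A⟩) (hB : IsDetSumOf 𝒜 W ⟨n, B⟩)
      (h : GrDetSum 𝒜 A B C) : IsDetSumOf 𝒜 W ⟨n, C⟩

/-- The homogeneous rational closure of degree `γ`: entries `(j,i)` of inverses of matrices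
`A^f` with `A ∈ Sig` homogeneous of distribution `(α, β)` and `β j * (α i)⁻¹ = γ`. -/
def RatCl (𝒜 : Γ → AddSubgroup R) {S : Type w} [Ring S] (Sig : Set (SqMat R)) (f : R →+* S)
    (γ : Γ) : Set S :=
  {x | ∃ (n : ℕ) (A : Matrix (Fin n) (Fin n) R) (α β : Fin n → Γ) (i j : Fin n)
        (B : Matrix (Fin n) (Fin n) S),
      (⟨n, A⟩ : SqMat R) ∈ Sig ∧ IsHomog 𝒜 A α β ∧ β j * (α i)⁻¹ = γ ∧
      (A.map ⇑f) * B = 1 ∧ B * (A.map ⇑f) = 1 ∧ B j i = x}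

/-- gr-lower semimultiplicative set of square homogeneous matrices. -/
def IsGrLowerSemimult (𝒜 : Γ → AddSubgroup R) (Sig : Set (SqMat R)) : Prop :=
  ((⟨1, (1 : Matrix (Fin 1) (Fin 1) R)⟩ : SqMat R) ∈ Sig) ∧
  ∀ {n m : ℕ} (A : Matrix (Fin n) (Fin n) R) (B : Matrix (Fin m) (Fin m) R)
    (α β : Fin n → Γ) (α' β' : Fin m → Γ) (C : Matrix (Fin m) (Fin n) R),
    (⟨n, A⟩ : SqMat R) ∈ Sig → (⟨m, B⟩ : SqMat R) ∈ Sig →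
    IsHomog 𝒜 A α β → IsHomog 𝒜 B α' β' → IsHomog 𝒜 C α' β →
    (⟨n + m, lowerBlockSum A B C⟩ : SqMat R) ∈ Sig

end GradedDefs

/-- A homomorphism of `Γ`-graded rings from `(R, 𝒜)` to a `Γ`-graded division ring. -/
structure GrDivRingHom (Γ : Type u) [Group Γ] [DecidableEq Γ] (R : Type v) [Ring R]
    (𝒜 : Γ → AddSubgroup R) where
  K : Type (max u v)
  [ringK : Ring K]
  [nontrivialK : Nontrivial K]
  grading : Γ → AddSubgroup K
  internal : DirectSum.IsInternal grading
  one_mem : (1 : K) ∈ grading 1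
  mul_mem : ∀ {γ δ : Γ} {x y : K}, x ∈ grading γ → y ∈ grading δ → x * y ∈ grading (γ * δ)
  isUnit_of_ne : ∀ {γ : Γ} {x : K}, x ∈ grading γ → x ≠ 0 → IsUnit x
  φ : R →+* K
  map_mem : ∀ {γ : Γ} {r : R}, r ∈ 𝒜 γ → φ r ∈ grading γ

attribute [instance] GrDivRingHom.ringK GrDivRingHom.nontrivialK

set_option linter.unusedSimpArgs false
set_option linter.unusedSectionVars false

namespace GrW

section Generic

variable {Γ : Type u} [Group Γ] {R : Type v} [Ring R]

/-- Homogeneous matrices over arbitrary index types. -/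
def Hg (𝒜 : Γ → AddSubgroup R) {ι κ : Type*} (A : Matrix ι κ R) (α : ι → Γ) (β : κ → Γ) : Prop :=
  ∀ i j, A i j ∈ 𝒜 (α i * (β j)⁻¹)

/-- Membership in a set of square matrices, for arbitrary finite index types. -/
def Mem (W : Set (SqMat R)) {ι κ : Type*} (A : Matrix ι κ R) : Prop :=
  ∃ (n : ℕ) (e : Fin n ≃ ι) (f : Fin n ≃ κ), (⟨n, A.submatrix e f⟩ : SqMat R) ∈ W

/-- The graded ring laws we use, without the direct sum decomposition. -/
structure GrAx (𝒜 : Γ → AddSubgroup R) : Prop where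
  one : (1 : R) ∈ 𝒜 1
  mul : ∀ {γ δ : Γ} {x y : R}, x ∈ 𝒜 γ → y ∈ 𝒜 δ → x * y ∈ 𝒜 (γ * δ)

structure Adm (𝒜 : Γ → AddSubgroup R) (W : Set (SqMat R)) : Prop where
  hom : ∀ p ∈ W, IsHomogSq 𝒜 p.2
  nf : ∀ {n : ℕ} (A : Matrix (Fin n) (Fin n) R),
    IsHomogSq 𝒜 A → ¬ IsGrFull 𝒜 A → (⟨n, A⟩ : SqMat R) ∈ W
  sum : ∀ {m n : ℕ} (A : Matrix (Fin m) (Fin m) R) (B : Matrix (Fin n) (Fin n) R),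
    (⟨m, A⟩ : SqMat R) ∈ W → IsHomogSq 𝒜 B → (⟨m + n, diagSum A B⟩ : SqMat R) ∈ W
  perm : ∀ {n : ℕ} (A : Matrix (Fin n) (Fin n) R) (e f : Equiv.Perm (Fin n)),
    (⟨n, A⟩ : SqMat R) ∈ W → (⟨n, A.submatrix ⇑e ⇑f⟩ : SqMat R) ∈ W

def DC (𝒜 : Γ → AddSubgroup R) (W : Set (SqMat R)) : Prop :=
  ∀ {n : ℕ} (A B C : Matrix (Fin n) (Fin n) R),
    (⟨n, A⟩ : SqMat R) ∈ W → (⟨n, B⟩ : SqMat R) ∈ W → GrDetSum 𝒜 A B C →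
    (⟨n, C⟩ : SqMat R) ∈ W

def ColSum {ι κ : Type*} (A B C : Matrix ι κ R) (c : κ) : Prop :=
  (∀ i j, j ≠ c → A i j = B i j ∧ C i j = A i j) ∧ ∀ i, C i c = A i c + B i c

def RowSum {ι κ : Type*} (A B C : Matrix ι κ R) (r : ι) : Prop :=
  (∀ i j, i ≠ r → A i j = B i j ∧ C i j = A i j) ∧ ∀ j, C r j = A r j + B r j

variable {𝒜 : Γ → AddSubgroup R} {W : Set (SqMat R)}

lemma isDetSum_iff {n : ℕ} (A B C : Matrix (Fin n) (Fin n) R) :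
    IsDetSum A B C ↔ (∃ c, ColSum A B C c) ∨ (∃ r, RowSum A B C r) := by
  unfold IsDetSum ColSum RowSum
  constructor
  · rintro (⟨c, h1, h2⟩ | ⟨r, h1, h2⟩)
    · exact Or.inl ⟨c, fun i j hj => ⟨h1 i j hj, by simp [h2, hj]⟩, fun i => by simp [h2]⟩
    · exact Or.inr ⟨r, fun i j hj => ⟨h1 i j hj, by simp [h2, hj]⟩, fun i => by simp [h2]⟩
  · rintro (⟨c, h1, h2⟩ | ⟨r, h1, h2⟩)
    · refine Or.inl ⟨c, fun i j hj => (h1 i j hj).1, fun i j => ?_⟩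
      split_ifs with h
      · subst h; exact h2 i
      · exact (h1 i j h).2
    · refine Or.inr ⟨r, fun i j hj => (h1 i j hj).1, fun i j => ?_⟩
      split_ifs with h
      · subst h; exact h2 j
      · exact (h1 i j h).2

lemma ColSum.submatrix {ι κ ι' κ' : Type*} {A B C : Matrix ι κ R} {c : κ} (h : ColSum A B C c)
    (e : ι' → ι) (f : κ' ≃ κ) :
    ColSum (A.submatrix e f) (B.submatrix e f) (C.submatrix e f) (f.symm c) := by
  refine ⟨fun i j hj => h.1 _ _ fun h' => hj (by simp [← h']), fun i => ?_⟩
  simp [h.2]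

lemma RowSum.submatrix {ι κ ι' κ' : Type*} {A B C : Matrix ι κ R} {c : ι} (h : RowSum A B C c)
    (e : ι' ≃ ι) (f : κ' → κ) :
    RowSum (A.submatrix e f) (B.submatrix e f) (C.submatrix e f) (e.symm c) := by
  refine ⟨fun i j hj => h.1 _ _ fun h' => hj (by simp [← h']), fun i => ?_⟩
  simp [h.2]

lemma ColSum.blocks {ι κ ι' κ' : Type*} {A B C : Matrix ι κ R} {c : κ} (h : ColSum A B C c)
    (D : Matrix ι' κ' R) :
    ColSum (fromBlocks A 0 0 D) (fromBlocks B 0 0 D) (fromBlocks C 0 0 D) (Sum.inl c) := by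
  refine ⟨?_, ?_⟩
  · rintro (i | i) (j | j) hj <;> simp
    exact h.1 i j fun h => hj (by rw [h])
  · rintro (i | i) <;> simp [h.2]

lemma RowSum.blocks {ι κ ι' κ' : Type*} {A B C : Matrix ι κ R} {c : ι} (h : RowSum A B C c)
    (D : Matrix ι' κ' R) :
    RowSum (fromBlocks A 0 0 D) (fromBlocks B 0 0 D) (fromBlocks C 0 0 D) (Sum.inl c) := by
  refine ⟨?_, ?_⟩
  · rintro (i | i) (j | j) hj <;> simp
    exact h.1 i j fun h => hj (by rw [h])
  · rintro (i | i) <;> simp [h.2]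

lemma ColSum.blocks' {ι κ ι' κ' : Type*} {A B C : Matrix ι κ R} {c : κ} (h : ColSum A B C c)
    (D : Matrix ι' κ' R) :
    ColSum (fromBlocks D 0 0 A) (fromBlocks D 0 0 B) (fromBlocks D 0 0 C) (Sum.inr c) := by
  refine ⟨?_, ?_⟩
  · rintro (i | i) (j | j) hj <;> simp
    exact h.1 i j fun h => hj (by rw [h])
  · rintro (i | i) <;> simp [h.2]

lemma RowSum.blocks' {ι κ ι' κ' : Type*} {A B C : Matrix ι κ R} {c : ι} (h : RowSum A B C c)
    (D : Matrix ι' κ' R) :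
    RowSum (fromBlocks D 0 0 A) (fromBlocks D 0 0 B) (fromBlocks D 0 0 C) (Sum.inr c) := by
  refine ⟨?_, ?_⟩
  · rintro (i | i) (j | j) hj <;> simp
    exact h.1 i j fun h => hj (by rw [h])
  · rintro (i | i) <;> simp [h.2]

lemma Hg.submatrix {ι κ ι' κ' : Type*} {A : Matrix ι κ R} {α : ι → Γ} {β : κ → Γ}
    (h : Hg 𝒜 A α β) (e : ι' → ι) (f : κ' → κ) : Hg 𝒜 (A.submatrix e f) (α ∘ e) (β ∘ f) :=
  fun i j => h _ _

lemma Hg.blocks {ι κ ι' κ' : Type*} {A : Matrix ι κ R} {B : Matrix ι κ' R} {C : Matrix ι' κ R}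
    {D : Matrix ι' κ' R} {α : ι → Γ} {β : κ → Γ} {α' : ι' → Γ} {β' : κ' → Γ}
    (hA : Hg 𝒜 A α β) (hB : Hg 𝒜 B α β') (hC : Hg 𝒜 C α' β) (hD : Hg 𝒜 D α' β') :
    Hg 𝒜 (fromBlocks A B C D) (Sum.elim α α') (Sum.elim β β') := by
  rintro (i | i) (j | j)
  · exact hA i j
  · exact hB i j
  · exact hC i j
  · exact hD i j

lemma Hg.zero {ι κ : Type*} {α : ι → Γ} {β : κ → Γ} : Hg 𝒜 (0 : Matrix ι κ R) α β :=
  fun _ _ => AddSubgroup.zero_mem _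

lemma Hg.neg {ι κ : Type*} {α : ι → Γ} {β : κ → Γ} {A : Matrix ι κ R} (h : Hg 𝒜 A α β) :
    Hg 𝒜 (-A) α β := fun i j => AddSubgroup.neg_mem _ (h i j)

lemma Hg.add {ι κ : Type*} {α : ι → Γ} {β : κ → Γ} {A B : Matrix ι κ R} (h : Hg 𝒜 A α β)
    (h' : Hg 𝒜 B α β) : Hg 𝒜 (A + B) α β := fun i j => AddSubgroup.add_mem _ (h i j) (h' i j)

lemma Hg.one (hax : GrAx 𝒜) {ι : Type*} [DecidableEq ι] {α : ι → Γ} :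
    Hg 𝒜 (1 : Matrix ι ι R) α α := by
  intro i j
  rw [Matrix.one_apply]
  split_ifs with h
  · subst h; simpa using hax.one
  · exact AddSubgroup.zero_mem _

lemma Hg.mul (hax : GrAx 𝒜) {ι κ τ : Type*} [Fintype τ] {α : ι → Γ} {lam : τ → Γ} {β : κ → Γ}
    {A : Matrix ι τ R} {B : Matrix τ κ R}
    (hA : Hg 𝒜 A α lam) (hB : Hg 𝒜 B lam β) : Hg 𝒜 (A * B) α β := by
  intro i j
  rw [Matrix.mul_apply]
  refine AddSubgroup.sum_mem _ fun k _ => ?_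
  have := hax.mul (hA i k) (hB k j)
  simpa [mul_assoc] using this

/-- Right shift of a distribution. -/
lemma Hg.shift {ι κ : Type*} {A : Matrix ι κ R} {α : ι → Γ} {β : κ → Γ}
    (h : Hg 𝒜 A α β) (γ : Γ) : Hg 𝒜 A (fun i => α i * γ) (fun j => β j * γ) := by
  intro i j
  have := h i j
  simpa [mul_assoc] using this

lemma Mem.reindex {ι κ ι' κ' : Type*} {A : Matrix ι κ R} (h : Mem W A) (e : ι' ≃ ι) (f : κ' ≃ κ) :
    Mem W (A.submatrix e f) := by
  obtain ⟨n, e0, f0, h⟩ := h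
  refine ⟨n, e0.trans e.symm, f0.trans f.symm, ?_⟩
  convert h using 2
  ext i j
  simp

lemma mem_reindex_iff {ι κ ι' κ' : Type*} {A : Matrix ι κ R} (e : ι' ≃ ι) (f : κ' ≃ κ) :
    Mem W (A.submatrix e f) ↔ Mem W A := by
  refine ⟨fun h => ?_, fun h => h.reindex e f⟩
  have := h.reindex e.symm f.symm
  simpa using this

lemma Mem.of_mem {n : ℕ} {A : Matrix (Fin n) (Fin n) R} (h : (⟨n, A⟩ : SqMat R) ∈ W) : Mem W A :=
  ⟨n, Equiv.refl _, Equiv.refl _, h⟩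

lemma Adm.mem_of (hW : Adm 𝒜 W) {n : ℕ} {A : Matrix (Fin n) (Fin n) R} (h : Mem W A) :
    (⟨n, A⟩ : SqMat R) ∈ W := by
  obtain ⟨m, e, f, h⟩ := h
  obtain rfl : m = n := by simpa using Fintype.card_congr e
  have := hW.perm _ e.symm f.symm h
  convert this using 2
  ext i j
  simp

lemma Adm.mem_iff (hW : Adm 𝒜 W) {n : ℕ} {A : Matrix (Fin n) (Fin n) R} :
    Mem W A ↔ (⟨n, A⟩ : SqMat R) ∈ W := ⟨hW.mem_of, Mem.of_mem⟩

lemma Adm.hg (hW : Adm 𝒜 W) {ι κ : Type*} {A : Matrix ι κ R} (h : Mem W A) :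
    ∃ α β, Hg 𝒜 A α β := by
  obtain ⟨n, e, f, h⟩ := h
  obtain ⟨α, β, h⟩ := hW.hom _ h
  refine ⟨α ∘ e.symm, β ∘ f.symm, fun i j => ?_⟩
  simpa using h (e.symm i) (f.symm j)

lemma Mem.equiv {ι κ : Type*} {A : Matrix ι κ R} (h : Mem W A) : Nonempty (ι ≃ κ) := by
  obtain ⟨n, e, f, h⟩ := h
  exact ⟨e.symm.trans f⟩

lemma Adm.blocks (hW : Adm 𝒜 W) {ι κ ι' κ' : Type*} [Finite ι'] {A : Matrix ι κ R} (h : Mem W A)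
    {B : Matrix ι' κ' R} (q : Nonempty (ι' ≃ κ')) {α β} (hB : Hg 𝒜 B α β) :
    Mem W (fromBlocks A 0 0 B) := by
  obtain ⟨n, e, f, h⟩ := h
  obtain ⟨q⟩ := q
  obtain ⟨m, ⟨g⟩⟩ := Finite.exists_equiv_fin ι'
  have := hW.sum _ (B.submatrix g.symm (g.symm.trans q)) h ⟨_, _, hB.submatrix _ _⟩
  refine ⟨n + m, finSumFinEquiv.symm.trans (e.sumCongr g.symm),
    finSumFinEquiv.symm.trans (f.sumCongr (g.symm.trans q)), ?_⟩
  convert this using 2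
  ext i j
  simp only [diagSum, reindex_apply, submatrix_apply, Equiv.trans_apply]
  generalize finSumFinEquiv.symm i = i'
  generalize finSumFinEquiv.symm j = j'
  rcases i' with i' | i' <;> rcases j' with j' | j' <;> simp

lemma Adm.blocks' (hW : Adm 𝒜 W) {ι κ ι' κ' : Type*} [Finite ι'] {A : Matrix ι κ R} (h : Mem W A)
    {B : Matrix ι' κ' R} (q : Nonempty (ι' ≃ κ')) {α β} (hB : Hg 𝒜 B α β) :
    Mem W (fromBlocks B 0 0 A) := by
  have := (hW.blocks h q hB).reindex (Equiv.sumComm _ _) (Equiv.sumComm _ _)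
  convert this using 1
  ext (i | i) (j | j) <;> simp

lemma Adm.nonfull (hW : Adm 𝒜 W) (hax : GrAx 𝒜) {ι κ τ : Type*} [Finite ι] [Fintype τ]
    (q : Nonempty (ι ≃ κ)) {X : Matrix ι τ R} {Y : Matrix τ κ R} {α lam β}
    (hX : Hg 𝒜 X α lam) (hY : Hg 𝒜 Y lam β) (hc : Nat.card τ < Nat.card ι)
    {A : Matrix ι κ R} (hA : A = X * Y) : Mem W A := by
  obtain ⟨q⟩ := q
  have g := (Finite.equivFin ι).symm
  have t := Fintype.equivFin τ
  subst hA
  refine ⟨_, g, g.trans q, hW.nf _ ⟨_, _, (hX.mul hax hY).submatrix _ _⟩ fun hf => ?_⟩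
  have := hf _ (X.submatrix g t.symm) (Y.submatrix t.symm (g.trans q)) _ _ _ (hX.submatrix _ _)
    (hY.submatrix _ _) (by rw [Matrix.submatrix_mul_equiv])
  simp at hc
  omega

lemma Adm.colSum (hW : Adm 𝒜 W) (hD : DC 𝒜 W) {ι κ : Type*} {A B C : Matrix ι κ R}
    {α β} (hA : Hg 𝒜 A α β) (hB : Hg 𝒜 B α β) (mA : Mem W A) (mB : Mem W B)
    {c : κ} (h : ColSum A B C c) : Mem W C := by
  obtain ⟨n, e, f, mA⟩ := mA
  exact ⟨n, e, f, hD _ _ _ mA (hW.mem_of (mB.reindex e f))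
    ⟨⟨_, _, hA.submatrix e f, hB.submatrix e f⟩, (isDetSum_iff _ _ _).2 (Or.inl ⟨_, h.submatrix e f⟩)⟩⟩

lemma Adm.rowSum (hW : Adm 𝒜 W) (hD : DC 𝒜 W) {ι κ : Type*} {A B C : Matrix ι κ R}
    {α β} (hA : Hg 𝒜 A α β) (hB : Hg 𝒜 B α β) (mA : Mem W A) (mB : Mem W B)
    {c : ι} (h : RowSum A B C c) : Mem W C := by
  obtain ⟨n, e, f, mA⟩ := mA
  exact ⟨n, e, f, hD _ _ _ mA (hW.mem_of (mB.reindex e f))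
    ⟨⟨_, _, hA.submatrix e f, hB.submatrix e f⟩, (isDetSum_iff _ _ _).2 (Or.inr ⟨_, h.submatrix e f⟩)⟩⟩

/-- diagonal sum is generic block sum -/
lemma mem_diagSum {m n : ℕ} (A : Matrix (Fin m) (Fin m) R) (B : Matrix (Fin n) (Fin n) R) :
    Mem W (diagSum A B) ↔ Mem W (fromBlocks A 0 0 B) := by
  rw [diagSum, reindex_apply, mem_reindex_iff]

lemma GrDetSum.hg {n : ℕ} {A B C : Matrix (Fin n) (Fin n) R} (h : GrDetSum 𝒜 A B C) :
    IsHomogSq 𝒜 C := by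
  obtain ⟨⟨α, β, hA, hB⟩, h⟩ := h
  refine ⟨α, β, fun i j => ?_⟩
  rcases h with ⟨c, _, h⟩ | ⟨c, _, h⟩ <;> rw [h] <;> split_ifs
  · exact AddSubgroup.add_mem _ (hA i j) (hB i j)
  · exact hA i j
  · exact AddSubgroup.add_mem _ (hA i j) (hB i j)
  · exact hA i j

end Generic

end GrW

namespace GrW

section Zorn

variable {Γ : Type u} [Group Γ] {R : Type v} [Ring R]
variable {𝒜 : Γ → AddSubgroup R} {W : Set (SqMat R)}

def Dset (𝒜 : Γ → AddSubgroup R) (W : Set (SqMat R)) : Set (SqMat R) := {p | IsDetSumOf 𝒜 W p}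

lemma hq_diagSum {m n : ℕ} {A : Matrix (Fin m) (Fin m) R} {B : Matrix (Fin n) (Fin n) R}
    (hA : IsHomogSq 𝒜 A) (hB : IsHomogSq 𝒜 B) : IsHomogSq 𝒜 (diagSum A B) := by
  obtain ⟨α, β, hA⟩ := hA
  obtain ⟨α', β', hB⟩ := hB
  exact ⟨_, _, Hg.submatrix (Hg.blocks (𝒜 := 𝒜) hA Hg.zero Hg.zero hB) _ _⟩

lemma dset_dc : DC 𝒜 (Dset 𝒜 W) := fun A B C hA hB h => IsDetSumOf.step A B C hA hB h

lemma grDetSum_diag {m n : ℕ} {A B C : Matrix (Fin m) (Fin m) R} (h : GrDetSum 𝒜 A B C)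
    {D : Matrix (Fin n) (Fin n) R} (hD : IsHomogSq 𝒜 D) :
    GrDetSum 𝒜 (diagSum A D) (diagSum B D) (diagSum C D) := by
  obtain ⟨⟨α, β, hA, hB⟩, h⟩ := h
  obtain ⟨α', β', hD⟩ := hD
  refine ⟨⟨_, _, Hg.submatrix (Hg.blocks (𝒜 := 𝒜) hA Hg.zero Hg.zero hD) _ _,
    Hg.submatrix (Hg.blocks (𝒜 := 𝒜) hB Hg.zero Hg.zero hD) _ _⟩, ?_⟩
  rw [isDetSum_iff] at h ⊢
  rcases h with ⟨c, h⟩ | ⟨c, h⟩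
  · exact Or.inl ⟨_, (h.blocks D).submatrix _ finSumFinEquiv.symm⟩
  · exact Or.inr ⟨_, (h.blocks D).submatrix finSumFinEquiv.symm _⟩

lemma grDetSum_diag' {m n : ℕ} {A B C : Matrix (Fin m) (Fin m) R} (h : GrDetSum 𝒜 A B C)
    {D : Matrix (Fin n) (Fin n) R} (hD : IsHomogSq 𝒜 D) :
    GrDetSum 𝒜 (diagSum D A) (diagSum D B) (diagSum D C) := by
  obtain ⟨⟨α, β, hA, hB⟩, h⟩ := h
  obtain ⟨α', β', hD⟩ := hD
  refine ⟨⟨_, _, Hg.submatrix (Hg.blocks (𝒜 := 𝒜) hD Hg.zero Hg.zero hA) _ _,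
    Hg.submatrix (Hg.blocks (𝒜 := 𝒜) hD Hg.zero Hg.zero hB) _ _⟩, ?_⟩
  rw [isDetSum_iff] at h ⊢
  rcases h with ⟨c, h⟩ | ⟨c, h⟩
  · exact Or.inl ⟨_, (h.blocks' D).submatrix _ finSumFinEquiv.symm⟩
  · exact Or.inr ⟨_, (h.blocks' D).submatrix finSumFinEquiv.symm _⟩

lemma grDetSum_perm {m : ℕ} {A B C : Matrix (Fin m) (Fin m) R} (h : GrDetSum 𝒜 A B C)
    (e f : Equiv.Perm (Fin m)) :
    GrDetSum 𝒜 (A.submatrix e f) (B.submatrix e f) (C.submatrix e f) := by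
  obtain ⟨⟨α, β, hA, hB⟩, h⟩ := h
  refine ⟨⟨_, _, Hg.submatrix hA _ _, Hg.submatrix hB _ _⟩, ?_⟩
  rw [isDetSum_iff] at h ⊢
  rcases h with ⟨c, h⟩ | ⟨c, h⟩
  · exact Or.inl ⟨_, h.submatrix _ _⟩
  · exact Or.inr ⟨_, h.submatrix _ _⟩

lemma Adm.dset (hW : Adm 𝒜 W) : Adm 𝒜 (Dset 𝒜 W) where
  hom := by
    intro p hp
    induction hp with
    | base p hp => exact hW.hom p hp
    | step A B C hA hB h _ _ => exact GrW.GrDetSum.hg h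
  nf A hA hf := IsDetSumOf.base _ (hW.nf A hA hf)
  sum {m n} A B hA hB := by
    suffices H : ∀ p : SqMat R, IsDetSumOf 𝒜 W p →
        IsDetSumOf 𝒜 W ⟨p.1 + n, diagSum p.2 B⟩ from H _ hA
    intro p hp
    induction hp with
    | base p hp => exact IsDetSumOf.base _ (hW.sum _ _ hp hB)
    | step A' B' C' _ _ h h1 h2 => exact IsDetSumOf.step _ _ _ h1 h2 (grDetSum_diag h hB)
  perm {n} A e f hA := by
    suffices H : ∀ p : SqMat R, IsDetSumOf 𝒜 W p → ∀ e f : Equiv.Perm (Fin p.1),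
        IsDetSumOf 𝒜 W ⟨p.1, p.2.submatrix e f⟩ from H _ hA e f
    intro p hp
    induction hp with
    | base p hp => exact fun e f => IsDetSumOf.base _ (hW.perm _ e f hp)
    | step A' B' C' _ _ h h1 h2 =>
      exact fun e f => IsDetSumOf.step _ _ _ (h1 e f) (h2 e f) (grDetSum_perm h e f)

/-- all `E (A ⊕ C) F` -/
def GenP (𝒜 : Γ → AddSubgroup R) {n : ℕ} (A : Matrix (Fin n) (Fin n) R) : Set (SqMat R) :=
  {p : SqMat R | ∃ (k : ℕ) (C : Matrix (Fin k) (Fin k) R) (e f : Equiv.Perm (Fin (n + k))),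
    IsHomogSq 𝒜 C ∧ p = ⟨n + k, (diagSum A C).submatrix ⇑e ⇑f⟩}

lemma genP_of {n N : ℕ} {A : Matrix (Fin n) (Fin n) R} {ι κ : Type*} [Finite ι]
    {C : Matrix ι κ R} {α β} (hC : Hg 𝒜 C α β) (e : Fin N ≃ Fin n ⊕ ι) (f : Fin N ≃ Fin n ⊕ κ)
    {M : Matrix (Fin N) (Fin N) R} (hM : M = (fromBlocks A 0 0 C).submatrix e f) :
    (⟨N, M⟩ : SqMat R) ∈ GenP 𝒜 A := by
  obtain ⟨k, ⟨g⟩⟩ := Finite.exists_equiv_fin ι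
  have : Finite (Fin n ⊕ κ) := Finite.of_equiv _ f
  have : Finite κ := Finite.of_injective (Sum.inr : κ → Fin n ⊕ κ) Sum.inr_injective
  obtain ⟨k', ⟨g'⟩⟩ := Finite.exists_equiv_fin κ
  obtain rfl : N = n + k := by
    simpa using Fintype.card_congr (e.trans ((Equiv.refl _).sumCongr g))
  obtain rfl : k' = k := by
    have := Fintype.card_congr (f.trans ((Equiv.refl _).sumCongr g'))
    simp at this; omega
  refine ⟨k', C.submatrix g.symm g'.symm,
    (e.trans ((Equiv.refl _).sumCongr g)).trans finSumFinEquiv,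
    (f.trans ((Equiv.refl _).sumCongr g')).trans finSumFinEquiv, ⟨_, _, hC.submatrix _ _⟩, ?_⟩
  subst hM
  congr 1
  ext i j
  simp only [diagSum, reindex_apply, submatrix_apply, Equiv.trans_apply, Equiv.symm_apply_apply]
  generalize e i = i'
  generalize f j = j'
  rcases i' with i' | i' <;> rcases j' with j' | j' <;> simp

lemma Adm.gen (hW : Adm 𝒜 W) {n : ℕ} {A : Matrix (Fin n) (Fin n) R} (hA : IsHomogSq 𝒜 A) :
    Adm 𝒜 (W ∪ GenP 𝒜 A) where
  hom := by
    rintro p (hp | ⟨k, C, e, f, hC, rfl⟩)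
    · exact hW.hom p hp
    · obtain ⟨α, β, h⟩ := hq_diagSum hA hC
      exact ⟨_, _, Hg.submatrix h _ _⟩
  nf A hA hf := Or.inl (hW.nf A hA hf)
  sum := by
    rintro m l M B (hp | ⟨k, C, e, f, hC, hM⟩) hB
    · exact Or.inl (hW.sum _ _ hp hB)
    · right
      obtain rfl : m = n + k := congrArg Sigma.fst hM
      obtain rfl : M = (diagSum A C).submatrix e f := by simpa using hM
      obtain ⟨α, β, hC⟩ := hC
      obtain ⟨α', β', hB⟩ := hB
      refine genP_of (Hg.blocks (𝒜 := 𝒜) hC Hg.zero Hg.zero hB)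
        (finSumFinEquiv.symm.trans (((e.trans finSumFinEquiv.symm).sumCongr (Equiv.refl _)).trans
          (Equiv.sumAssoc _ _ _)))
        (finSumFinEquiv.symm.trans (((f.trans finSumFinEquiv.symm).sumCongr (Equiv.refl _)).trans
          (Equiv.sumAssoc _ _ _))) ?_
      ext i j
      simp only [diagSum, reindex_apply, submatrix_apply, Equiv.trans_apply]
      generalize finSumFinEquiv.symm i = i'
      generalize finSumFinEquiv.symm j = j'
      rcases i' with i' | i' <;> rcases j' with j' | j' <;> simp
      · generalize finSumFinEquiv.symm (e i') = i''
        generalize finSumFinEquiv.symm (f j') = j''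
        rcases i'' with i' | i' <;> rcases j'' with j' | j' <;> simp
      · generalize finSumFinEquiv.symm (e i') = i''
        rcases i'' with i' | i' <;> simp
      · generalize finSumFinEquiv.symm (f j') = i''
        rcases i'' with i' | i' <;> simp
  perm := by
    rintro m M e' f' (hp | ⟨k, C, e, f, hC, hM⟩)
    · exact Or.inl (hW.perm _ _ _ hp)
    · right
      obtain rfl : m = n + k := congrArg Sigma.fst hM
      obtain rfl : M = (diagSum A C).submatrix e f := by simpa using hM
      exact ⟨k, C, e'.trans e, f'.trans f, hC, by simp [Matrix.submatrix_submatrix]⟩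

lemma self_mem_genP {n : ℕ} {A : Matrix (Fin n) (Fin n) R} :
    (⟨n, A⟩ : SqMat R) ∈ GenP 𝒜 A := by
  refine genP_of (C := (0 : Matrix Empty Empty R)) (α := fun _ => 1) (β := fun _ => 1) Hg.zero
    (Equiv.sumEmpty _ _).symm (Equiv.sumEmpty _ _).symm ?_
  ext i j
  simp

def NF (𝒜 : Γ → AddSubgroup R) : Set (SqMat R) :=
  {p : SqMat R | IsHomogSq 𝒜 p.2 ∧ ¬ IsGrFull 𝒜 p.2}

lemma adm_nf (hax : GrAx 𝒜) : Adm 𝒜 (NF 𝒜) where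
  hom p hp := hp.1
  nf A hA hf := ⟨hA, hf⟩
  sum := by
    rintro m n A B ⟨hA, hf⟩ hB
    refine ⟨hq_diagSum hA hB, fun hf' => hf fun r P Q α lam β hP hQ hPQ => ?_⟩
    obtain ⟨α', β', hB⟩ := hB
    have := hf' (r + n) (diagSum P B) (diagSum Q 1) (Sum.elim α α' ∘ finSumFinEquiv.symm)
      (Sum.elim lam β' ∘ finSumFinEquiv.symm) (Sum.elim β β' ∘ finSumFinEquiv.symm)
      (Hg.submatrix (Hg.blocks (𝒜 := 𝒜) hP Hg.zero Hg.zero hB) _ _)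
      (Hg.submatrix (Hg.blocks (𝒜 := 𝒜) hQ Hg.zero Hg.zero (Hg.one hax)) _ _)
      (by
        simp only at hPQ
        simp only [diagSum, reindex_apply]
        rw [Matrix.submatrix_mul_equiv, Matrix.fromBlocks_multiply]
        simp [hPQ])
    simp only at this ⊢
    omega
  perm := by
    rintro n A e f ⟨hA, hf⟩
    refine ⟨?_, fun hf' => hf fun r P Q α lam β hP hQ hPQ => ?_⟩
    · obtain ⟨α, β, h⟩ := hA
      exact ⟨_, _, Hg.submatrix h _ _⟩
    · refine hf' r (P.submatrix e id) (Q.submatrix id f) _ _ _ (Hg.submatrix hP _ _)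
        (Hg.submatrix hQ _ _) ?_
      simp only at hPQ ⊢
      rw [hPQ]
      rfl

/-- matrices which are, up to permutation, sums of copies of `P` and `1`. -/
def PT {n : ℕ} (P : Matrix (Fin n) (Fin n) R) : Set (SqMat R) :=
  {p | ∃ (r m : Type) (_ : Fintype r) (_ : Fintype m) (_ : DecidableEq r) (_ : DecidableEq m)
    (e f : Fin p.1 ≃ (Fin n × r) ⊕ m),
    p.2 = (fromBlocks (blockDiagonal (fun _ : r => P)) 0 0 (1 : Matrix m m R)).submatrix e f}

lemma PT_iff {n : ℕ} {P : Matrix (Fin n) (Fin n) R} {a : ℕ} {A : Matrix (Fin a) (Fin a) R} :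
    (⟨a, A⟩ : SqMat R) ∈ PT P ↔ ∃ (r m : Type) (_ : Fintype r) (_ : Fintype m) (_ : DecidableEq r)
    (_ : DecidableEq m) (e f : Fin a ≃ (Fin n × r) ⊕ m),
    A = (fromBlocks (blockDiagonal (fun _ : r => P)) 0 0 (1 : Matrix m m R)).submatrix e f := Iff.rfl

lemma PT.sum {n : ℕ} {P : Matrix (Fin n) (Fin n) R} {a b : ℕ} {A : Matrix (Fin a) (Fin a) R}
    {B : Matrix (Fin b) (Fin b) R}
    (hA : (⟨a, A⟩ : SqMat R) ∈ PT P) (hB : (⟨b, B⟩ : SqMat R) ∈ PT P) :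
    (⟨a + b, diagSum A B⟩ : SqMat R) ∈ PT P := by
  obtain ⟨r, m, _, _, _, _, e, f, rfl⟩ := PT_iff.1 hA
  obtain ⟨r', m', _, _, _, _, e', f', rfl⟩ := PT_iff.1 hB
  let t : ((Fin n × r) ⊕ m) ⊕ ((Fin n × r') ⊕ m') ≃ (Fin n × (r ⊕ r')) ⊕ (m ⊕ m') :=
    (Equiv.sumSumSumComm _ _ _ _).trans
      ((Equiv.prodSumDistrib _ _ _).symm.sumCongr (Equiv.refl _))
  refine ⟨r ⊕ r', m ⊕ m', inferInstance, inferInstance, inferInstance, inferInstance,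
    finSumFinEquiv.symm.trans ((e.sumCongr e').trans t),
    finSumFinEquiv.symm.trans ((f.sumCongr f').trans t), ?_⟩
  ext i j
  simp only [diagSum, reindex_apply, submatrix_apply, Equiv.trans_apply]
  generalize finSumFinEquiv.symm i = i'
  generalize finSumFinEquiv.symm j = j'
  rcases i' with i' | i' <;> rcases j' with j' | j' <;>
    simp only [Equiv.sumCongr_apply, Sum.map_inl, Sum.map_inr, fromBlocks_apply₁₁,
      fromBlocks_apply₁₂, fromBlocks_apply₂₁, fromBlocks_apply₂₂, submatrix_apply]
  · generalize e i' = i''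
    generalize f j' = j''
    rcases i'' with i' | i' <;> rcases j'' with j' | j' <;>
      simp [t, blockDiagonal_apply, Matrix.one_apply]
  · generalize e i' = i''
    generalize f' j' = j''
    rcases i'' with i' | i' <;> rcases j'' with j' | j' <;>
      simp [t, blockDiagonal_apply, Matrix.one_apply]
  · generalize e' i' = i''
    generalize f j' = j''
    rcases i'' with i' | i' <;> rcases j'' with j' | j' <;>
      simp [t, blockDiagonal_apply, Matrix.one_apply]
  · generalize e' i' = i''
    generalize f' j' = j''
    rcases i'' with i' | i' <;> rcases j'' with j' | j' <;>
      simp [t, blockDiagonal_apply, Matrix.one_apply]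

lemma PT.self {n : ℕ} {P : Matrix (Fin n) (Fin n) R} : (⟨n, P⟩ : SqMat R) ∈ PT P := by
  let t : Fin n ≃ (Fin n × Unit) ⊕ Empty := (Equiv.prodPUnit _).symm.trans (Equiv.sumEmpty _ _).symm
  refine ⟨Unit, Empty, inferInstance, inferInstance, inferInstance, inferInstance, t, t, ?_⟩
  ext i j
  simp [t, blockDiagonal_apply]

lemma PT.one {n : ℕ} {P : Matrix (Fin n) (Fin n) R} :
    (⟨1, (1 : Matrix (Fin 1) (Fin 1) R)⟩ : SqMat R) ∈ PT P := by
  let t : Fin 1 ≃ (Fin n × Empty) ⊕ Fin 1 := (Equiv.emptySum _ _).symm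
  refine ⟨Empty, Fin 1, inferInstance, inferInstance, inferInstance, inferInstance, t, t, ?_⟩
  ext i j
  simp [t, Matrix.one_apply]

lemma diagIter_eq {n : ℕ} (P : Matrix (Fin n) (Fin n) R) (r : ℕ) :
    ∃ e : Fin n × Fin r ≃ Fin (n * r),
      blockDiagonal (fun _ : Fin r => P) = (diagIter P r).submatrix e e := by
  induction r with
  | zero =>
    have : IsEmpty (Fin (n * 0)) := by rw [Nat.mul_zero]; infer_instance
    refine ⟨(Equiv.equivOfIsEmpty _ _), ?_⟩
    ext ⟨_, i⟩
    exact i.elim0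
  | succ r ih =>
    obtain ⟨e, he⟩ := ih
    let t : Fin n × Fin (r + 1) ≃ Fin (n * r + n) :=
      (((Equiv.refl (Fin n)).prodCongr finSumFinEquiv.symm).trans (Equiv.prodSumDistrib _ _ _)).trans
        ((e.sumCongr (Equiv.prodUnique (Fin n) (Fin 1))).trans finSumFinEquiv)
    refine ⟨t, ?_⟩
    ext ⟨i, k⟩ ⟨j, l⟩
    simp only [diagIter, diagSum, reindex_apply, submatrix_apply, t, Equiv.trans_apply,
      Equiv.prodCongr_apply, Prod.map, Equiv.symm_apply_apply]
    obtain ⟨k, rfl⟩ := finSumFinEquiv.surjective k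
    obtain ⟨l, rfl⟩ := finSumFinEquiv.surjective l
    simp only [Equiv.symm_apply_apply]
    have he' : ∀ a b, blockDiagonal (fun _ : Fin r => P) a b = diagIter P r (e a) (e b) :=
      fun a b => by rw [he]; rfl
    rcases k with k | k <;> rcases l with l | l
    · have := he' (i, k) (j, l)
      simp only [blockDiagonal_apply] at this
      simp [blockDiagonal_apply, ← this]
    · simp [blockDiagonal_apply, Fin.ext_iff]; intro h; omega
    · simp [blockDiagonal_apply, Fin.ext_iff]; intro h; omega
    · simp [blockDiagonal_apply, Fin.ext_iff]

/-- Membership of a `PT` matrix forces membership of a standard one. -/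
lemma PT.std (hW : Adm 𝒜 W) {n : ℕ} {P : Matrix (Fin n) (Fin n) R} {p : SqMat R}
    (hp : p ∈ PT P) (hm : p ∈ W) : ∃ r m : ℕ,
      (⟨n * r + m, diagSum (diagIter P r) (1 : Matrix (Fin m) (Fin m) R)⟩ : SqMat R) ∈ W := by
  obtain ⟨N, M⟩ := p
  obtain ⟨r, m, _, _, _, _, e, f, rfl⟩ := PT_iff.1 hp
  have h1 := (mem_reindex_iff _ _).1 (Mem.of_mem hm)
  let er := Fintype.equivFin r
  let em := Fintype.equivFin m
  obtain ⟨e, he⟩ := diagIter_eq P (Fintype.card r)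
  refine ⟨Fintype.card r, Fintype.card m, hW.mem_of ?_⟩
  rw [mem_diagSum]
  let t : Fin (n * Fintype.card r) ⊕ Fin (Fintype.card m) ≃ (Fin n × r) ⊕ m :=
    (e.symm.trans ((Equiv.refl _).prodCongr er.symm)).sumCongr em.symm
  convert h1.reindex t t using 1
  have he' : ∀ a b, blockDiagonal (fun _ : Fin (Fintype.card r) => P) (e.symm a) (e.symm b) =
      diagIter P _ a b := fun a b => by rw [he]; simp
  ext (i | i) (j | j)
  · simp [t, ← he', blockDiagonal_apply]
  · simp [t]
  · simp [t]
  · simp [t, Matrix.one_apply]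

/-- properties of the prime matrix ideal we need -/
structure Prm (𝒜 : Γ → AddSubgroup R) (I : Set (SqMat R)) : Prop where
  adm : Adm 𝒜 I
  dc : DC 𝒜 I
  prime : ∀ {m n : ℕ} (A : Matrix (Fin m) (Fin m) R) (B : Matrix (Fin n) (Fin n) R),
    IsHomogSq 𝒜 A → IsHomogSq 𝒜 B → (⟨m + n, diagSum A B⟩ : SqMat R) ∈ I →
    (⟨m, A⟩ : SqMat R) ∈ I ∨ (⟨n, B⟩ : SqMat R) ∈ I
  one : (⟨1, (1 : Matrix (Fin 1) (Fin 1) R)⟩ : SqMat R) ∉ I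

lemma sum_mem_of (hI : Adm 𝒜 W) (hD : DC 𝒜 W) {a b : ℕ} {A : Matrix (Fin a) (Fin a) R}
    {B : Matrix (Fin b) (Fin b) R} (hA : IsHomogSq 𝒜 A) (hB : IsHomogSq 𝒜 B)
    (hAB : (⟨a + b, diagSum A B⟩ : SqMat R) ∈ W) {p q : SqMat R}
    (hp : p ∈ Dset 𝒜 (W ∪ GenP 𝒜 A)) (hq : q ∈ Dset 𝒜 (W ∪ GenP 𝒜 B)) :
    (⟨p.1 + q.1, diagSum p.2 q.2⟩ : SqMat R) ∈ W := by
  have hpp : ∀ p ∈ Dset 𝒜 (W ∪ GenP 𝒜 A), IsHomogSq 𝒜 p.2 := fun p hp => (hI.gen hA).dset.hom p hp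
  induction hp with
  | step A' B' C' hA' hB' h h1 h2 =>
    exact hD _ _ _ h1 h2 (grDetSum_diag h ((hI.gen hB).dset.hom q hq))
  | base p hp =>
    have hph : IsHomogSq 𝒜 p.2 := (hI.gen hA).hom p hp
    induction hq with
    | step A' B' C' hA' hB' h h1 h2 =>
      exact hD _ _ _ h1 h2 (grDetSum_diag' h hph)
    | base q hq =>
      have hqh : IsHomogSq 𝒜 q.2 := (hI.gen hB).hom q hq
      rcases hp with hp | hp
      · exact hI.sum _ _ hp hqh
      rcases hq with hq | hq
      · apply hI.mem_of
        rw [mem_diagSum]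
        obtain ⟨α, β, hph⟩ := hph
        exact hI.blocks' (Mem.of_mem hq) ⟨Equiv.refl _⟩ hph
      obtain ⟨k, C, e, f, hC, rfl⟩ := hp
      obtain ⟨l, D, e', f', hD', rfl⟩ := hq
      apply hI.mem_of
      rw [mem_diagSum]
      obtain ⟨α, β, hC⟩ := hC
      obtain ⟨α', β', hD'⟩ := hD'
      have h1 := (mem_diagSum _ _).1 (Mem.of_mem hAB)
      have h2 := hI.blocks h1 ⟨Equiv.refl _⟩ (Hg.blocks (𝒜 := 𝒜) hC Hg.zero Hg.zero hD')
      have h3 := h2.reindex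
        (((e.trans finSumFinEquiv.symm).sumCongr (e'.trans finSumFinEquiv.symm)).trans
          (Equiv.sumSumSumComm _ _ _ _))
        (((f.trans finSumFinEquiv.symm).sumCongr (f'.trans finSumFinEquiv.symm)).trans
          (Equiv.sumSumSumComm _ _ _ _))
      convert h3 using 1
      ext (i | i) (j | j) <;>
        simp only [diagSum, reindex_apply, submatrix_apply, Equiv.trans_apply,
          Equiv.sumCongr_apply, Sum.map_inl, Sum.map_inr, fromBlocks_apply₁₁,
          fromBlocks_apply₁₂, fromBlocks_apply₂₁, fromBlocks_apply₂₂]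
      · generalize finSumFinEquiv.symm (e i) = i'
        generalize finSumFinEquiv.symm (f j) = j'
        rcases i' with i' | i' <;> rcases j' with j' | j' <;> simp
      · generalize finSumFinEquiv.symm (e i) = i'
        generalize finSumFinEquiv.symm (f' j) = j'
        rcases i' with i' | i' <;> rcases j' with j' | j' <;> simp
      · generalize finSumFinEquiv.symm (e' i) = i'
        generalize finSumFinEquiv.symm (f j) = j'
        rcases i' with i' | i' <;> rcases j' with j' | j' <;> simp
      · generalize finSumFinEquiv.symm (e' i) = i'
        generalize finSumFinEquiv.symm (f' j) = j'
        rcases i' with i' | i' <;> rcases j' with j' | j' <;> simp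

theorem exists_prime (hax : GrAx 𝒜) {np nq : ℕ} (P : Matrix (Fin np) (Fin np) R)
    (Q : Matrix (Fin nq) (Fin nq) R) (hP : IsHomogSq 𝒜 P) (hQ : IsHomogSq 𝒜 Q)
    (H : ∀ (r m : ℕ), 1 ≤ r → ¬ IsDetSumOf 𝒜 (NF 𝒜 ∪ GenP 𝒜 Q)
      (⟨np * r + m, diagSum (diagIter P r) (1 : Matrix (Fin m) (Fin m) R)⟩ : SqMat R)) :
    ∃ I : Set (SqMat R), Prm 𝒜 I ∧ (⟨nq, Q⟩ : SqMat R) ∈ I ∧ (⟨np, P⟩ : SqMat R) ∉ I := by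
  let 𝒮 : Set (Set (SqMat R)) := {I | Adm 𝒜 I ∧ DC 𝒜 I ∧ ∀ p ∈ PT P, p ∉ I}
  let I0 := Dset 𝒜 (NF 𝒜 ∪ GenP 𝒜 Q)
  have hI0a : Adm 𝒜 I0 := ((adm_nf hax).gen hQ).dset
  have hI0 : I0 ∈ 𝒮 := by
    refine ⟨hI0a, dset_dc, fun p hp hm => ?_⟩
    have h2 : (⟨p.1 + np, diagSum p.2 P⟩ : SqMat R) ∈ PT P := PT.sum hp PT.self
    have h3 := hI0a.sum p.2 P hm hP
    -- make sure at least one copy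
    obtain ⟨r, m, h⟩ := PT.std hI0a h2 h3
    rcases Nat.eq_zero_or_pos r with rfl | hr
    · have h4 := hI0a.sum _ P h hP
      refine H 1 m le_rfl ?_
      apply hI0a.mem_of
      rw [mem_diagSum]
      have h5 := (mem_diagSum _ _).1 (Mem.of_mem h4)
      have : IsEmpty (Fin (np * 0)) := by rw [Nat.mul_zero]; infer_instance
      have : diagIter P 1 = diagSum (0 : Matrix (Fin (np * 0)) (Fin (np * 0)) R) P := rfl
      rw [this]
      let t : Fin (np * 1) ⊕ Fin m ≃ Fin (np * 0 + m) ⊕ Fin np :=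
        (((finSumFinEquiv (m := np * 0) (n := np)).symm.sumCongr (Equiv.refl _)).trans
          (Equiv.sumAssoc _ _ _)).trans (((Equiv.refl _).sumCongr (Equiv.sumComm _ _)).trans
          ((Equiv.sumAssoc _ _ _).symm.trans (finSumFinEquiv.sumCongr (Equiv.refl _))))
      convert h5.reindex t t using 1
      ext (i | i) (j | j)
      · obtain ⟨i, rfl⟩ := (finSumFinEquiv (m := np * 0) (n := np)).surjective i
        obtain ⟨j, rfl⟩ := (finSumFinEquiv (m := np * 0) (n := np)).surjective j
        rcases i with i | i
        · exact isEmptyElim i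
        rcases j with j | j
        · exact isEmptyElim j
        simp only [t, diagSum, reindex_apply, submatrix_apply, fromBlocks_apply₁₁,
          Equiv.symm_apply_apply, fromBlocks_apply₂₂, Equiv.trans_apply, Equiv.sumCongr_apply,
          Sum.map_inl, Sum.map_inr, Equiv.sumAssoc_apply_inl_inr, Equiv.sumComm_apply, Sum.swap_inl,
          Sum.swap_inr, Equiv.sumAssoc_symm_apply_inr_inr, Equiv.refl_apply]
      · obtain ⟨i, rfl⟩ := (finSumFinEquiv (m := np * 0) (n := np)).surjective i
        rcases i with i | i
        · exact isEmptyElim i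
        simp only [t, diagSum, reindex_apply, submatrix_apply, fromBlocks_apply₁₁,
          Equiv.symm_apply_apply, fromBlocks_apply₂₂, Equiv.trans_apply, Equiv.sumCongr_apply,
          Sum.map_inl, Sum.map_inr, Equiv.sumAssoc_apply_inl_inr, Equiv.sumComm_apply, Sum.swap_inl,
          Sum.swap_inr, Equiv.sumAssoc_symm_apply_inr_inr, Equiv.refl_apply, fromBlocks_apply₁₂,
          fromBlocks_apply₂₁, Matrix.zero_apply, Equiv.sumAssoc_apply_inr,
          Equiv.sumAssoc_symm_apply_inr_inl]
      · obtain ⟨j, rfl⟩ := (finSumFinEquiv (m := np * 0) (n := np)).surjective j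
        rcases j with j | j
        · exact isEmptyElim j
        simp only [t, diagSum, reindex_apply, submatrix_apply, fromBlocks_apply₁₁,
          Equiv.symm_apply_apply, fromBlocks_apply₂₂, Equiv.trans_apply, Equiv.sumCongr_apply,
          Sum.map_inl, Sum.map_inr, Equiv.sumAssoc_apply_inl_inr, Equiv.sumComm_apply, Sum.swap_inl,
          Sum.swap_inr, Equiv.sumAssoc_symm_apply_inr_inr, Equiv.refl_apply, fromBlocks_apply₁₂,
          fromBlocks_apply₂₁, Matrix.zero_apply, Equiv.sumAssoc_apply_inr,
          Equiv.sumAssoc_symm_apply_inr_inl]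
      · simp only [t, diagSum, reindex_apply, submatrix_apply, fromBlocks_apply₁₁,
          Equiv.symm_apply_apply, fromBlocks_apply₂₂, Equiv.trans_apply, Equiv.sumCongr_apply,
          Sum.map_inl, Sum.map_inr, Equiv.sumAssoc_apply_inl_inr, Equiv.sumComm_apply, Sum.swap_inl,
          Sum.swap_inr, Equiv.sumAssoc_symm_apply_inr_inr, Equiv.refl_apply, fromBlocks_apply₁₂,
          fromBlocks_apply₂₁, Matrix.zero_apply, Equiv.sumAssoc_apply_inr,
          Equiv.sumAssoc_symm_apply_inr_inl]
    · exact H r m hr h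
  obtain ⟨I, hle, hmax⟩ := zorn_subset_nonempty 𝒮 (fun c hc hch hne => by
    refine ⟨⋃₀ c, ⟨⟨?_, ?_, ?_, ?_⟩, ?_, ?_⟩, fun s hs => Set.subset_sUnion_of_mem hs⟩
    · rintro p ⟨s, hs, hp⟩
      exact (hc hs).1.hom p hp
    · intro n A hA hf
      obtain ⟨s, hs⟩ := hne
      exact ⟨s, hs, (hc hs).1.nf A hA hf⟩
    · rintro m n A B ⟨s, hs, hp⟩ hB
      exact ⟨s, hs, (hc hs).1.sum A B hp hB⟩
    · rintro n A e f ⟨s, hs, hp⟩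
      exact ⟨s, hs, (hc hs).1.perm A e f hp⟩
    · rintro n A B C ⟨s, hs, hA⟩ ⟨t, ht, hB⟩ h
      rcases hch.total hs ht with hst | hst
      · exact ⟨t, ht, (hc ht).2.1 A B C (hst hA) hB h⟩
      · exact ⟨s, hs, (hc hs).2.1 A B C hA (hst hB) h⟩
    · rintro p hp ⟨s, hs, hm⟩
      exact (hc hs).2.2 p hp hm) I0 hI0
  have hI : I ∈ 𝒮 := hmax.prop
  have key : ∀ {m : ℕ} (A : Matrix (Fin m) (Fin m) R), IsHomogSq 𝒜 A → (⟨m, A⟩ : SqMat R) ∉ I →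
      ∃ p ∈ PT P, p ∈ Dset 𝒜 (I ∪ GenP 𝒜 A) := by
    intro m A hA hAI
    by_contra hcon
    push Not at hcon
    have hmem : Dset 𝒜 (I ∪ GenP 𝒜 A) ∈ 𝒮 := ⟨(hI.1.gen hA).dset, dset_dc, hcon⟩
    have h1 := hmax.le_of_ge hmem (fun p hp => IsDetSumOf.base _ (Or.inl hp))
    exact hAI (h1 (IsDetSumOf.base _ (Or.inr self_mem_genP)))
  refine ⟨I, ⟨hI.1, hI.2.1, ?_, hI.2.2 _ PT.one⟩,
    hle (IsDetSumOf.base _ (Or.inr self_mem_genP)), hI.2.2 _ PT.self⟩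
  intro m n A B hA hB hAB
  by_contra hcon
  push Not at hcon
  obtain ⟨p, hp, hp'⟩ := key A hA hcon.1
  obtain ⟨q, hq, hq'⟩ := key B hB hcon.2
  exact hI.2.2 _ (PT.sum hp hq) (sum_mem_of hI.1 hI.2.1 hA hB hAB hp' hq')

end Zorn

end GrW

namespace GrW

section Toolkit

variable {Γ : Type u} [Group Γ] {R : Type v} [Ring R]
variable {𝒜 : Γ → AddSubgroup R} {I : Set (SqMat R)}
variable {ι κ ι' κ' τ : Type*}

lemma Prm.split (hI : Prm 𝒜 I) [Finite ι] [Finite ι'] {A : Matrix ι κ R} {B : Matrix ι' κ' R}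
    (q : Nonempty (ι ≃ κ)) (q' : Nonempty (ι' ≃ κ')) {α β α' β'} (hA : Hg 𝒜 A α β)
    (hB : Hg 𝒜 B α' β') : Mem I (fromBlocks A 0 0 B) ↔ Mem I A ∨ Mem I B := by
  constructor
  · intro h
    obtain ⟨q⟩ := q
    obtain ⟨q'⟩ := q'
    have g := (Finite.equivFin ι).symm
    have g' := (Finite.equivFin ι').symm
    rcases hI.prime (A.submatrix g (g.trans q)) (B.submatrix g' (g'.trans q'))
      ⟨_, _, hA.submatrix _ _⟩ ⟨_, _, hB.submatrix _ _⟩ (by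
        apply hI.adm.mem_of
        rw [mem_diagSum]
        convert h.reindex (g.sumCongr g') ((g.trans q).sumCongr (g'.trans q')) using 1
        ext (i | i) (j | j) <;> simp) with h | h
    · exact Or.inl ((mem_reindex_iff _ _).1 (Mem.of_mem h))
    · exact Or.inr ((mem_reindex_iff _ _).1 (Mem.of_mem h))
  · rintro (h | h)
    · exact hI.adm.blocks h q' hB
    · exact hI.adm.blocks' h q hA

lemma hollow (hI : Prm 𝒜 I) (hax : GrAx 𝒜) [Fintype ι] [Fintype ι'] [Fintype κ'] [DecidableEq ι]
    [DecidableEq κ'] {A : Matrix ι κ R} {C : Matrix ι κ' R} {D : Matrix ι' κ' R}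
    (q : Nonempty (ι ≃ κ)) (q' : Nonempty (ι' ≃ κ')) {α β α' β'} (hA : Hg 𝒜 A α β)
    (hC : Hg 𝒜 C α β') (hD : Hg 𝒜 D α' β') (c : κ') (hc : ∀ i, D i c = 0) :
    Mem I (fromBlocks A C 0 D) := by
  obtain ⟨q⟩ := q
  obtain ⟨q'⟩ := q'
  have hE : Hg 𝒜 ((1 : Matrix κ' κ' R).submatrix (Subtype.val : {d // d ≠ c} → κ') id) _ _ :=
    (Hg.one hax (α := β')).submatrix (Subtype.val : {d // d ≠ c} → κ') id
  refine hI.adm.nonfull hax ⟨q.sumCongr q'⟩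
    (X := fromBlocks (1 : Matrix ι ι R) 0 0 (D.submatrix id (Subtype.val : {d // d ≠ c} → κ')))
    (Y := fromBlocks A C 0 ((1 : Matrix κ' κ' R).submatrix (Subtype.val : {d // d ≠ c} → κ') id))
    (Hg.blocks (Hg.one hax (α := α)) Hg.zero Hg.zero (hD.submatrix _ _))
    (Hg.blocks hA hC Hg.zero hE) ?_ ?_
  · have h1 : Fintype.card {d // d ≠ c} < Fintype.card κ' :=
      Fintype.card_subtype_lt (x := c) (by simp)
    have h2 := Fintype.card_congr q'
    simp only [Nat.card_eq_fintype_card, Fintype.card_sum]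
    omega
  · rw [fromBlocks_multiply]
    simp only [Matrix.one_mul, Matrix.zero_mul, add_zero, Matrix.mul_zero, zero_add]
    congr 1
    ext i j
    rw [Matrix.mul_apply]
    by_cases hj : j = c
    · subst hj
      rw [hc, Finset.sum_eq_zero]
      rintro ⟨x, hx⟩ _
      simp [Matrix.one_apply, hx]
    · rw [Finset.sum_eq_single ⟨j, hj⟩]
      · rw [submatrix_apply, submatrix_apply, Matrix.one_apply]
        simp
      · rintro ⟨b, hb⟩ _ h
        simp only [submatrix_apply, id_eq, Matrix.one_apply]
        rw [if_neg (by simpa using h), mul_zero]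
      · simp

lemma Hg.updateCol [DecidableEq κ] {A : Matrix ι κ R} {α β} (h : Hg 𝒜 A α β) {c : κ} {v : ι → R}
    (hv : ∀ i, v i ∈ 𝒜 (α i * (β c)⁻¹)) : Hg 𝒜 (A.updateCol c v) α β := by
  intro i j
  rw [Matrix.updateCol_apply]
  split_ifs with hj
  · subst hj; exact hv i
  · exact h i j

lemma tri_step (hI : Prm 𝒜 I) (hax : GrAx 𝒜) [Fintype ι] [Fintype ι'] [Fintype κ'] [DecidableEq ι]
    [DecidableEq κ'] {A : Matrix ι κ R} {C : Matrix ι κ' R} {D : Matrix ι' κ' R}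
    (q : Nonempty (ι ≃ κ)) (q' : Nonempty (ι' ≃ κ')) {α β α' β'} (hA : Hg 𝒜 A α β)
    (hC : Hg 𝒜 C α β') (hD : Hg 𝒜 D α' β') (c : κ') (v : ι → R)
    (hv : ∀ i, v i ∈ 𝒜 (α i * (β' c)⁻¹))
    (h : Mem I (fromBlocks A C 0 D)) : Mem I (fromBlocks A (C.updateCol c v) 0 D) := by
  have hC' : Hg 𝒜 (C.updateCol c (fun i => v i - C i c)) α β' :=
    hC.updateCol fun i => AddSubgroup.sub_mem _ (hv i) (hC i c)
  have hD' : Hg 𝒜 (D.updateCol c 0) α' β' := hD.updateCol fun i => AddSubgroup.zero_mem _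
  have h2 := hollow hI hax q q' hA hC' hD' c (by simp)
  refine hI.adm.colSum hI.dc (Hg.blocks hA hC Hg.zero hD) (Hg.blocks hA hC' Hg.zero hD') h h2
    (c := Sum.inr c) ⟨?_, ?_⟩
  · rintro (i | i) (j | j) hj
    · simp
    · have : j ≠ c := fun h => hj (by rw [h])
      simp [this]
    · simp
    · have : j ≠ c := fun h => hj (by rw [h])
      simp [this]
  · rintro (i | i) <;> simp

/-- take the second matrix on the columns in the given set, the first one elsewhere -/
def mixc [DecidableEq κ'] (s : Finset κ') (C C' : Matrix ι κ' R) : Matrix ι κ' R :=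
  Matrix.of fun i j => if j ∈ s then C' i j else C i j

lemma mixc_empty [DecidableEq κ'] (C C' : Matrix ι κ' R) : mixc ∅ C C' = C := by
  ext; simp [mixc]

lemma mixc_univ [Fintype κ'] [DecidableEq κ'] (C C' : Matrix ι κ' R) :
    mixc Finset.univ C C' = C' := by
  ext; simp [mixc]

lemma mixc_insert [DecidableEq κ'] (c : κ') (s : Finset κ') (C C' : Matrix ι κ' R) :
    mixc (insert c s) C C' = (mixc s C C').updateCol c (fun i => C' i c) := by
  ext i j
  rw [Matrix.updateCol_apply]
  by_cases hj : j = c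
  · subst hj; simp [mixc]
  · simp [mixc, hj]

lemma tri_change (hI : Prm 𝒜 I) (hax : GrAx 𝒜) [Fintype ι] [Fintype ι'] [Fintype κ'] [DecidableEq ι]
    [DecidableEq κ'] {A : Matrix ι κ R} {C C' : Matrix ι κ' R} {D : Matrix ι' κ' R}
    (q : Nonempty (ι ≃ κ)) (q' : Nonempty (ι' ≃ κ')) {α β α' β'} (hA : Hg 𝒜 A α β)
    (hC : Hg 𝒜 C α β') (hC' : Hg 𝒜 C' α β') (hD : Hg 𝒜 D α' β')
    (h : Mem I (fromBlocks A C 0 D)) : Mem I (fromBlocks A C' 0 D) := by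
  have key : ∀ s : Finset κ', Hg 𝒜 (mixc s C C') α β' ∧
      Mem I (fromBlocks A (mixc s C C') 0 D) := by
    intro s
    induction s using Finset.induction_on with
    | empty => rw [mixc_empty]; exact ⟨hC, h⟩
    | insert c s hc ih =>
      rw [mixc_insert]
      exact ⟨ih.1.updateCol fun i => hC' i c,
        tri_step hI hax q q' hA ih.1 hD c _ (fun i => hC' i c) ih.2⟩
  have := (key Finset.univ).2
  rwa [mixc_univ] at this

/-- block triangular matrices -/
lemma Prm.tri (hI : Prm 𝒜 I) (hax : GrAx 𝒜) [Fintype ι] [Fintype ι'] [Fintype κ'] [DecidableEq ι]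
    [DecidableEq κ'] {A : Matrix ι κ R} {C : Matrix ι κ' R} {D : Matrix ι' κ' R}
    (q : Nonempty (ι ≃ κ)) (q' : Nonempty (ι' ≃ κ')) {α β α' β'} (hA : Hg 𝒜 A α β)
    (hC : Hg 𝒜 C α β') (hD : Hg 𝒜 D α' β') :
    Mem I (fromBlocks A C 0 D) ↔ Mem I A ∨ Mem I D := by
  rw [← hI.split q q' hA hD]
  exact ⟨tri_change hI hax q q' hA hC Hg.zero hD, tri_change hI hax q q' hA Hg.zero hC hD⟩

lemma Prm.triL (hI : Prm 𝒜 I) (hax : GrAx 𝒜) [Fintype ι] [Fintype ι'] [Fintype κ] [DecidableEq ι']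
    [DecidableEq κ] {A : Matrix ι κ R} {C : Matrix ι' κ R} {D : Matrix ι' κ' R}
    (q : Nonempty (ι ≃ κ)) (q' : Nonempty (ι' ≃ κ')) {α β α' β'} (hA : Hg 𝒜 A α β)
    (hC : Hg 𝒜 C α' β) (hD : Hg 𝒜 D α' β') :
    Mem I (fromBlocks A 0 C D) ↔ Mem I A ∨ Mem I D := by
  rw [or_comm, ← hI.tri hax q' q hD hC hA, ← mem_reindex_iff (Equiv.sumComm _ _) (Equiv.sumComm _ _)]
  convert Iff.rfl using 2
  ext (i | i) (j | j) <;> simp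

lemma col_step (hI : Prm 𝒜 I) (hax : GrAx 𝒜) [Fintype ι] [Fintype κ] [DecidableEq κ]
    {M : Matrix ι κ R} (q : Nonempty (ι ≃ κ)) {α β} (hM : Hg 𝒜 M α β) (c : κ) (t : κ → R)
    (ht : ∀ j, t j ∈ 𝒜 (β j * (β c)⁻¹)) (hc : t c = 0) (h : Mem I M) :
    Mem I (M.updateCol c (fun i => M i c + (M *ᵥ t) i)) := by
  have h3 : ∀ i, (M *ᵥ t) i ∈ 𝒜 (α i * (β c)⁻¹) := by
    intro i
    refine AddSubgroup.sum_mem _ fun j _ => ?_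
    simpa [mul_assoc] using hax.mul (hM i j) (ht j)
  have hN : Hg 𝒜 (M.updateCol c (M *ᵥ t)) α β := hM.updateCol h3
  have hE : Hg 𝒜 (((1 : Matrix κ κ R).updateCol c t).submatrix
    (Subtype.val : {d // d ≠ c} → κ) id) _ _ :=
    ((Hg.one hax (α := β)).updateCol ht).submatrix (Subtype.val : {d // d ≠ c} → κ) id
  have h2 : Mem I (M.updateCol c (M *ᵥ t)) := by
    refine hI.adm.nonfull hax q (X := M.submatrix id (Subtype.val : {d // d ≠ c} → κ))
      (hM.submatrix _ _) hE ?_ ?_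
    · have h1 : Fintype.card {d // d ≠ c} < Fintype.card κ :=
        Fintype.card_subtype_lt (x := c) (by simp)
      obtain ⟨q⟩ := q
      have h2 := Fintype.card_congr q
      simp only [Nat.card_eq_fintype_card]
      omega
    · ext i j
      rw [Matrix.mul_apply]
      by_cases hj : j = c
      · subst hj
        simp only [updateCol_self, submatrix_apply, id_eq, mulVec, dotProduct]
        rw [Fintype.sum_eq_add_sum_subtype_ne _ j, hc]
        simp
      · rw [Finset.sum_eq_single ⟨j, hj⟩]
        · simp [hj, Matrix.updateCol_apply]
        · rintro ⟨b, hb⟩ _ h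
          have : b ≠ j := by simpa using h
          simp [Matrix.updateCol_apply, hj, this]
        · simp
  refine hI.adm.colSum hI.dc hM hN h h2 (c := c) ⟨?_, ?_⟩
  · intro i j hj
    simp [hj, Matrix.updateCol_apply]
  · intro i; simp

lemma col_ops (hI : Prm 𝒜 I) (hax : GrAx 𝒜) [Fintype ι] [Fintype κ] [DecidableEq κ]
    [Fintype κ'] [DecidableEq κ'] {A : Matrix ι κ R} {B : Matrix ι κ' R}
    (q : Nonempty (ι ≃ κ ⊕ κ')) {α β β'} (hA : Hg 𝒜 A α β) (hB : Hg 𝒜 B α β') {T : Matrix κ κ' R}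
    (hT : Hg 𝒜 T β β') (h : Mem I (fromCols A B)) : Mem I (fromCols A (B + A * T)) := by
  have key : ∀ s : Finset κ', Hg 𝒜 (mixc s B (B + A * T)) α β' ∧
      Mem I (fromCols A (mixc s B (B + A * T))) := by
    intro s
    induction s using Finset.induction_on with
    | empty => rw [mixc_empty]; exact ⟨hB, h⟩
    | insert c s hc ih =>
      rw [mixc_insert]
      have hBT := hB.add (hA.mul hax hT)
      refine ⟨ih.1.updateCol fun i => hBT i c, ?_⟩
      have hM : Hg 𝒜 (fromCols A (mixc s B (B + A * T))) α
          (Sum.elim β β') := by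
        rintro i (j | j)
        · exact hA i j
        · exact ih.1 i j
      have := col_step hI hax q hM (Sum.inr c) (Sum.elim (fun k => T k c) 0) (by
        rintro (j | j)
        · exact hT j c
        · exact AddSubgroup.zero_mem _) rfl ih.2
      convert this using 1
      ext i (j | j)
      · simp [Matrix.updateCol_apply]
      · by_cases hj : j = c
        · subst hj
          simp [hc, mulVec, dotProduct, Matrix.mul_apply, fromCols, mixc]
        · simp [hj, Matrix.updateCol_apply]
  have := (key Finset.univ).2
  rwa [mixc_univ] at this

lemma Prm.not_one (hI : Prm 𝒜 I) (hax : GrAx 𝒜) [Finite ι] [DecidableEq ι] :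
    ¬ Mem I (1 : Matrix ι ι R) := by
  have h0 : ∀ n : ℕ, (⟨n, (1 : Matrix (Fin n) (Fin n) R)⟩ : SqMat R) ∉ I := by
    intro n
    induction n with
    | zero =>
      intro h
      have := hI.adm.sum _ (1 : Matrix (Fin 1) (Fin 1) R) h ⟨fun _ => 1, fun _ => 1, Hg.one hax⟩
      refine hI.one ?_
      apply hI.adm.mem_of
      have h2 := (mem_diagSum _ _).1 (Mem.of_mem this)
      convert h2.reindex (Equiv.emptySum _ _).symm (Equiv.emptySum _ _).symm using 1
      ext i j
      simp [Matrix.one_apply]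
    | succ n ih =>
      intro h
      rcases hI.prime (1 : Matrix (Fin n) (Fin n) R) (1 : Matrix (Fin 1) (Fin 1) R)
        ⟨fun _ => 1, fun _ => 1, Hg.one hax⟩ ⟨fun _ => 1, fun _ => 1, Hg.one hax⟩ (by
          convert h using 2
          rw [diagSum, fromBlocks_one]
          simp) with h | h
      · exact ih h
      · exact hI.one h
  rintro ⟨n, e, f, h⟩
  have h2 := hI.adm.perm _ (Equiv.refl _) (e.trans f.symm) h
  apply h0 n
  convert h2 using 2
  ext i j
  simp [Matrix.one_apply]

lemma Prm.mul_neg_iff (hI : Prm 𝒜 I) (hax : GrAx 𝒜) [Fintype ι] [Fintype κ] [DecidableEq κ]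
    [Fintype τ] [DecidableEq τ] [DecidableEq ι]
    {A : Matrix ι κ R} {U : Matrix κ τ R} (q : Nonempty (ι ≃ κ)) (q' : Nonempty (κ ≃ τ))
    {α β γ} (hA : Hg 𝒜 A α β) (hU : Hg 𝒜 U β γ) :
    Mem I (A * U) ↔ Mem I A ∨ Mem I (-U) := by
  obtain ⟨q⟩ := q
  obtain ⟨q'⟩ := q'
  rw [← hI.triL hax ⟨q⟩ ⟨q'⟩ hA (Hg.one hax (α := β)) hU.neg]
  have h1 : Mem I (fromBlocks (A * U) A 0 (1 : Matrix κ κ R)) ↔ Mem I (A * U) := by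
    rw [hI.tri hax ⟨q.trans q'⟩ ⟨Equiv.refl _⟩ (hA.mul hax hU) hA (Hg.one hax (α := β))]
    simp [hI.not_one hax]
  rw [← h1, ← mem_reindex_iff (Equiv.refl _) (Equiv.sumComm κ τ)]
  have e1 : (fromBlocks (A * U) A 0 (1 : Matrix κ κ R)).submatrix (Equiv.refl _)
    (Equiv.sumComm κ τ) = fromCols (fromRows A (1 : Matrix κ κ R)) (fromRows (A * U) 0) := by
    ext (i | i) (j | j) <;> simp
  have e2 : fromBlocks A 0 (1 : Matrix κ κ R) (-U) =
    fromCols (fromRows A (1 : Matrix κ κ R)) (fromRows 0 (-U)) := by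
    ext (i | i) (j | j) <;> simp
  rw [e1, e2]
  have hg1 : Hg 𝒜 (fromRows A (1 : Matrix κ κ R)) (Sum.elim α β) β := by
    rintro (i | i) j
    · exact hA i j
    · exact Hg.one hax i j
  have hg2 : Hg 𝒜 (fromRows (A * U) (0 : Matrix κ τ R)) (Sum.elim α β) γ := by
    rintro (i | i) j
    · exact hA.mul hax hU i j
    · exact AddSubgroup.zero_mem _
  have hg3 : Hg 𝒜 (fromRows (0 : Matrix ι τ R) (-U)) (Sum.elim α β) γ := by
    rintro (i | i) j
    · exact AddSubgroup.zero_mem _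
    · exact hU.neg i j
  constructor
  · intro h
    convert col_ops hI hax ⟨q.sumCongr q'⟩ hg1 hg2 hU.neg h using 2
    rw [fromRows_mul]
    ext (i | i) j <;> simp
  · intro h
    convert col_ops hI hax ⟨q.sumCongr q'⟩ hg1 hg3 hU h using 2
    rw [fromRows_mul]
    ext (i | i) j <;> simp

/-- multiplicativity -/
lemma Prm.mul_iff (hI : Prm 𝒜 I) (hax : GrAx 𝒜) [Fintype ι] [Fintype κ] [DecidableEq κ] [Fintype τ]
    [DecidableEq τ] [DecidableEq ι]
    {A : Matrix ι κ R} {U : Matrix κ τ R} (q : Nonempty (ι ≃ κ)) (q' : Nonempty (κ ≃ τ))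
    {α β γ} (hA : Hg 𝒜 A α β) (hU : Hg 𝒜 U β γ) :
    Mem I (A * U) ↔ Mem I A ∨ Mem I U := by
  rw [hI.mul_neg_iff hax q q' hA hU]
  have := hI.mul_neg_iff hax ⟨Equiv.refl _⟩ q' (Hg.one hax (α := β)) hU
  rw [Matrix.one_mul] at this
  simp [hI.not_one hax] at this
  rw [this]

end Toolkit

end GrW

namespace GrW

section Modl

open scoped Classical

variable {Γ : Type u} [Group Γ] {R : Type v} [Ring R]

/-- Everything the construction needs. `p γ` is the projection to degree `γ`. -/
structure Ctx (𝒜 : Γ → AddSubgroup R) (I : Set (SqMat R)) (p : Γ → R →+ R) : Prop where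
  prm : Prm 𝒜 I
  ax : GrAx 𝒜
  mem : ∀ γ r, p γ r ∈ 𝒜 γ
  same : ∀ {γ : Γ} {r : R}, r ∈ 𝒜 γ → p γ r = r
  ne : ∀ {γ δ : Γ} {r : R}, r ∈ 𝒜 γ → δ ≠ γ → p δ r = 0
  gen : ∀ (C : R → Prop), (∀ γ r, r ∈ 𝒜 γ → C r) → (∀ a b, C a → C b → C (a + b)) → ∀ r, C r

/-- index of the formal solutions -/
structure Idx (𝒜 : Γ → AddSubgroup R) (I : Set (SqMat R)) where
  n : ℕ
  A : Matrix (Fin n) (Fin n) R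
  α : Fin n → Γ
  β : Fin n → Γ
  x : Fin n → R
  hA : Hg 𝒜 A α β
  hx : ∀ i, x i ∈ 𝒜 (α i)
  hn : ¬ Mem I A

abbrev GG (𝒜 : Γ → AddSubgroup R) (I : Set (SqMat R)) := Σ k : Idx 𝒜 I, Fin k.n

abbrev EE (𝒜 : Γ → AddSubgroup R) (I : Set (SqMat R)) := Option (GG 𝒜 I)

variable {𝒜 : Γ → AddSubgroup R} {I : Set (SqMat R)} {p : Γ → R →+ R}

def deg : EE 𝒜 I → Γ
  | none => 1
  | some g => g.1.β g.2

lemma Ctx.p_mul (h : Ctx 𝒜 I p) {δ : Γ} {b : R} (hb : b ∈ 𝒜 δ) (γ : Γ) (r : R) :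
    p (δ * γ) (b * r) = b * p γ r := by
  refine h.gen (fun r => p (δ * γ) (b * r) = b * p γ r) ?_ ?_ r
  · intro ε r hr
    by_cases he : γ = ε
    · subst he
      rw [h.same hr, h.same (h.ax.mul hb hr)]
    · rw [h.ne hr he, h.ne (h.ax.mul hb hr) (by simpa using he), mul_zero]
  · intro r s hr hs
    simp only [mul_add, map_add, hr, hs]

/-- homogeneous elements of degree `γ` -/
def FF (𝒜 : Γ → AddSubgroup R) (I : Set (SqMat R)) (γ : Γ) : AddSubgroup (EE 𝒜 I →₀ R) where
  carrier := {φ | ∀ g, φ g ∈ 𝒜 (γ * (deg g)⁻¹)}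
  add_mem' := fun ha hb g => AddSubgroup.add_mem _ (ha g) (hb g)
  zero_mem' := fun g => AddSubgroup.zero_mem _
  neg_mem' := fun ha g => AddSubgroup.neg_mem _ (ha g)

lemma mem_FF {γ : Γ} {φ : EE 𝒜 I →₀ R} : φ ∈ FF 𝒜 I γ ↔ ∀ g, φ g ∈ 𝒜 (γ * (deg g)⁻¹) := Iff.rfl

/-- homogeneous components -/
noncomputable def comp (p : Γ → R →+ R) (γ : Γ) : (EE 𝒜 I →₀ R) →+ (EE 𝒜 I →₀ R) where
  toFun φ := Finsupp.onFinset φ.support (fun g => p (γ * (deg g)⁻¹) (φ g)) (by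
    intro g hg
    rw [Finsupp.mem_support_iff]
    rintro h
    rw [h, map_zero] at hg
    exact hg rfl)
  map_zero' := by ext; simp
  map_add' := by intros; ext; simp

@[simp] lemma comp_apply (γ : Γ) (φ : EE 𝒜 I →₀ R) (g) :
    comp p γ φ g = p (γ * (deg g)⁻¹) (φ g) := rfl

lemma Ctx.comp_mem (h : Ctx 𝒜 I p) (γ : Γ) (φ : EE 𝒜 I →₀ R) : comp p γ φ ∈ FF 𝒜 I γ :=
  fun _ => h.mem _ _

lemma Ctx.comp_same (h : Ctx 𝒜 I p) {γ : Γ} {φ : EE 𝒜 I →₀ R} (hφ : φ ∈ FF 𝒜 I γ) :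
    comp p γ φ = φ := by
  ext g
  rw [comp_apply, h.same (hφ g)]

lemma Ctx.comp_ne (h : Ctx 𝒜 I p) {γ δ : Γ} {φ : EE 𝒜 I →₀ R} (hφ : φ ∈ FF 𝒜 I γ) (hd : δ ≠ γ) :
    comp p δ φ = 0 := by
  ext g
  rw [comp_apply, h.ne (hφ g) (by simpa using hd)]
  rfl

lemma Ctx.comp_smul (h : Ctx 𝒜 I p) {δ : Γ} {b : R} (hb : b ∈ 𝒜 δ) (γ : Γ) (φ : EE 𝒜 I →₀ R) :
    comp p (δ * γ) (b • φ) = b • comp p γ φ := by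
  ext g
  simp only [comp_apply, Finsupp.smul_apply, smul_eq_mul]
  rw [mul_assoc, h.p_mul hb]

lemma Ctx.smul_mem (h : Ctx 𝒜 I p) {δ γ : Γ} {b : R} (hb : b ∈ 𝒜 δ) {φ : EE 𝒜 I →₀ R}
    (hφ : φ ∈ FF 𝒜 I γ) : b • φ ∈ FF 𝒜 I (δ * γ) := by
  intro g
  have := h.ax.mul hb (hφ g)
  rwa [← mul_assoc] at this

noncomputable def AA (𝒜 : Γ → AddSubgroup R) (I : Set (SqMat R)) : Matrix (GG 𝒜 I) (GG 𝒜 I) R :=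
  blockDiagonal' (fun k : Idx 𝒜 I => k.A)

@[simp] lemma AA_eq (k : Idx 𝒜 I) (i j : Fin k.n) : AA 𝒜 I ⟨k, i⟩ ⟨k, j⟩ = k.A i j :=
  blockDiagonal'_apply_eq _ _ _ _

lemma AA_ne {g g' : GG 𝒜 I} (h : g.1 ≠ g'.1) : AA 𝒜 I g g' = 0 :=
  blockDiagonal'_apply_ne _ _ _ h

abbrev JJ (s : Finset (Idx 𝒜 I)) := {g : GG 𝒜 I // g.1 ∈ s}

noncomputable instance (s : Finset (Idx 𝒜 I)) : Fintype (JJ s) := by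
  have : Finite (JJ s) := by
    refine Finite.of_injective (β := Σ k : {k // k ∈ s}, Fin k.1.n)
      (fun g => ⟨⟨g.1.1, g.2⟩, g.1.2⟩) ?_
    rintro ⟨⟨k, i⟩, hk⟩ ⟨⟨l, j⟩, hl⟩ h
    simp only [Sigma.mk.injEq, Subtype.mk.injEq] at h
    obtain ⟨rfl, h⟩ := h
    simp only [heq_eq_eq] at h
    subst h
    rfl
  exact Fintype.ofFinite _

noncomputable def As (s : Finset (Idx 𝒜 I)) : Matrix (JJ s) (JJ s) R :=
  (AA 𝒜 I).submatrix Subtype.val Subtype.val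

/-- bordered matrix -/
def bord {ι : Type*} (A : Matrix ι ι R) (x : ι → R) (f : ι → R) (c : R) :
    Matrix (ι ⊕ Unit) (ι ⊕ Unit) R :=
  fromBlocks A (Matrix.of fun i _ => - x i) (Matrix.of fun _ j => f j) (Matrix.of fun _ _ => c)

lemma Hg.bord {ι : Type*} {A : Matrix ι ι R} {α β : ι → Γ} (hA : Hg 𝒜 A α β) {x f : ι → R} {c : R}
    {γ : Γ}
    (hx : ∀ i, x i ∈ 𝒜 (α i)) (hf : ∀ i, f i ∈ 𝒜 (γ * (β i)⁻¹)) (hc : c ∈ 𝒜 γ) :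
    Hg 𝒜 (bord A x f c) (Sum.elim α fun _ => γ) (Sum.elim β fun _ => 1) :=
  Hg.blocks hA (fun i _ => by simpa using hx i) (fun _ j => hf j) (fun _ _ => by simpa using hc)

noncomputable def zmat (s : Finset (Idx 𝒜 I)) (φ : EE 𝒜 I →₀ R) :
    Matrix (JJ s ⊕ Unit) (JJ s ⊕ Unit) R :=
  bord (As s) (fun g => g.1.1.x g.1.2) (fun g => φ (some g.1)) (φ none)

lemma hg_AA : Hg 𝒜 (AA 𝒜 I) (fun g => g.1.α g.2) (fun g => g.1.β g.2) := by
  rintro ⟨k, i⟩ ⟨l, j⟩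
  by_cases h : k = l
  · subst h
    rw [AA_eq]
    exact k.hA i j
  · rw [AA_ne h]
    exact AddSubgroup.zero_mem _

lemma hg_As (s : Finset (Idx 𝒜 I)) :
    Hg 𝒜 (As s) (fun g => g.1.1.α g.1.2) (fun g => g.1.1.β g.1.2) :=
  hg_AA.submatrix _ _

lemma hg_zmat (s : Finset (Idx 𝒜 I)) {γ : Γ} {φ : EE 𝒜 I →₀ R} (hφ : φ ∈ FF 𝒜 I γ) :
    Hg 𝒜 (zmat s φ) (Sum.elim (fun g => g.1.1.α g.1.2) fun _ => γ)
      (Sum.elim (fun g => g.1.1.β g.1.2) fun _ => 1) :=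
  (hg_As s).bord (fun g => g.1.1.hx g.1.2) (fun g => hφ (some g.1))
    (by simpa [deg] using hφ none)

def Spt (s : Finset (Idx 𝒜 I)) (φ : EE 𝒜 I →₀ R) : Prop := ∀ g : GG 𝒜 I, g.1 ∉ s → φ (some g) = 0

noncomputable def spt (φ : EE 𝒜 I →₀ R) : Finset (Idx 𝒜 I) :=
  φ.support.biUnion fun g => match g with
    | none => ∅
    | some g => {g.1}

lemma spt_spt (φ : EE 𝒜 I →₀ R) : Spt (spt φ) φ := by
  intro g hg
  by_contra h
  refine hg ?_
  rw [spt, Finset.mem_biUnion]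
  exact ⟨some g, by simpa using h, by simp⟩

noncomputable def insEquiv (k : Idx 𝒜 I) (s : Finset (Idx 𝒜 I)) (hk : k ∉ s) :
    Fin k.n ⊕ JJ s ≃ JJ (insert k s) :=
  Equiv.ofBijective (Sum.elim (fun i => ⟨⟨k, i⟩, Finset.mem_insert_self _ _⟩)
    (fun g => ⟨g.1, Finset.mem_insert_of_mem g.2⟩)) (by
    constructor
    · rintro (i | ⟨⟨l, i⟩, hi⟩) (j | ⟨⟨m, j⟩, hj⟩) h
      · simpa using h
      · simp only [Sum.elim_inl, Sum.elim_inr, Subtype.mk.injEq, Sigma.mk.injEq] at h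
        exact absurd (h.1 ▸ hj) hk
      · simp only [Sum.elim_inl, Sum.elim_inr, Subtype.mk.injEq, Sigma.mk.injEq] at h
        exact absurd (h.1 ▸ hi) hk
      · simpa using h
    · rintro ⟨⟨l, i⟩, hi⟩
      by_cases h : l = k
      · subst h
        exact ⟨Sum.inl i, rfl⟩
      · exact ⟨Sum.inr ⟨⟨l, i⟩, (Finset.mem_insert.1 hi).resolve_left h⟩, rfl⟩)

@[simp] lemma insEquiv_inl (k : Idx 𝒜 I) (s : Finset (Idx 𝒜 I)) (hk : k ∉ s) (i) :
    insEquiv k s hk (Sum.inl i) = ⟨⟨k, i⟩, Finset.mem_insert_self _ _⟩ := rfl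

@[simp] lemma insEquiv_inr (k : Idx 𝒜 I) (s : Finset (Idx 𝒜 I)) (hk : k ∉ s) (g) :
    insEquiv k s hk (Sum.inr g) = ⟨g.1, Finset.mem_insert_of_mem g.2⟩ := rfl

lemma zmat_insert (h : Ctx 𝒜 I p) {k : Idx 𝒜 I} {s : Finset (Idx 𝒜 I)} (hk : k ∉ s) {γ : Γ}
    {φ : EE 𝒜 I →₀ R} (hφ : φ ∈ FF 𝒜 I γ) (hs : Spt s φ) :
    Mem I (zmat (insert k s) φ) ↔ Mem I (zmat s φ) := by
  let t : Fin k.n ⊕ (JJ s ⊕ Unit) ≃ JJ (insert k s) ⊕ Unit :=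
    (Equiv.sumAssoc _ _ _).symm.trans ((insEquiv k s hk).sumCongr (Equiv.refl _))
  rw [← mem_reindex_iff t t]
  have hC : Hg 𝒜 (fromCols 0 (Matrix.of fun i _ => - k.x i) : Matrix (Fin k.n) (JJ s ⊕ Unit) R) k.α
      (Sum.elim (fun g => g.1.1.β g.1.2) fun _ => 1) := by
    rintro i (j | j)
    · exact AddSubgroup.zero_mem _
    · simpa using k.hx i
  have := h.prm.tri h.ax ⟨Equiv.refl _⟩ ⟨Equiv.refl _⟩ k.hA hC (hg_zmat s hφ)
  rw [or_iff_right k.hn] at this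
  rw [← this]
  convert Iff.rfl using 2
  ext (i | i | i) (j | j | j)
  · simp [t, zmat, bord, As]
  · have : k ≠ j.1.1 := fun h => hk (h ▸ j.2)
    simp [t, zmat, bord, As, AA_ne, this]
  · simp [t, zmat, bord]
  · have : i.1.1 ≠ k := fun h => hk (h ▸ i.2)
    simp [t, zmat, bord, As, AA_ne, this]
  · simp [t, zmat, bord, As]
  · simp [t, zmat, bord]
  · simp [t, zmat, bord, hs ⟨k, j⟩ hk]
  · simp [t, zmat, bord]
  · simp [t, zmat, bord]

lemma Spt.mono {s t : Finset (Idx 𝒜 I)} (hst : s ⊆ t) {φ : EE 𝒜 I →₀ R} (hs : Spt s φ) : Spt t φ :=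
  fun g hg => hs g fun h => hg (hst h)

lemma zmat_mono (h : Ctx 𝒜 I p) {s t : Finset (Idx 𝒜 I)} (hst : s ⊆ t) {γ : Γ}
    {φ : EE 𝒜 I →₀ R} (hφ : φ ∈ FF 𝒜 I γ) (hs : Spt s φ) :
    Mem I (zmat t φ) ↔ Mem I (zmat s φ) := by
  have key : ∀ u : Finset (Idx 𝒜 I), Mem I (zmat (u ∪ s) φ) ↔ Mem I (zmat s φ) := by
    intro u
    induction u using Finset.induction_on with
    | empty => rw [Finset.empty_union]
    | insert k u hk ih =>
      rw [Finset.insert_union]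
      by_cases hks : k ∈ u ∪ s
      · rw [Finset.insert_eq_of_mem hks, ih]
      · rw [zmat_insert h hks hφ (hs.mono Finset.subset_union_right), ih]
  rw [← key t, Finset.union_eq_left.2 hst]

/-- the zero relation for homogeneous elements -/
def ZZ (φ : EE 𝒜 I →₀ R) : Prop := Mem I (zmat (spt φ) φ)

lemma ZZ_iff (h : Ctx 𝒜 I p) {s : Finset (Idx 𝒜 I)} {γ : Γ}
    {φ : EE 𝒜 I →₀ R} (hφ : φ ∈ FF 𝒜 I γ) (hs : Spt s φ) : ZZ φ ↔ Mem I (zmat s φ) := by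
  rw [ZZ, ← zmat_mono h (Finset.subset_union_left (s₂ := s)) hφ (spt_spt φ),
    zmat_mono h (Finset.subset_union_right (s₁ := spt φ)) hφ hs]

lemma ZZ_add (h : Ctx 𝒜 I p) {γ : Γ} {φ ψ : EE 𝒜 I →₀ R} (hφ : φ ∈ FF 𝒜 I γ) (hψ : ψ ∈ FF 𝒜 I γ)
    (zφ : ZZ φ) (zψ : ZZ ψ) : ZZ (φ + ψ) := by
  have h1 := (spt_spt φ).mono (Finset.subset_union_left (s₂ := spt ψ))
  have h2 := (spt_spt ψ).mono (Finset.subset_union_right (s₁ := spt φ))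
  have h3 : Spt (spt φ ∪ spt ψ) (φ + ψ) := fun g hg => by
    rw [Finsupp.add_apply, h1 g hg, h2 g hg, add_zero]
  rw [ZZ_iff h hφ h1] at zφ
  rw [ZZ_iff h hψ h2] at zψ
  rw [ZZ_iff h (AddSubgroup.add_mem _ hφ hψ) h3]
  refine h.prm.adm.rowSum h.prm.dc (hg_zmat _ hφ) (hg_zmat _ hψ) zφ zψ (c := Sum.inr ()) ⟨?_, ?_⟩
  · rintro (i | i) j hi
    · rcases j with j | j <;> simp [zmat, bord]
    · exact absurd rfl hi
  · rintro (j | j) <;> simp [zmat, bord]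

lemma ZZ_smul (h : Ctx 𝒜 I p) {δ γ : Γ} {φ : EE 𝒜 I →₀ R} (hφ : φ ∈ FF 𝒜 I γ) {b : R}
    (hb : b ∈ 𝒜 δ) (zφ : ZZ φ) : ZZ (b • φ) := by
  have h3 : Spt (spt φ) (b • φ) := fun g hg => by
    rw [Finsupp.smul_apply, spt_spt φ g hg, smul_zero]
  rw [ZZ_iff h (h.smul_mem hb hφ) h3]
  have hU : Hg 𝒜 (fromBlocks (1 : Matrix (JJ (spt φ)) (JJ (spt φ)) R) 0 0
      (Matrix.of fun _ _ : Unit => b))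
      (Sum.elim (fun g => g.1.1.α g.1.2) fun _ => δ * γ)
      (Sum.elim (fun g => g.1.1.α g.1.2) fun _ => γ) :=
    Hg.blocks (Hg.one h.ax) Hg.zero Hg.zero fun _ _ => by simpa using hb
  convert (h.prm.mul_iff h.ax ⟨Equiv.refl _⟩ ⟨Equiv.refl _⟩ hU (hg_zmat _ hφ)).2 (Or.inr zφ) using 1
  rw [zmat, bord, zmat, bord, fromBlocks_multiply]
  ext (i | i) (j | j) <;> simp [Matrix.mul_apply]

lemma zmat_row (h : Ctx 𝒜 I p) {ι : Type*} [Fintype ι] {A : Matrix ι ι R} {α β : ι → Γ}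
    (hA : Hg 𝒜 A α β) {x : ι → R} (hx : ∀ i, x i ∈ 𝒜 (α i)) (i : ι) :
    Mem I (bord A x (A i) (- x i)) := by
  have hY : Hg 𝒜 (fromCols A (Matrix.of fun i (_ : Unit) => - x i)) α
      (Sum.elim β fun _ => 1) := by
    rintro i (j | j)
    · exact hA i j
    · simpa using hx i
  have hX : Hg 𝒜 (fromRows (1 : Matrix ι ι R) (Matrix.of fun (_ : Unit) j => (1 : Matrix ι ι R) i j))
      (Sum.elim α fun _ => α i) α := by
    rintro (j | j) l
    · exact Hg.one h.ax j l
    · exact Hg.one h.ax i l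
  refine h.prm.adm.nonfull h.ax ⟨Equiv.refl _⟩ hX hY ?_ ?_
  · simp
  · rw [fromRows_mul]
    ext (k | k) (j | j) <;> simp [bord, Matrix.mul_apply, Matrix.one_apply]

lemma ZZ_zero (h : Ctx 𝒜 I p) : ZZ (0 : EE 𝒜 I →₀ R) := by
  have h0 : (0 : EE 𝒜 I →₀ R) ∈ FF 𝒜 I 1 := AddSubgroup.zero_mem _
  rw [ZZ_iff (s := ∅) h h0 (fun g _ => rfl)]
  have : IsEmpty (JJ (∅ : Finset (Idx 𝒜 I))) := ⟨fun g => by simpa using g.2⟩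
  refine h.prm.adm.nonfull (τ := Empty) h.ax ⟨Equiv.refl _⟩ (X := 0) (Y := 0)
    (α := fun _ => 1) (lam := fun _ => 1) (β := fun _ => 1) Hg.zero Hg.zero ?_ ?_
  · simp
  · ext (i | i) (j | j)
    · exact isEmptyElim i
    · exact isEmptyElim i
    · exact isEmptyElim j
    · simp [zmat, bord]

end Modl

end GrW

namespace GrW

section Quot

open scoped Classical

variable {Γ : Type u} [Group Γ] {R : Type v} [Ring R]
variable {𝒜 : Γ → AddSubgroup R} {I : Set (SqMat R)} {p : Γ → R →+ R}

/-- submodule of elements all of whose components are zero -/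
def NN (h : Ctx 𝒜 I p) : Submodule R (EE 𝒜 I →₀ R) where
  carrier := {φ | ∀ γ, ZZ (comp p γ φ)}
  add_mem' := by
    intro a b ha hb γ
    rw [map_add]
    exact ZZ_add h (h.comp_mem γ a) (h.comp_mem γ b) (ha γ) (hb γ)
  zero_mem' := by
    intro γ
    rw [map_zero]
    exact ZZ_zero h
  smul_mem' := by
    intro r φ hφ
    refine h.gen (fun r => ∀ γ, ZZ (comp p γ (r • φ))) ?_ ?_ r
    · intro δ b hb γ
      have := h.comp_smul hb (δ⁻¹ * γ) φ
      rw [mul_inv_cancel_left] at this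
      rw [this]
      exact ZZ_smul h (h.comp_mem _ φ) hb (hφ _)
    · intro a b ha hb γ
      rw [add_smul, map_add]
      exact ZZ_add h (h.comp_mem _ _) (h.comp_mem _ _) (ha γ) (hb γ)

lemma mem_NN (h : Ctx 𝒜 I p) {φ : EE 𝒜 I →₀ R} : φ ∈ NN h ↔ ∀ γ, ZZ (comp p γ φ) := Iff.rfl

lemma mem_NN_iff (h : Ctx 𝒜 I p) {γ : Γ} {φ : EE 𝒜 I →₀ R} (hφ : φ ∈ FF 𝒜 I γ) :
    φ ∈ NN h ↔ ZZ φ := by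
  rw [mem_NN]
  constructor
  · intro H
    have := H γ
    rwa [h.comp_same hφ] at this
  · intro H δ
    by_cases hd : δ = γ
    · subst hd
      rwa [h.comp_same hφ]
    · rw [h.comp_ne hφ hd]
      exact ZZ_zero h

abbrev VV (h : Ctx 𝒜 I p) := (EE 𝒜 I →₀ R) ⧸ NN h

noncomputable def mk (h : Ctx 𝒜 I p) : (EE 𝒜 I →₀ R) →ₗ[R] VV h := (NN h).mkQ

lemma mk_surj (h : Ctx 𝒜 I p) (v : VV h) : ∃ φ, mk h φ = v := (NN h).mkQ_surjective v

lemma mk_eq_zero (h : Ctx 𝒜 I p) {φ : EE 𝒜 I →₀ R} : mk h φ = 0 ↔ φ ∈ NN h := by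
  simp [mk]

/-- degree `γ` part -/
noncomputable def Vg (h : Ctx 𝒜 I p) (γ : Γ) : AddSubgroup (VV h) := (FF 𝒜 I γ).map (mk h).toAddMonoidHom

lemma mem_Vg {h : Ctx 𝒜 I p} {γ : Γ} {v : VV h} : v ∈ Vg h γ ↔ ∃ φ ∈ FF 𝒜 I γ, mk h φ = v := Iff.rfl

lemma comp_NN (h : Ctx 𝒜 I p) {φ : EE 𝒜 I →₀ R} (hφ : φ ∈ NN h) (γ : Γ) : comp p γ φ ∈ NN h :=
  (mem_NN_iff h (h.comp_mem γ φ)).2 (hφ γ)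

/-- projections on the quotient -/
noncomputable def pr (h : Ctx 𝒜 I p) (γ : Γ) : VV h →+ VV h :=
  QuotientAddGroup.lift (NN h).toAddSubgroup ((mk h).toAddMonoidHom.comp (comp p γ)) (by
    intro φ hφ
    exact (mk_eq_zero h).2 (comp_NN h hφ γ))

lemma pr_mk (h : Ctx 𝒜 I p) (γ : Γ) (φ : EE 𝒜 I →₀ R) : pr h γ (mk h φ) = mk h (comp p γ φ) := rfl

lemma pr_mem (h : Ctx 𝒜 I p) (γ : Γ) (v : VV h) : pr h γ v ∈ Vg h γ := by
  obtain ⟨φ, rfl⟩ := mk_surj h v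
  exact ⟨_, h.comp_mem γ φ, rfl⟩

lemma pr_same {h : Ctx 𝒜 I p} {γ : Γ} {v : VV h} (hv : v ∈ Vg h γ) : pr h γ v = v := by
  obtain ⟨φ, hφ, rfl⟩ := mem_Vg.1 hv
  rw [pr_mk, h.comp_same hφ]

lemma pr_ne {h : Ctx 𝒜 I p} {γ δ : Γ} {v : VV h} (hv : v ∈ Vg h γ) (hd : δ ≠ γ) :
    pr h δ v = 0 := by
  obtain ⟨φ, hφ, rfl⟩ := mem_Vg.1 hv
  rw [pr_mk, h.comp_ne hφ hd, map_zero]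

lemma pr_smul {h : Ctx 𝒜 I p} {δ : Γ} {b : R} (hb : b ∈ 𝒜 δ) (γ : Γ) (v : VV h) :
    pr h (δ * γ) (b • v) = b • pr h γ v := by
  obtain ⟨φ, rfl⟩ := mk_surj h v
  rw [← map_smul, pr_mk, pr_mk, h.comp_smul hb, map_smul]

lemma Vg_smul {h : Ctx 𝒜 I p} {δ γ : Γ} {b : R} (hb : b ∈ 𝒜 δ) {v : VV h} (hv : v ∈ Vg h γ) :
    b • v ∈ Vg h (δ * γ) := by
  obtain ⟨φ, hφ, rfl⟩ := mem_Vg.1 hv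
  exact ⟨b • φ, h.smul_mem hb hφ, (mk h).map_smul b φ⟩

lemma VV_gen (h : Ctx 𝒜 I p) (C : VV h → Prop) (h0 : C 0) (h1 : ∀ γ v, v ∈ Vg h γ → C v)
    (h2 : ∀ a b, C a → C b → C (a + b)) (v : VV h) : C v := by
  obtain ⟨φ, rfl⟩ := mk_surj h v
  induction φ using Finsupp.induction_linear with
  | zero => rw [map_zero]; exact h0
  | add f g hf hg => rw [map_add]; exact h2 _ _ hf hg
  | single g r =>
    refine h.gen (fun r => C (mk h (Finsupp.single g r))) ?_ ?_ r
    · intro δ r hr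
      refine h1 (δ * deg g) _ ⟨_, fun g' => ?_, rfl⟩
      rw [Finsupp.single_apply]
      split_ifs with hg
      · subst hg; simpa using hr
      · exact AddSubgroup.zero_mem _
    · intro a b ha hb
      rw [Finsupp.single_add, map_add]
      exact h2 _ _ ha hb

/-- an element with all projections zero vanishes -/
lemma eq_zero_of_pr (h : Ctx 𝒜 I p) {v : VV h} (hv : ∀ γ, pr h γ v = 0) : v = 0 := by
  have key : ∃ s : Finset Γ, ∀ t, s ⊆ t → v = ∑ γ ∈ t, pr h γ v := by
    refine VV_gen h (fun v => ∃ s : Finset Γ, ∀ t, s ⊆ t → v = ∑ γ ∈ t, pr h γ v) ?_ ?_ ?_ v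
    · exact ⟨∅, fun t _ => by simp⟩
    · intro γ v hv
      refine ⟨{γ}, fun t ht => ?_⟩
      rw [Finset.sum_eq_single γ, pr_same hv]
      · intro δ _ hd
        exact pr_ne hv hd
      · intro hn
        exact absurd (ht (Finset.mem_singleton_self _)) hn
    · rintro a b ⟨s, hs⟩ ⟨s', hs'⟩
      refine ⟨s ∪ s', fun t ht => ?_⟩
      simp only [map_add, Finset.sum_add_distrib]
      rw [← hs t (Finset.union_subset_left ht), ← hs' t (Finset.union_subset_right ht)]
  obtain ⟨s, hs⟩ := key
  rw [hs s subset_rfl]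
  exact Finset.sum_eq_zero fun γ _ => hv γ

noncomputable def on (h : Ctx 𝒜 I p) : VV h := mk h (Finsupp.single none 1)

/-- generic element -/
noncomputable def lin (s : Finset (Idx 𝒜 I)) (f : JJ s → R) (c : R) : EE 𝒜 I →₀ R :=
  (∑ j : JJ s, Finsupp.single (some j.1) (f j)) + Finsupp.single none c

lemma lin_none (s : Finset (Idx 𝒜 I)) (f : JJ s → R) (c : R) : lin s f c none = c := by
  simp [lin, Finsupp.finsetSum_apply]

lemma lin_some (s : Finset (Idx 𝒜 I)) (f : JJ s → R) (c : R) (j : JJ s) :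
    lin s f c (some j.1) = f j := by
  simp only [lin, Finsupp.add_apply, Finsupp.finsetSum_apply]
  rw [Finset.sum_eq_single j]
  · simp
  · intro b _ hb
    rw [Finsupp.single_apply, if_neg]
    intro h
    exact hb (Subtype.ext (Option.some_injective _ h))
  · simp

lemma lin_spt (s : Finset (Idx 𝒜 I)) (f : JJ s → R) (c : R) : Spt s (lin s f c) := by
  intro g hg
  simp only [lin, Finsupp.add_apply, Finsupp.finsetSum_apply]
  rw [Finset.sum_eq_zero]
  · simp
  · intro b _
    rw [Finsupp.single_apply, if_neg]
    intro h
    exact hg ((Option.some_injective _ h) ▸ b.2)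

lemma lin_eq (s : Finset (Idx 𝒜 I)) (φ : EE 𝒜 I →₀ R) (hφ : Spt s φ) :
    lin s (fun j => φ (some j.1)) (φ none) = φ := by
  ext (_ | g)
  · rw [lin_none]
  · by_cases hg : g.1 ∈ s
    · exact lin_some s _ _ ⟨g, hg⟩
    · rw [hφ g hg, lin_spt _ _ _ g hg]

lemma lin_mem (s : Finset (Idx 𝒜 I)) {f : JJ s → R} {c : R} {γ : Γ}
    (hf : ∀ j : JJ s, f j ∈ 𝒜 (γ * (j.1.1.β j.1.2)⁻¹)) (hc : c ∈ 𝒜 γ) : lin s f c ∈ FF 𝒜 I γ := by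
  rintro (_ | g)
  · rw [lin_none]; simpa [deg] using hc
  · by_cases hg : g.1 ∈ s
    · rw [lin_some s _ _ ⟨g, hg⟩]
      exact hf ⟨g, hg⟩
    · rw [lin_spt _ _ _ g hg]
      exact AddSubgroup.zero_mem _

lemma mk_lin (h : Ctx 𝒜 I p) (s : Finset (Idx 𝒜 I)) (f : JJ s → R) (c : R) :
    mk h (lin s f c) = (∑ j, f j • mk h (Finsupp.single (some j.1) 1)) + c • on h := by
  simp only [lin, map_add, map_sum, on, ← map_smul, Finsupp.smul_single, smul_eq_mul, mul_one]

structure Sol (h : Ctx 𝒜 I p) {ι : Type*} [Fintype ι] (A : Matrix ι ι R) (α β : ι → Γ) (x : ι → R)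
    (w : ι → VV h) : Prop where
  hA : Hg 𝒜 A α β
  hx : ∀ i, x i ∈ 𝒜 (α i)
  hn : ¬ Mem I A
  mem : ∀ j, w j ∈ Vg h (β j)
  iff : ∀ {γ : Γ} {f : ι → R} {c : R}, (∀ j, f j ∈ 𝒜 (γ * (β j)⁻¹)) → c ∈ 𝒜 γ →
    (Mem I (bord A x f c) ↔ ∑ j, f j • w j + c • on h = 0)

lemma Sol.eq {h : Ctx 𝒜 I p} {ι : Type*} [Fintype ι] {A : Matrix ι ι R} {α β : ι → Γ} {x : ι → R}
    {w : ι → VV h} (S : Sol h A α β x w) (i : ι) : ∑ j, A i j • w j = x i • on h := by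
  have := (S.iff (fun j => S.hA i j) (AddSubgroup.neg_mem _ (S.hx i))).1 (zmat_row h S.hA S.hx i)
  rw [neg_smul] at this
  exact add_neg_eq_zero.1 this

lemma on_mem (h : Ctx 𝒜 I p) : on h ∈ Vg h 1 := by
  refine ⟨_, fun g' => ?_, rfl⟩
  rw [Finsupp.single_apply]
  split_ifs with hg
  · subst hg; simpa [deg] using h.ax.one
  · exact AddSubgroup.zero_mem _

lemma single_one_mem (h : Ctx 𝒜 I p) : (Finsupp.single none 1 : EE 𝒜 I →₀ R) ∈ FF 𝒜 I 1 := by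
  intro g'
  rw [Finsupp.single_apply]
  split_ifs with hg
  · subst hg; simpa [deg] using h.ax.one
  · exact AddSubgroup.zero_mem _

lemma not_ZZ_one (h : Ctx 𝒜 I p) : ¬ ZZ (Finsupp.single none 1 : EE 𝒜 I →₀ R) := by
  rw [ZZ_iff (s := ∅) h (single_one_mem h) (fun g _ => by simp)]
  have : IsEmpty (JJ (∅ : Finset (Idx 𝒜 I))) := ⟨fun g => by simpa using g.2⟩
  have h1 := h.prm.not_one h.ax (ι := JJ (∅ : Finset (Idx 𝒜 I)) ⊕ Unit)
  convert h1 using 2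
  ext (i | i) (j | j)
  · exact isEmptyElim i
  · exact isEmptyElim i
  · exact isEmptyElim j
  · simp [zmat, bord]

lemma on_ne (h : Ctx 𝒜 I p) : on h ≠ 0 := by
  rw [on, Ne, mk_eq_zero, mem_NN_iff h (single_one_mem h)]
  exact not_ZZ_one h

lemma not_mem_As (h : Ctx 𝒜 I p) (s : Finset (Idx 𝒜 I)) : ¬ Mem I (As s) := by
  intro hs
  refine not_ZZ_one h ?_
  rw [ZZ_iff (s := s) h (single_one_mem h) (fun g _ => by simp)]
  have hD : Hg 𝒜 (Matrix.of fun _ _ : Unit => (1 : R)) (fun _ => 1) (fun _ => 1) :=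
    fun _ _ => by simpa using h.ax.one
  have hC : Hg 𝒜 (Matrix.of fun (g : JJ s) (_ : Unit) => - g.1.1.x g.1.2)
      (fun g => g.1.1.α g.1.2) (fun _ => 1) := fun g _ => by simpa using g.1.1.hx g.1.2
  have := (h.prm.tri h.ax ⟨Equiv.refl _⟩ ⟨Equiv.refl _⟩ (hg_As s) hC hD).2 (Or.inl hs)
  convert this using 1
  ext (i | i) (j | j) <;> simp [zmat, bord]

lemma sol_As (h : Ctx 𝒜 I p) (s : Finset (Idx 𝒜 I)) :
    Sol h (As s) (fun g => g.1.1.α g.1.2) (fun g => g.1.1.β g.1.2) (fun g => g.1.1.x g.1.2)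
      (fun g => mk h (Finsupp.single (some g.1) 1)) where
  hA := hg_As s
  hx g := g.1.1.hx g.1.2
  hn := not_mem_As h s
  mem g := by
    refine ⟨_, fun g' => ?_, rfl⟩
    rw [Finsupp.single_apply]
    split_ifs with hg
    · subst hg; simpa [deg] using h.ax.one
    · exact AddSubgroup.zero_mem _
  iff {γ f c} hf hc := by
    have hl := lin_mem s hf hc
    rw [← mk_lin, mk_eq_zero, mem_NN_iff h hl, ZZ_iff h hl (lin_spt s f c), zmat, lin_none]
    simp only [lin_some]

lemma Sol.reindex {h : Ctx 𝒜 I p} {ι ι' : Type*} [Fintype ι] [Fintype ι'] {A : Matrix ι ι R}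
    {α β : ι → Γ} {x : ι → R}
    {w : ι → VV h} (S : Sol h A α β x w) (e : ι' ≃ ι) :
    Sol h (A.submatrix e e) (α ∘ e) (β ∘ e) (x ∘ e) (w ∘ e) where
  hA := S.hA.submatrix _ _
  hx i := S.hx _
  hn := by rw [mem_reindex_iff]; exact S.hn
  mem i := S.mem _
  iff {γ f c} hf hc := by
    have := S.iff (f := f ∘ e.symm) (fun j => by simpa using hf (e.symm j)) hc
    rw [← mem_reindex_iff (e.sumCongr (Equiv.refl _)) (e.sumCongr (Equiv.refl _)),
      ← Equiv.sum_comp e] at this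
    simp only [Function.comp_apply, Equiv.symm_apply_apply] at this ⊢
    rw [← this]
    convert Iff.rfl using 2
    ext (i | i) (j | j) <;> simp [bord]

/-- existence of solutions -/
lemma exists_sol (h : Ctx 𝒜 I p) {ι : Type*} [Fintype ι] {A : Matrix ι ι R} {α β : ι → Γ}
    (hA : Hg 𝒜 A α β) (hn : ¬ Mem I A) {x : ι → R} (hx : ∀ i, x i ∈ 𝒜 (α i)) :
    ∃ w, Sol h A α β x w := by
  have e := (Fintype.equivFin ι).symm
  let k : Idx 𝒜 I := ⟨_, A.submatrix e e, α ∘ e, β ∘ e, x ∘ e, hA.submatrix _ _, fun i => hx _,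
    by rwa [mem_reindex_iff]⟩
  let t : ι ≃ JJ {k} := Equiv.ofBijective (fun i => ⟨⟨k, e.symm i⟩, Finset.mem_singleton_self _⟩) (by
    constructor
    · intro i j hij
      simpa using hij
    · rintro ⟨⟨l, j⟩, hl⟩
      obtain rfl : l = k := by simpa using hl
      refine ⟨e j, ?_⟩
      simp)
  have ht : ∀ i, t i = ⟨⟨k, e.symm i⟩, Finset.mem_singleton_self _⟩ := fun i => rfl
  have S := (sol_As h {k}).reindex t
  refine ⟨(fun g : JJ {k} => mk h (Finsupp.single (some g.1) 1)) ∘ t, ?_⟩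
  convert S using 1
  · ext i j
    simp [ht, As, k]
  · ext i; show α i = α (e (e.symm i)); rw [Equiv.apply_symm_apply]
  · ext i; show β i = β (e (e.symm i)); rw [Equiv.apply_symm_apply]
  · ext i; show x i = x (e (e.symm i)); rw [Equiv.apply_symm_apply]

/-- common presentation of finitely many homogeneous elements -/
lemma exists_pres (h : Ctx 𝒜 I p) {T : Type*} [Finite T] (γ : T → Γ) (v : T → VV h)
    (hv : ∀ t, v t ∈ Vg h (γ t)) :
    ∃ (ι : Type (max u v)) (_ : Fintype ι) (A : Matrix ι ι R) (α β : ι → Γ) (x : ι → R)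
      (w : ι → VV h) (f : Matrix T ι R) (c : T → R), Sol h A α β x w ∧
      Hg 𝒜 f γ β ∧ (∀ t, c t ∈ 𝒜 (γ t)) ∧ ∀ t, v t = ∑ j, f t j • w j + c t • on h := by
  have := Fintype.ofFinite T
  choose φ hφ hv using fun t => mem_Vg.1 (hv t)
  let s : Finset (Idx 𝒜 I) := Finset.univ.biUnion fun t => spt (φ t)
  have hs : ∀ t, Spt s (φ t) := fun t => (spt_spt (φ t)).mono
    (Finset.subset_biUnion_of_mem (fun t => spt (φ t)) (Finset.mem_univ t))
  refine ⟨JJ s, inferInstance, _, _, _, _, _, Matrix.of fun t j => φ t (some j.1),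
    fun t => φ t none, sol_As h s, fun t j => hφ t (some j.1), fun t => by simpa [deg] using hφ t none,
    fun t => ?_⟩
  rw [← hv t, ← lin_eq s (φ t) (hs t), mk_lin]
  rfl

end Quot

end GrW

namespace GrW

section Act

open scoped Classical

variable {Γ : Type u} [Group Γ] {R : Type v} [Ring R]
variable {𝒜 : Γ → AddSubgroup R} {I : Set (SqMat R)} {p : Γ → R →+ R}

/-- row expansion step -/
lemma rows_step (hI : Prm 𝒜 I) (hax : GrAx 𝒜) {ι m n κ : Type*} [Fintype ι] [Fintype m] [Fintype n]
    [Fintype κ]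
    (q : Nonempty (ι ⊕ Unit ≃ κ)) (q' : Nonempty (m ≃ Unit ⊕ n))
    {L : Matrix ι κ R} {Y : Matrix m κ R} {G : Matrix m n R} {α μ κ' ν}
    (hL : Hg 𝒜 L α κ') (hY : Hg 𝒜 Y μ κ') (hG : Hg 𝒜 G μ ν) (i : m)
    (hi : Mem I (fromRows L (Matrix.of fun (_ : Unit) j => Y i j))) (h0 : ∀ j, G i j = 0) :
    Mem I (fromBlocks L 0 Y G) := by
  let ui : Unit ≃ {k // k = i} := ⟨fun _ => ⟨i, rfl⟩, fun _ => (), fun _ => rfl, fun k => Subtype.ext k.2.symm⟩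
  let e : m ≃ Unit ⊕ {k // ¬ k = i} := (Equiv.sumCompl (fun k => k = i)).symm.trans
    (Equiv.sumCongr ui.symm (Equiv.refl _))
  have q2 : Nonempty ({k // ¬ k = i} ≃ n) := by
    obtain ⟨q'⟩ := q'
    have h1 := Fintype.card_congr (e.symm.trans q')
    simp only [Fintype.card_sum] at h1
    exact ⟨Fintype.equivOfCardEq (by omega)⟩
  let t : (ι ⊕ Unit) ⊕ {k // ¬ k = i} ≃ ι ⊕ m := (Equiv.sumAssoc _ _ _).trans
    (Equiv.sumCongr (Equiv.refl _) e.symm)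
  rw [← mem_reindex_iff t (Equiv.refl _)]
  have hA : Hg 𝒜 (fromRows L (Matrix.of fun (_ : Unit) j => Y i j)) (Sum.elim α fun _ => μ i) κ' := by
    rintro (k | k) j
    · exact hL k j
    · exact hY i j
  have := (hI.triL hax q q2 (D := Matrix.of fun (k : {k // ¬ k = i}) j => G k.1 j)
    (C := Matrix.of fun (k : {k // ¬ k = i}) j => Y k.1 j)
    hA (fun k j => hY k.1 j) (fun k j => hG k.1 j)).2 (Or.inl hi)
  convert this using 1
  ext ((k | k) | k) (j | j)
  · simp [t]
  · simp [t]
  · simp [t, e, ui]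
  · simp [t, e, ui, h0]
  · simp [t, e, ui]
  · simp [t, e, ui]

lemma rows_mem (hI : Prm 𝒜 I) (hax : GrAx 𝒜) {ι m n κ : Type*} [Fintype ι] [Fintype m] [Fintype n]
    [Fintype κ]
    (q : Nonempty (ι ⊕ Unit ≃ κ)) (q' : Nonempty (m ≃ Unit ⊕ n))
    {L : Matrix ι κ R} {Y : Matrix m κ R} {G : Matrix m n R} {α μ κ' ν}
    (hL : Hg 𝒜 L α κ') (hY : Hg 𝒜 Y μ κ') (hG : Hg 𝒜 G μ ν)
    (hi : ∀ i, Mem I (fromRows L (Matrix.of fun (_ : Unit) j => Y i j))) :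
    Mem I (fromBlocks L 0 Y G) := by
  have q3 : Nonempty (ι ⊕ m ≃ κ ⊕ n) := by
    obtain ⟨q⟩ := q
    obtain ⟨q'⟩ := q'
    exact ⟨(Equiv.sumCongr (Equiv.refl _) q').trans ((Equiv.sumAssoc _ _ _).symm.trans
      (Equiv.sumCongr q (Equiv.refl _)))⟩
  have hYs : ∀ s : Finset m, Hg 𝒜 (Matrix.of fun i j => if i ∈ s then Y i j else 0) μ κ' := by
    intro s i j
    simp only [Matrix.of_apply]
    split_ifs
    · exact hY i j
    · exact AddSubgroup.zero_mem _
  have key : ∀ s : Finset m, Mem I (fromBlocks L 0 (Matrix.of fun i j => if i ∈ s then Y i j else 0) G) := by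
    intro s
    induction s using Finset.induction_on with
    | empty =>
      refine hI.adm.nonfull hax q3 (X := fromBlocks 1 0 0 G) (Y := fromBlocks L 0 0 1)
        (Hg.blocks (Hg.one hax) Hg.zero Hg.zero hG) (Hg.blocks hL Hg.zero Hg.zero (Hg.one hax)) ?_ ?_
      · obtain ⟨q'⟩ := q'
        have h1 := Fintype.card_congr q'
        simp only [Fintype.card_sum, Fintype.card_unit, Nat.card_eq_fintype_card] at h1 ⊢
        omega
      · rw [fromBlocks_multiply]
        ext (i | i) (j | j) <;> simp
    | insert i s his ih =>
      have hG' : Hg 𝒜 (Matrix.of fun k j => if k = i then 0 else G k j) μ ν := by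
        intro k j
        simp only [Matrix.of_apply]
        split_ifs
        · exact AddSubgroup.zero_mem _
        · exact hG k j
      have h2 := rows_step hI hax q q' hL (hYs (insert i s)) hG' i (by simpa using hi i) (by simp)
      have hg2 := Hg.blocks hL (Hg.zero (R := R) (β := ν)) (hYs (insert i s)) hG'
      have hg1 := Hg.blocks hL (Hg.zero (R := R) (β := ν)) (hYs s) hG
      refine hI.adm.rowSum hI.dc hg1 hg2 ih h2 (c := Sum.inr i) ⟨?_, ?_⟩
      · rintro (k | k) (j | j) hk
        · simp
        · simp
        · have : k ≠ i := fun h => hk (by rw [h])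
          simp [this]
        · have : k ≠ i := fun h => hk (by rw [h])
          simp [this]
      · rintro (j | j) <;> simp [his]
  have := key Finset.univ
  simp only [Finset.mem_univ, if_true] at this
  exact this

/-- homogeneous injectivity -/
lemma inj_hom (h : Ctx 𝒜 I p) {n : Type*} [Fintype n] {B : Matrix n n R} {a b : n → Γ}
    (hB : Hg 𝒜 B a b) (hn : ¬ Mem I B) {v : n → VV h} (hv : ∀ j, v j ∈ Vg h (b j))
    (h0 : ∀ i, ∑ j, B i j • v j = 0) : v = 0 := by
  obtain ⟨ι, _, A, α, β, x, w, f, c, S, hf, hc, hvv⟩ := exists_pres h b v hv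
  funext j
  let L : Matrix ι (ι ⊕ Unit) R := fromCols A (Matrix.of fun i _ => - x i)
  let V : Matrix n (ι ⊕ Unit) R := fromCols f (Matrix.of fun t _ => c t)
  have hL : Hg 𝒜 L α (Sum.elim β fun _ => 1) := by
    rintro i (k | k)
    · exact S.hA i k
    · simpa [L] using S.hx i
  have hV : Hg 𝒜 V b (Sum.elim β fun _ => 1) := by
    rintro i (k | k)
    · exact hf i k
    · simpa [V] using hc i
  let E : Matrix Unit n R := Matrix.of fun _ k => (1 : Matrix n n R) j k
  have hE : Hg 𝒜 E (fun _ => b j) b := fun _ k => Hg.one h.ax j k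
  have hBV := (hB.mul h.ax hV).neg
  let Y : Matrix (n ⊕ Unit) (ι ⊕ Unit) R := fromRows (-(B * V)) 0
  let G : Matrix (n ⊕ Unit) n R := fromRows B E
  have hY : Hg 𝒜 Y (Sum.elim a fun _ => b j) (Sum.elim β fun _ => 1) := by
    rintro (i | i) k
    · exact hBV i k
    · exact AddSubgroup.zero_mem _
  have hG : Hg 𝒜 G (Sum.elim a fun _ => b j) b := by
    rintro (i | i) k
    · exact hB i k
    · exact hE i k
  have h1 : Mem I (fromBlocks L 0 Y G) := by
    refine rows_mem h.prm h.ax ⟨Equiv.refl _⟩ ⟨Equiv.sumComm _ _⟩ hL hY hG ?_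
    rintro (i | i)
    · have : Mem I (bord A x (fun k => (-(B * V)) i (Sum.inl k)) ((-(B * V)) i (Sum.inr ()))) := by
        rw [S.iff (γ := a i) (fun k => hBV i (Sum.inl k)) (by simpa using hBV i (Sum.inr ()))]
        have := h0 i
        simp only [hvv, smul_add, Finset.sum_add_distrib, Finset.smul_sum, smul_smul] at this
        rw [Finset.sum_comm] at this
        simp only [Matrix.neg_apply, Matrix.mul_apply, neg_smul, Finset.sum_neg_distrib,
          Finset.sum_smul, V, fromCols_apply_inl, fromCols_apply_inr, Matrix.of_apply]
        rw [← neg_add, this, neg_zero]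
      convert this using 1
      ext (k | k) (l | l) <;> simp [L, Y, bord]
    · have : Mem I (bord A x (fun _ => 0) 0) := by
        rw [S.iff (γ := 1) (fun k => AddSubgroup.zero_mem _) (AddSubgroup.zero_mem _)]
        simp
      convert this using 1
      ext (k | k) (l | l) <;> simp [L, Y, bord]
  -- factorisation
  let M2 : Matrix (ι ⊕ (n ⊕ Unit)) ((ι ⊕ Unit) ⊕ n) R :=
    fromBlocks L 0 (fromRows 0 (Matrix.of fun (_ : Unit) k => V j k)) G
  let U : Matrix ((ι ⊕ Unit) ⊕ n) ((ι ⊕ Unit) ⊕ n) R := fromBlocks 1 0 (-V) 1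
  have hM2 : Hg 𝒜 M2
      (Sum.elim α (Sum.elim a fun _ => b j)) (Sum.elim (Sum.elim β fun _ => 1) b) := by
    refine Hg.blocks hL Hg.zero ?_ hG
    rintro (i | i) k
    · exact AddSubgroup.zero_mem _
    · exact hV j k
  have hU : Hg 𝒜 U (Sum.elim (Sum.elim β fun _ => 1) b)
      (Sum.elim (Sum.elim β fun _ => 1) b) := Hg.blocks (Hg.one h.ax) Hg.zero hV.neg (Hg.one h.ax)
  have hqq : Nonempty (ι ⊕ (n ⊕ Unit) ≃ (ι ⊕ Unit) ⊕ n) :=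
    ⟨(Equiv.sumCongr (Equiv.refl _) (Equiv.sumComm _ _)).trans (Equiv.sumAssoc _ _ _).symm⟩
  have hfac : fromBlocks L 0 Y G = M2 * U := by
    simp only [M2, U]
    rw [fromBlocks_multiply]
    ext (i | i | i) (k | k) <;> simp [Y, G, E, Matrix.mul_apply, Matrix.one_apply]
  rw [hfac, h.prm.mul_iff h.ax hqq ⟨Equiv.refl _⟩ hM2 hU] at h1
  have hU1 : ¬ Mem I U := by
    simp only [U]
    rw [h.prm.triL h.ax ⟨Equiv.refl _⟩ ⟨Equiv.refl _⟩ (Hg.one h.ax) hV.neg (Hg.one h.ax)]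
    have h1 := h.prm.not_one h.ax (ι := ι ⊕ Unit)
    have h2 := h.prm.not_one h.ax (ι := n)
    tauto
  have h1 := h1.resolve_right hU1
  let t : (ι ⊕ Unit) ⊕ n ≃ ι ⊕ (n ⊕ Unit) :=
    (Equiv.sumAssoc _ _ _).trans (Equiv.sumCongr (Equiv.refl _) (Equiv.sumComm _ _))
  rw [← mem_reindex_iff t (Equiv.refl _)] at h1
  have hbo : Hg 𝒜 (bord A x (f j) (c j)) (Sum.elim α fun _ => b j) (Sum.elim β fun _ => 1) :=
    S.hA.bord S.hx (hf j) (hc j)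
  have hC : Hg 𝒜 (fromRows 0 E : Matrix (ι ⊕ Unit) n R) (Sum.elim α fun _ => b j) b := by
    rintro (i | i) k
    · exact AddSubgroup.zero_mem _
    · exact hE i k
  have h2 := h.prm.tri h.ax ⟨Equiv.refl _⟩ ⟨Equiv.refl _⟩ hbo hC hB
  have h3 : Mem I (fromBlocks (bord A x (f j) (c j)) (fromRows 0 E) 0 B) := by
    convert h1 using 1
    ext ((i | i) | i) ((k | k) | k) <;> simp [M2, t, L, V, G, bord]
  have h4 := (h2.1 h3).resolve_right hn
  rw [S.iff (hf j) (hc j), ← hvv] at h4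
  exact h4

lemma inj_all (h : Ctx 𝒜 I p) {n : Type*} [Fintype n] {B : Matrix n n R} {a b : n → Γ}
    (hB : Hg 𝒜 B a b) (hn : ¬ Mem I B) {v : n → VV h}
    (h0 : ∀ i, ∑ j, B i j • v j = 0) : v = 0 := by
  have key : ∀ γ j, pr h (b j * γ) (v j) = 0 := by
    intro γ
    refine congrFun (inj_hom h (hB.shift γ) hn (v := fun j => pr h (b j * γ) (v j))
      (fun j => pr_mem h _ _) fun i => ?_)
    have := congrArg (pr h (a i * γ)) (h0 i)
    rw [map_sum, map_zero] at this
    rw [← this]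
    refine Finset.sum_congr rfl fun j _ => ?_
    rw [← pr_smul (hB i j)]
    congr 2
    group
  funext j
  refine eq_zero_of_pr h fun γ => ?_
  have := key ((b j)⁻¹ * γ) j
  rwa [mul_inv_cancel_left] at this

lemma inj_all' (h : Ctx 𝒜 I p) {n : Type*} [Fintype n] {B : Matrix n n R} {a b : n → Γ}
    (hB : Hg 𝒜 B a b) (hn : ¬ Mem I B) {v v' : n → VV h}
    (h0 : ∀ i, ∑ j, B i j • v j = ∑ j, B i j • v' j) : v = v' := by
  refine sub_eq_zero.1 (inj_all h hB hn fun i => ?_)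
  simp only [Pi.sub_apply, smul_sub, Finset.sum_sub_distrib, h0, sub_self]

/-- homogeneous surjectivity -/
lemma surj_hom (h : Ctx 𝒜 I p) {n : Type*} [Fintype n] {B : Matrix n n R} {a b : n → Γ}
    (hB : Hg 𝒜 B a b) (hn : ¬ Mem I B) {z : n → VV h} (hz : ∀ j, z j ∈ Vg h (a j)) :
    ∃ v : n → VV h, (∀ j, v j ∈ Vg h (b j)) ∧ ∀ i, ∑ j, B i j • v j = z i := by
  obtain ⟨ι, _, A, α, β, x, w, f, c, S, hf, hc, hvv⟩ := exists_pres h a z hz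
  have hA' := Hg.blocks hB hf.neg Hg.zero S.hA
  have hn' : ¬ Mem I (fromBlocks B (-f) 0 A) := by
    rw [h.prm.tri h.ax ⟨Equiv.refl _⟩ ⟨Equiv.refl _⟩ hB hf.neg S.hA]
    have := S.hn
    tauto
  obtain ⟨y, T⟩ := exists_sol h hA' hn' (x := Sum.elim c x) (by
    rintro (i | i)
    · exact hc i
    · exact S.hx i)
  have e1 : (fun j => y (Sum.inr j)) = w := by
    refine inj_all' h S.hA S.hn fun i => ?_
    have := T.eq (Sum.inr i)
    simp only [Fintype.sum_sum_type, fromBlocks_apply₂₁, fromBlocks_apply₂₂, Matrix.zero_apply,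
      zero_smul, Finset.sum_const_zero, zero_add, Sum.elim_inr] at this
    rw [this, S.eq]
  refine ⟨fun j => y (Sum.inl j), fun j => T.mem (Sum.inl j), fun i => ?_⟩
  have := T.eq (Sum.inl i)
  simp only [Fintype.sum_sum_type, fromBlocks_apply₁₁, fromBlocks_apply₁₂, Sum.elim_inl,
    Matrix.neg_apply, neg_smul, Finset.sum_neg_distrib] at this
  rw [hvv, ← this, ← e1, add_comm, neg_add_cancel_right]

lemma surj_all (h : Ctx 𝒜 I p) {n : Type*} [Fintype n] {B : Matrix n n R} {a b : n → Γ}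
    (hB : Hg 𝒜 B a b) (hn : ¬ Mem I B) (z : n → VV h) :
    ∃ v : n → VV h, ∀ i, ∑ j, B i j • v j = z i := by
  let C : (n → VV h) → Prop := fun z => ∃ v : n → VV h, ∀ i, ∑ j, B i j • v j = z i
  have hC0 : C 0 := ⟨0, by simp⟩
  have hCa : ∀ z z', C z → C z' → C (z + z') := by
    rintro z z' ⟨v, hv⟩ ⟨v', hv'⟩
    exact ⟨v + v', fun i => by
      simp only [Pi.add_apply, smul_add, Finset.sum_add_distrib, hv, hv']⟩
  have h1 : ∀ i t, C (Pi.single i t) := by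
    intro i t
    refine VV_gen h (fun t => C (Pi.single i t)) ?_ ?_ ?_ t
    · rw [Pi.single_zero]; exact hC0
    · intro γ t ht
      obtain ⟨v, _, hv⟩ := surj_hom h (hB.shift ((a i)⁻¹ * γ)) hn (z := Pi.single i t) (by
        intro j
        by_cases hj : j = i
        · subst hj
          simpa using ht
        · simp [hj])
      exact ⟨v, hv⟩
    · intro s t hs ht
      rw [Pi.single_add]
      exact hCa _ _ hs ht
  have h2 : z = ∑ i, Pi.single i (z i) := (Finset.univ_sum_single z).symm
  change C z
  rw [h2]
  exact Finset.sum_induction _ C hCa hC0 fun i _ => h1 i _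

/-- relations at `on` propagate to every element -/
lemma rel_hom (h : Ctx 𝒜 I p) {ι : Type*} [Fintype ι] {A : Matrix ι ι R} {α β : ι → Γ} {x : ι → R}
    {w : ι → VV h} (S : Sol h A α β x w) {γ : Γ} {f : ι → R} {c : R}
    (hf : ∀ j, f j ∈ 𝒜 (γ * (β j)⁻¹)) (hc : c ∈ 𝒜 γ) (h0 : ∑ j, f j • w j + c • on h = 0)
    {δ : Γ} {v : VV h} (hv : v ∈ Vg h δ) {w' : ι → VV h} (hw' : ∀ i, ∑ j, A i j • w' j = x i • v) :
    ∑ j, f j • w' j + c • v = 0 := by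
  obtain ⟨τ, _, B, α', β', y, t, g, d, S', hg, hd, hvv⟩ :=
    exists_pres h (T := Unit) (fun _ => δ) (fun _ => v) (fun _ => hv)
  replace hvv := hvv ()
  replace hd := hd ()
  have hA2 := S.hA.shift δ
  have hXg : Hg 𝒜 (Matrix.of fun i j => - (x i * g () j)) (fun i => α i * δ) β' := by
    intro i j
    simp only [Matrix.of_apply]
    refine AddSubgroup.neg_mem _ ?_
    have := h.ax.mul (S.hx i) (hg () j)
    rwa [← mul_assoc] at this
  have hA' := Hg.blocks hA2 hXg Hg.zero S'.hA
  have hn' : ¬ Mem I (fromBlocks A (Matrix.of fun i j => - (x i * g () j)) 0 B) := by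
    rw [h.prm.tri h.ax ⟨Equiv.refl _⟩ ⟨Equiv.refl _⟩ hA2 hXg S'.hA]
    have := S.hn
    have := S'.hn
    tauto
  obtain ⟨z, T⟩ := exists_sol h hA' hn' (x := Sum.elim (fun i => x i * d ()) y) (by
    rintro (i | i)
    · exact h.ax.mul (S.hx i) hd
    · exact S'.hx i)
  have e1 : (fun j => z (Sum.inr j)) = t := by
    refine inj_all' h S'.hA S'.hn fun i => ?_
    have := T.eq (Sum.inr i)
    simp only [Fintype.sum_sum_type, fromBlocks_apply₂₁, fromBlocks_apply₂₂, Matrix.zero_apply,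
      zero_smul, Finset.sum_const_zero, zero_add, Sum.elim_inr] at this
    rw [this, S'.eq]
  have e2 : (fun j => z (Sum.inl j)) = w' := by
    refine inj_all' h S.hA S.hn fun i => ?_
    have := T.eq (Sum.inl i)
    simp only [Fintype.sum_sum_type, fromBlocks_apply₁₁, fromBlocks_apply₁₂, Sum.elim_inl,
      Matrix.of_apply, neg_smul, Finset.sum_neg_distrib] at this
    rw [hw', hvv, smul_add, Finset.smul_sum, smul_smul, ← this, ← e1]
    simp only [smul_smul]
    abel
  have hcg : ∀ j, c * g () j ∈ 𝒜 (γ * δ * (β' j)⁻¹) := fun j => by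
    have := h.ax.mul hc (hg () j)
    rwa [← mul_assoc] at this
  have key : Mem I (bord (fromBlocks A (Matrix.of fun i j => - (x i * g () j)) 0 B)
      (Sum.elim (fun i => x i * d ()) y) (Sum.elim f fun j => c * g () j) (c * d ())) := by
    have hb := (S.iff hf hc).2 h0
    have hbH := (S.hA.bord S.hx hf hc).shift δ
    let F1 : Matrix ((ι ⊕ τ) ⊕ Unit) ((ι ⊕ Unit) ⊕ τ) R :=
      fromBlocks (fromBlocks A (Matrix.of fun i _ => - x i) 0 0) (fromRows 0 1)
        (fromCols (Matrix.of fun _ j => f j) (Matrix.of fun _ _ => c)) 0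
    let F2 : Matrix ((ι ⊕ Unit) ⊕ τ) ((ι ⊕ τ) ⊕ Unit) R :=
      fromBlocks (fromBlocks 1 0 0 g) (fromRows 0 (Matrix.of fun _ _ => d ()))
        (fromCols 0 B) (Matrix.of fun i _ => - y i)
    have hq : Nonempty ((ι ⊕ τ) ⊕ Unit ≃ (ι ⊕ Unit) ⊕ τ) := ⟨(Equiv.sumAssoc _ _ _).trans ((Equiv.sumCongr (Equiv.refl _) (Equiv.sumComm _ _)).trans (Equiv.sumAssoc _ _ _).symm)⟩
    have hF1 : Hg 𝒜 F1 (Sum.elim (Sum.elim (fun i => α i * δ) α') fun _ => γ * δ)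
        (Sum.elim (Sum.elim (fun i => β i * δ) fun _ => δ) α') := by
      refine Hg.blocks (Hg.blocks hA2 (fun i _ => ?_) Hg.zero Hg.zero) ?_ ?_ Hg.zero
      · simpa using S.hx i
      · rintro (i | i) k
        · exact AddSubgroup.zero_mem _
        · exact Hg.one h.ax i k
      · rintro i (k | k)
        · simpa [mul_assoc] using hf k
        · simpa using hc
    have hF2 : Hg 𝒜 F2 (Sum.elim (Sum.elim (fun i => β i * δ) fun _ => δ) α')
        (Sum.elim (Sum.elim (fun i => β i * δ) β') fun _ => 1) := by
      refine Hg.blocks (Hg.blocks (Hg.one h.ax) Hg.zero Hg.zero hg) ?_ ?_ fun i _ => ?_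
      · rintro (i | i) k
        · exact AddSubgroup.zero_mem _
        · simpa using hd
      · rintro i (k | k)
        · exact AddSubgroup.zero_mem _
        · exact S'.hA i k
      · simpa using S'.hx i
    have hF1m : Mem I F1 := by
      let t : (ι ⊕ Unit) ⊕ τ ≃ (ι ⊕ τ) ⊕ Unit := (Equiv.sumAssoc _ _ _).trans
        ((Equiv.sumCongr (Equiv.refl _) (Equiv.sumComm _ _)).trans (Equiv.sumAssoc _ _ _).symm)
      rw [← mem_reindex_iff t (Equiv.refl _)]
      have := h.prm.adm.blocks hb ⟨Equiv.refl τ⟩ (B := 1) (Hg.one h.ax (α := α'))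
      convert this using 1
      ext ((i | i) | i) ((k | k) | k) <;> simp [t, F1, bord]
    have := (h.prm.mul_iff h.ax hq ⟨hq.some.symm⟩ hF1 hF2).2 (Or.inl hF1m)
    convert this using 1
    simp only [F1, F2]
    rw [fromBlocks_multiply]
    ext ((i | i) | i) ((k | k) | k) <;> simp [bord, Matrix.mul_apply, Matrix.one_apply]
  have := (T.iff (γ := γ * δ) (f := Sum.elim f fun j => c * g () j) (c := c * d ()) (by
    rintro (j | j)
    · simpa [mul_assoc] using hf j
    · exact hcg j) (h.ax.mul hc hd)).1 key
  simp only [Fintype.sum_sum_type, Sum.elim_inl, Sum.elim_inr] at this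
  rw [hvv, smul_add, Finset.smul_sum, smul_smul, ← this, ← e2, ← e1]
  simp only [smul_smul]
  abel

end Act

end GrW

namespace GrW

section Endo

open scoped Classical

variable {Γ : Type u} [Group Γ] {R : Type v} [Ring R]
variable {𝒜 : Γ → AddSubgroup R} {I : Set (SqMat R)} {p : Γ → R →+ R}

lemma rel_all (h : Ctx 𝒜 I p) {ι : Type*} [Fintype ι] {A : Matrix ι ι R} {α β : ι → Γ} {x : ι → R}
    {w : ι → VV h} (S : Sol h A α β x w) {γ : Γ} {f : ι → R} {c : R}
    (hf : ∀ j, f j ∈ 𝒜 (γ * (β j)⁻¹)) (hc : c ∈ 𝒜 γ) (h0 : ∑ j, f j • w j + c • on h = 0)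
    (v : VV h) (w' : ι → VV h) (hw' : ∀ i, ∑ j, A i j • w' j = x i • v) :
    ∑ j, f j • w' j + c • v = 0 := by
  let C : VV h → Prop := fun v => ∀ w' : ι → VV h, (∀ i, ∑ j, A i j • w' j = x i • v) →
    ∑ j, f j • w' j + c • v = 0
  suffices hC : C v from hC w' hw'
  refine VV_gen h C ?_ ?_ ?_ v
  · intro w' hw'
    have : w' = 0 := inj_all h S.hA S.hn fun i => by rw [hw', smul_zero]
    simp [this]
  · intro δ v hv w' hw'
    exact rel_hom h S hf hc h0 hv hw'
  · intro a b ha hb w' hw'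
    obtain ⟨wa, hwa⟩ := surj_all h S.hA S.hn (fun i => x i • a)
    obtain ⟨wb, hwb⟩ := surj_all h S.hA S.hn (fun i => x i • b)
    have : w' = wa + wb := inj_all' h S.hA S.hn fun i => by
      simp only [hw', Pi.add_apply, smul_add, Finset.sum_add_distrib, hwa, hwb]
    have h1 := ha wa hwa
    have h2 := hb wb hwb
    rw [this]
    simp only [Pi.add_apply, smul_add, Finset.sum_add_distrib]
    rw [add_add_add_comm, h1, h2, add_zero]

/-- values on generators -/
noncomputable def gv (h : Ctx 𝒜 I p) (v : VV h) : EE 𝒜 I → VV h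
  | none => v
  | some g => Classical.choose (surj_all h g.1.hA g.1.hn (fun i => g.1.x i • v)) g.2

lemma gv_eq (h : Ctx 𝒜 I p) (v : VV h) (k : Idx 𝒜 I) (i : Fin k.n) :
    ∑ j, k.A i j • gv h v (some ⟨k, j⟩) = k.x i • v :=
  Classical.choose_spec (surj_all h k.hA k.hn (fun i => k.x i • v)) i

lemma gv_As (h : Ctx 𝒜 I p) (v : VV h) (s : Finset (Idx 𝒜 I)) (g : JJ s) :
    ∑ j, As s g j • gv h v (some j.1) = g.1.1.x g.1.2 • v := by
  obtain ⟨⟨k, i⟩, hk⟩ := g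
  rw [← gv_eq h v k i]
  symm
  refine Fintype.sum_of_injective (fun j : Fin k.n => (⟨⟨k, j⟩, hk⟩ : JJ s)) ?_ _ _ ?_ ?_
  · intro a b hab
    simpa using hab
  · rintro ⟨⟨l, j⟩, hl⟩ hj
    by_cases hkl : k = l
    · subst hkl
      exact absurd ⟨j, rfl⟩ hj
    · simp [As, AA_ne, hkl]
  · intro j
    simp [As]

lemma comp_decomp (h : Ctx 𝒜 I p) (φ : EE 𝒜 I →₀ R) :
    ∃ s : Finset Γ, ∀ t, s ⊆ t → φ = ∑ γ ∈ t, comp p γ φ := by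
  induction φ using Finsupp.induction_linear with
  | zero => exact ⟨∅, fun t _ => by simp⟩
  | add f g hf hg =>
    obtain ⟨s, hs⟩ := hf
    obtain ⟨s', hs'⟩ := hg
    refine ⟨s ∪ s', fun t ht => ?_⟩
    simp only [map_add, Finset.sum_add_distrib]
    rw [← hs t (Finset.union_subset_left ht), ← hs' t (Finset.union_subset_right ht)]
  | single g r =>
    refine h.gen (fun r => ∃ s : Finset Γ, ∀ t, s ⊆ t →
      Finsupp.single g r = ∑ γ ∈ t, comp p γ (Finsupp.single g r)) ?_ ?_ r
    · intro δ r hr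
      have hm : Finsupp.single g r ∈ FF 𝒜 I (δ * deg g) := by
        intro g'
        rw [Finsupp.single_apply]
        split_ifs with hg
        · subst hg; simpa using hr
        · exact AddSubgroup.zero_mem _
      refine ⟨{δ * deg g}, fun t ht => ?_⟩
      rw [Finset.sum_eq_single (δ * deg g), h.comp_same hm]
      · intro ε _ hd
        exact h.comp_ne hm hd
      · intro hn
        exact absurd (ht (Finset.mem_singleton_self _)) hn
    · rintro a b ⟨s, hs⟩ ⟨s', hs'⟩
      refine ⟨s ∪ s', fun t ht => ?_⟩
      simp only [Finsupp.single_add, map_add, Finset.sum_add_distrib]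
      rw [← hs t (Finset.union_subset_left ht), ← hs' t (Finset.union_subset_right ht)]

noncomputable def gl (h : Ctx 𝒜 I p) (v : VV h) : (EE 𝒜 I →₀ R) →ₗ[R] VV h :=
  Finsupp.linearCombination R (gv h v)

lemma gl_lin (h : Ctx 𝒜 I p) (v : VV h) (s : Finset (Idx 𝒜 I)) (f : JJ s → R) (c : R) :
    gl h v (lin s f c) = (∑ j, f j • gv h v (some j.1)) + c • v := by
  simp [gl, lin, map_add, map_sum, gv]

lemma gl_NN (h : Ctx 𝒜 I p) (v : VV h) : NN h ≤ LinearMap.ker (gl h v) := by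
  intro φ hφ
  rw [LinearMap.mem_ker]
  obtain ⟨s, hs⟩ := comp_decomp h φ
  rw [hs s subset_rfl, map_sum]
  refine Finset.sum_eq_zero fun γ _ => ?_
  have hm := h.comp_mem γ φ
  have hz := comp_NN h hφ γ
  generalize comp p γ φ = ψ at hm hz
  have hl := lin_eq _ ψ (spt_spt ψ)
  rw [← mk_eq_zero, ← hl, mk_lin] at hz
  rw [← hl, gl_lin]
  exact rel_all h (sol_As h (spt ψ)) (γ := γ) (fun j => hm (some j.1)) (by simpa [deg] using hm none)
    hz v _ (gv_As h v _)

/-- the endomorphism sending `on` to `v` -/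
noncomputable def rho (h : Ctx 𝒜 I p) (v : VV h) : VV h →ₗ[R] VV h :=
  (NN h).liftQ (gl h v) (gl_NN h v)

lemma rho_on (h : Ctx 𝒜 I p) (v : VV h) : rho h v (on h) = v := by
  change gl h v (Finsupp.single none 1) = v
  simp [gl, gv]

lemma end_ext (h : Ctx 𝒜 I p) {θ η : VV h →ₗ[R] VV h} (he : θ (on h) = η (on h)) : θ = η := by
  refine LinearMap.ext fun v => ?_
  refine VV_gen h (fun v => θ v = η v) (by simp) ?_ ?_ v
  · intro γ v hv
    obtain ⟨ι, _, A, α, β, x, w, f, c, S, hf, hc, hvv⟩ :=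
      exists_pres h (T := Unit) (fun _ => γ) (fun _ => v) (fun _ => hv)
    have hw : (fun j => θ (w j)) = fun j => η (w j) := inj_all' h S.hA S.hn fun i => by
      simp only [← map_smul, ← map_sum, S.eq]
      rw [map_smul, map_smul, he]
    rw [hvv ()]
    simp only [map_add, map_sum, map_smul, he, congrFun hw _]
  · intro a b ha hb
    rw [map_add, map_add, ha, hb]

/-- degrees add -/
lemma end_deg (h : Ctx 𝒜 I p) {η : VV h →ₗ[R] VV h} {γ δ : Γ} (he : η (on h) ∈ Vg h δ) {v : VV h}
    (hv : v ∈ Vg h γ) : η v ∈ Vg h (γ * δ) := by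
  obtain ⟨ι, _, A, α, β, x, w, f, c, S, hf, hc, hvv⟩ :=
    exists_pres h (T := Unit) (fun _ => γ) (fun _ => v) (fun _ => hv)
  obtain ⟨w', hw', e⟩ := surj_hom h (S.hA.shift δ) S.hn (z := fun i => x i • η (on h))
    (fun i => Vg_smul (S.hx i) he)
  have hw : (fun j => η (w j)) = w' := inj_all' h S.hA S.hn fun i => by
    rw [e]
    simp only [← map_smul, ← map_sum, S.eq]
  rw [hvv ()]
  simp only [map_add, map_sum, map_smul]
  refine AddSubgroup.add_mem _ (AddSubgroup.sum_mem _ fun j _ => ?_) (Vg_smul (hc ()) he)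
  have h1 := Vg_smul (hf () j) (hw' j)
  rw [← hw] at h1
  simpa [mul_assoc] using h1

/-- inverses -/
lemma end_inv (h : Ctx 𝒜 I p) {t : VV h} {γ : Γ} (ht : t ∈ Vg h γ) (h0 : t ≠ 0) :
    ∃ s ∈ Vg h γ⁻¹, rho h s t = on h := by
  obtain ⟨ι, _, A, α, β, x, w, f, c, S, hf, hc, hvv⟩ :=
    exists_pres h (T := Unit) (fun _ => γ) (fun _ => t) (fun _ => ht)
  replace hvv := hvv ()
  have hM : ¬ Mem I (bord A x (f ()) (c ())) := by
    rw [S.iff (fun j => hf () j) (hc ()), ← hvv]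
    exact h0
  have hMH := ((S.hA.bord S.hx (fun j => hf () j) (hc ())).shift γ⁻¹)
  obtain ⟨z, hz, e⟩ := surj_hom h hMH hM (z := Sum.elim (fun _ => 0) (fun _ => on h)) (by
    rintro (j | j)
    · exact AddSubgroup.zero_mem _
    · simpa using on_mem h)
  refine ⟨z (Sum.inr ()), by simpa using hz (Sum.inr ()), ?_⟩
  have hw : (fun j => rho h (z (Sum.inr ())) (w j)) = fun j => z (Sum.inl j) :=
    inj_all' h S.hA S.hn fun i => by
      have := e (Sum.inl i)
      simp only [← map_smul, ← map_sum, S.eq]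
      rw [map_smul, rho_on]
      simp only [bord, Fintype.sum_sum_type, fromBlocks_apply₁₁, fromBlocks_apply₁₂, Matrix.of_apply,
        Sum.elim_inl, neg_smul, Finset.univ_unique, Finset.sum_singleton] at this
      exact (add_neg_eq_zero.1 this).symm
  have := e (Sum.inr ())
  simp only [bord, Fintype.sum_sum_type, fromBlocks_apply₂₁, fromBlocks_apply₂₂, Matrix.of_apply,
    Sum.elim_inr, Finset.univ_unique, Finset.sum_singleton] at this
  rw [hvv]
  simp only [map_add, map_sum, map_smul, rho_on, congrFun hw _]
  exact this

lemma sum_null {M : Type*} [AddCommGroup M] [Module R M] {n r : ℕ} (q : Fin n → R)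
    (f : Fin r → Fin n) (w : Fin r → M) (c : Fin n) (o : M) :
    ∑ j, q j • ((∑ k, if f k = j then w k else 0) + if j = c then o else 0) =
      ∑ k, q (f k) • w k + q c • o := by
  simp only [smul_add, Finset.sum_add_distrib, Finset.smul_sum, smul_ite, smul_zero]
  rw [Finset.sum_comm]
  simp

lemma exists_null (h : Ctx 𝒜 I p) {n : ℕ} {Q : Matrix (Fin n) (Fin n) R} {α β} (hQ : Hg 𝒜 Q α β)
    (hm : Mem I Q) : ∃ v : Fin n → VV h, v ≠ 0 ∧ ∀ i, ∑ j, Q i j • v j = 0 := by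
  -- a maximal minor outside of `I`
  obtain ⟨r, e, f, he, hf, hn, hmax⟩ : ∃ (r : ℕ) (e f : Fin r → Fin n), Function.Injective e ∧
      Function.Injective f ∧ ¬ Mem I (Q.submatrix e f) ∧ ∀ e' f' : Fin r ⊕ Unit → Fin n,
      Function.Injective e' → Function.Injective f' → Mem I (Q.submatrix e' f') := by
    by_contra hcon
    push Not at hcon
    have key : ∀ r : ℕ, ∃ (e f : Fin r → Fin n), Function.Injective e ∧
      Function.Injective f ∧ ¬ Mem I (Q.submatrix e f) := by
      intro r
      induction r with
      | zero =>
        refine ⟨Fin.elim0, Fin.elim0, fun i => i.elim0, fun i => i.elim0, ?_⟩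
        have := h.prm.not_one h.ax (ι := Fin 0)
        rwa [Subsingleton.elim (1 : Matrix (Fin 0) (Fin 0) R) (Q.submatrix Fin.elim0 Fin.elim0)] at this
      | succ r ih =>
        obtain ⟨e, f, he, hf, hn⟩ := ih
        obtain ⟨e', f', he', hf', hn'⟩ := hcon r e f he hf hn
        have t : Fin (r + 1) ≃ Fin r ⊕ Unit := Fintype.equivOfCardEq (by simp)
        refine ⟨e' ∘ t, f' ∘ t, he'.comp t.injective, hf'.comp t.injective, ?_⟩
        rw [← Matrix.submatrix_submatrix, mem_reindex_iff]
        exact hn'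
    obtain ⟨e, -, he, -⟩ := key (n + 1)
    have := Fintype.card_le_of_injective e he
    simp at this
  obtain ⟨c, hc⟩ : ∃ c, ∀ k, f k ≠ c := by
    by_contra hcon
    push Not at hcon
    have hfb : Function.Bijective f := ⟨hf, hcon⟩
    have hcard : r = n := by simpa using Fintype.card_congr (Equiv.ofBijective f hfb)
    have heb : Function.Bijective e := (Fintype.bijective_iff_injective_and_card e).2 ⟨he, by simpa⟩
    refine hn ?_
    have := hm.reindex (Equiv.ofBijective e heb) (Equiv.ofBijective f hfb)
    exact this
  have hA := (hQ.submatrix e f).shift (β c)⁻¹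
  obtain ⟨w, S⟩ := exists_sol h hA hn (x := fun i => - Q (e i) c)
    (fun i => AddSubgroup.neg_mem _ (hQ (e i) c))
  have key : ∀ i, ∑ k, Q i (f k) • w k + Q i c • on h = 0 := by
    intro i
    by_cases hi : ∃ k, e k = i
    · obtain ⟨k, rfl⟩ := hi
      have := S.eq k
      rw [neg_smul] at this
      exact eq_neg_iff_add_eq_zero.1 this
    · push Not at hi
      refine (S.iff (γ := α i * (β c)⁻¹) (fun j => ?_) (hQ i c)).1 ?_
      · simpa using hQ i (f j)
      · have := hmax (Sum.elim e fun _ => i) (Sum.elim f fun _ => c)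
          (he.sumElim (fun _ _ _ => rfl) fun k _ => hi k)
          (hf.sumElim (fun _ _ _ => rfl) fun k _ => hc k)
        convert this using 1
        ext (k | k) (l | l) <;> simp [bord]
  refine ⟨fun j => (∑ k, if f k = j then w k else 0) + if j = c then on h else 0, ?_, fun i => ?_⟩
  · intro h0
    have := congrFun h0 c
    simp only [hc, if_false, Finset.sum_const_zero, if_true, zero_add] at this
    exact on_ne h this
  · exact (sum_null (fun j => Q i j) f w c (on h)).trans (key i)

end Endo

end GrW

namespace GrW

section Internal

variable {Γ : Type u} [DecidableEq Γ]

lemma isInternal_of {M N : Type*} [AddCommGroup M] [AddCommGroup N] (G : Γ → AddSubgroup M)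
    (j : M →+ N) (hj : Function.Injective j) (q : Γ → M →+ N)
    (same : ∀ γ x, x ∈ G γ → q γ x = j x) (ne : ∀ γ δ x, x ∈ G γ → δ ≠ γ → q δ x = 0)
    (gen : ∀ C : M → Prop, C 0 → (∀ γ x, x ∈ G γ → C x) → (∀ a b, C a → C b → C (a + b)) → ∀ x, C x) :
    DirectSum.IsInternal G := by
  have key : ∀ (x : DirectSum Γ fun γ => G γ) (γ : Γ),
      q γ (DirectSum.coeAddMonoidHom G x) = j (x γ : M) := by
    intro x γ
    induction x using DirectSum.induction_on with
    | zero => simp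
    | of δ x =>
      rw [DirectSum.coeAddMonoidHom_of]
      by_cases hd : γ = δ
      · subst hd
        rw [same _ _ x.2, DirectSum.of_eq_same]
      · rw [ne _ _ _ x.2 hd, DirectSum.of_eq_of_ne _ _ _ hd]
        simp
    | add x y hx hy => simp only [map_add, hx, hy, DirectSum.add_apply, AddSubgroup.coe_add]
  constructor
  · rw [injective_iff_map_eq_zero]
    intro x hx
    ext γ
    refine hj ?_
    rw [← key x γ, hx]
    simp
  · refine gen (fun y => ∃ x, DirectSum.coeAddMonoidHom G x = y) ⟨0, map_zero _⟩ ?_ ?_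
    · intro γ x hx
      exact ⟨DirectSum.of (fun γ => G γ) γ ⟨x, hx⟩, DirectSum.coeAddMonoidHom_of _ _ _⟩
    · rintro _ _ ⟨a, rfl⟩ ⟨b, rfl⟩
      exact ⟨a + b, map_add _ _ _⟩

lemma exists_proj {R : Type v} [Ring R] (𝒜 : Γ → AddSubgroup R) (hi : DirectSum.IsInternal 𝒜) :
    ∃ p : Γ → R →+ R, (∀ γ r, p γ r ∈ 𝒜 γ) ∧ (∀ {γ : Γ} {r : R}, r ∈ 𝒜 γ → p γ r = r) ∧
      (∀ {γ δ : Γ} {r : R}, r ∈ 𝒜 γ → δ ≠ γ → p δ r = 0) ∧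
      ∀ (C : R → Prop), (∀ γ r, r ∈ 𝒜 γ → C r) → (∀ a b, C a → C b → C (a + b)) →
        [Nonempty Γ] → ∀ r, C r := by
  let e : (DirectSum Γ fun γ => 𝒜 γ) ≃+ R := AddEquiv.ofBijective (DirectSum.coeAddMonoidHom 𝒜) hi
  have he : ∀ γ (x : 𝒜 γ), e.symm (x : R) = DirectSum.of (fun γ => 𝒜 γ) γ x := by
    intro γ x
    rw [AddEquiv.symm_apply_eq]
    exact (DirectSum.coeAddMonoidHom_of _ _ _).symm
  refine ⟨fun γ => AddMonoidHom.mk' (fun r => ((e.symm r γ : 𝒜 γ) : R)) (by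
    intro a b; simp [DirectSum.add_apply]), ?_, ?_, ?_, ?_⟩
  · intro γ r
    exact (e.symm r γ).2
  · intro γ r hr
    have := he γ ⟨r, hr⟩
    simp only at this
    simp [this]
  · intro γ δ r hr hd
    have := he γ ⟨r, hr⟩
    simp only at this
    simp [this, DirectSum.of_eq_of_ne _ _ _ hd]
  · intro C h1 h2 hne r
    obtain ⟨x, rfl⟩ := hi.2 r
    induction x using DirectSum.induction_on with
    | zero => rw [map_zero]; exact h1 hne.some 0 (AddSubgroup.zero_mem _)
    | of δ x => rw [DirectSum.coeAddMonoidHom_of]; exact h1 _ _ x.2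
    | add x y hx hy => rw [map_add]; exact h2 _ _ hx hy

end Internal

section KK

variable {Γ : Type u} [Group Γ] {R : Type v} [Ring R]
variable {𝒜 : Γ → AddSubgroup R} {I : Set (SqMat R)} {p : Γ → R →+ R}

/-- the graded division ring -/
abbrev KK (h : Ctx 𝒜 I p) := (Module.End R (VV h))ᵐᵒᵖ

noncomputable def ev (h : Ctx 𝒜 I p) : KK h →+ VV h :=
  AddMonoidHom.mk' (fun θ => θ.unop (on h)) (by intro a b; simp)

lemma ev_inj (h : Ctx 𝒜 I p) : Function.Injective (ev h) := by
  intro a b hab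
  exact MulOpposite.unop_injective (end_ext h hab)

noncomputable def rr (h : Ctx 𝒜 I p) (v : VV h) : KK h := MulOpposite.op (rho h v)

lemma ev_rr (h : Ctx 𝒜 I p) (v : VV h) : ev h (rr h v) = v := rho_on h v

lemma ev_mul (h : Ctx 𝒜 I p) (a b : KK h) : ev h (a * b) = b.unop (ev h a) := rfl

lemma ev_one (h : Ctx 𝒜 I p) : ev h 1 = on h := rfl

noncomputable def KG (h : Ctx 𝒜 I p) (γ : Γ) : AddSubgroup (KK h) := (Vg h γ).comap (ev h)

lemma mem_KG {h : Ctx 𝒜 I p} {γ : Γ} {a : KK h} : a ∈ KG h γ ↔ ev h a ∈ Vg h γ := Iff.rfl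

noncomputable def ph (h : Ctx 𝒜 I p) : R →+* KK h where
  toFun r := rr h (r • on h)
  map_one' := ev_inj h (by rw [ev_rr, ev_one, one_smul])
  map_mul' r s := ev_inj h (by
    rw [ev_mul, ev_rr, ev_rr, map_smul, mul_smul]
    congr 1
    exact (ev_rr h _).symm)
  map_zero' := ev_inj h (by rw [ev_rr, zero_smul, map_zero])
  map_add' r s := ev_inj h (by rw [map_add, ev_rr, ev_rr, ev_rr, add_smul])

lemma ev_ph_mul (h : Ctx 𝒜 I p) (r : R) (a : KK h) : ev h (ph h r * a) = r • ev h a := by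
  rw [ev_mul]
  have : ev h (ph h r) = r • on h := ev_rr h _
  rw [this, map_smul]
  rfl

lemma KG_right_inv (h : Ctx 𝒜 I p) {γ : Γ} {a : KK h} (ha : a ∈ KG h γ) (h0 : a ≠ 0) :
    ∃ b ∈ KG h γ⁻¹, b ≠ 0 ∧ a * b = 1 := by
  have h1 : ev h a ≠ 0 := fun h2 => h0 (ev_inj h (by rw [h2, map_zero]))
  obtain ⟨s, hs, hst⟩ := end_inv h ha h1
  have hm : a * rr h s = 1 := ev_inj h (by rw [ev_mul, ev_one]; exact hst)
  refine ⟨rr h s, ?_, ?_, hm⟩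
  · rw [mem_KG, ev_rr]; exact hs
  · intro h2
    rw [h2, mul_zero] at hm
    have := congrArg (ev h) hm
    rw [ev_one, map_zero] at this
    exact on_ne h this.symm

lemma KG_isUnit (h : Ctx 𝒜 I p) {γ : Γ} {a : KK h} (ha : a ∈ KG h γ) (h0 : a ≠ 0) : IsUnit a := by
  obtain ⟨b, hb, hb0, hab⟩ := KG_right_inv h ha h0
  obtain ⟨c, -, -, hbc⟩ := KG_right_inv h hb hb0
  have : a = c := left_inv_eq_right_inv hab hbc
  exact ⟨⟨a, b, hab, by rw [this]; exact hbc⟩, rfl⟩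

noncomputable def theHom [DecidableEq Γ] (h : Ctx 𝒜 I p) : GrDivRingHom Γ R 𝒜 where
  K := KK h
  nontrivialK := ⟨1, 0, fun h1 => on_ne h (by rw [← ev_one, h1, map_zero])⟩
  grading := KG h
  internal := by
    refine isInternal_of (KG h) (ev h) (ev_inj h) (fun γ => (pr h γ).comp (ev h)) ?_ ?_ ?_
    · intro γ x hx
      exact pr_same hx
    · intro γ δ x hx hd
      exact pr_ne hx hd
    · intro C h0 h1 h2 x
      have key : ∀ v : VV h, C (rr h v) := by
        intro v
        refine VV_gen h (fun v => C (rr h v)) ?_ ?_ ?_ v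
        · have : rr h 0 = 0 := ev_inj h (by rw [ev_rr, map_zero])
          rw [this]; exact h0
        · intro γ v hv
          refine h1 γ _ ?_
          rw [mem_KG, ev_rr]; exact hv
        · intro a b ha hb
          have : rr h (a + b) = rr h a + rr h b := ev_inj h (by simp only [map_add, ev_rr])
          rw [this]
          exact h2 _ _ ha hb
      have : x = rr h (ev h x) := ev_inj h (by rw [ev_rr])
      rw [this]
      exact key _
  one_mem := on_mem h
  mul_mem := fun {γ δ x y} hx hy => end_deg h (η := y.unop) hy hx
  isUnit_of_ne := KG_isUnit h
  φ := ph h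
  map_mem := fun {γ r} hr => by
    have := Vg_smul hr (on_mem h)
    rw [mul_one] at this
    rw [mem_KG]
    have e : ev h (ph h r) = r • on h := ev_rr h _
    rw [e]; exact this

lemma map_mul_ev (h : Ctx 𝒜 I p) {n : ℕ} (P : Matrix (Fin n) (Fin n) R) {m : Type*}
    (X : Matrix (Fin n) m (KK h)) (i : Fin n) (j : m) :
    ev h ((P.map (ph h) * X) i j) = ∑ k, P i k • ev h (X k j) := by
  rw [Matrix.mul_apply, map_sum]
  exact Finset.sum_congr rfl fun k _ => ev_ph_mul h _ _

lemma unit_of_not_mem (h : Ctx 𝒜 I p) {n : ℕ} {P : Matrix (Fin n) (Fin n) R} {α β}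
    (hP : Hg 𝒜 P α β) (hn : ¬ Mem I P) : IsUnit (P.map (ph h)) := by
  choose v hv using fun j : Fin n =>
    surj_all h hP hn (fun i => ev h ((1 : Matrix (Fin n) (Fin n) (KK h)) i j))
  let X : Matrix (Fin n) (Fin n) (KK h) := Matrix.of fun i j => rr h (v j i)
  have h1 : P.map (ph h) * X = 1 := by
    ext i j : 1
    refine ev_inj h ?_
    rw [map_mul_ev]
    simp only [X, Matrix.of_apply, ev_rr]
    exact hv j i
  have h2 : P.map (ph h) * (X * P.map (ph h)) = P.map (ph h) * 1 := by
    rw [← Matrix.mul_assoc, h1, Matrix.one_mul, Matrix.mul_one]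
  have h3 : X * P.map (ph h) = 1 := by
    ext i j : 1
    refine ev_inj h ?_
    refine congrFun (inj_all' h hP hn (v := fun i => ev h ((X * P.map (ph h)) i j))
      (v' := fun i => ev h ((1 : Matrix (Fin n) (Fin n) (KK h)) i j)) fun i => ?_) i
    rw [← map_mul_ev, ← map_mul_ev, h2]
  exact ⟨⟨_, X, h1, h3⟩, rfl⟩

lemma not_unit_of_mem (h : Ctx 𝒜 I p) {n : ℕ} {Q : Matrix (Fin n) (Fin n) R} {α β}
    (hQ : Hg 𝒜 Q α β) (hm : Mem I Q) : ¬ IsUnit (Q.map (ph h)) := by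
  obtain ⟨v, hv, h0⟩ := exists_null h hQ hm
  rintro ⟨⟨_, Y, h1, h2⟩, rfl : _ = Q.map (ph h)⟩
  let X : Matrix (Fin n) Unit (KK h) := Matrix.of fun i _ => rr h (v i)
  have h3 : Q.map (ph h) * X = 0 := by
    ext i j : 1
    refine ev_inj h ?_
    rw [map_mul_ev]
    simp only [X, Matrix.of_apply, ev_rr, Matrix.zero_apply, map_zero]
    exact h0 i
  have h4 : X = 0 := by
    rw [← Matrix.one_mul X, ← h2, Matrix.mul_assoc, h3, Matrix.mul_zero]
  refine hv ?_
  funext i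
  have := congrArg (ev h) (congrFun (congrFun h4 i) ())
  simpa [X, ev_rr] using this

end KK

theorem backward {Γ : Type u} [Group Γ] [DecidableEq Γ] {R : Type v} [Ring R]
    (𝒜 : Γ → AddSubgroup R) (hi : DirectSum.IsInternal 𝒜) (hax : GrAx 𝒜)
    {np nq : ℕ} (P : Matrix (Fin np) (Fin np) R) (Q : Matrix (Fin nq) (Fin nq) R)
    (hP : IsHomogSq 𝒜 P) (hQ : IsHomogSq 𝒜 Q)
    (H : ∀ (r m : ℕ), 1 ≤ r → ¬ IsDetSumOf 𝒜 (NF 𝒜 ∪ GenP 𝒜 Q)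
      (⟨np * r + m, diagSum (diagIter P r) (1 : Matrix (Fin m) (Fin m) R)⟩ : SqMat R)) :
    ∃ d : GrDivRingHom Γ R 𝒜, IsUnit (P.map ⇑d.φ) ∧ ¬ IsUnit (Q.map ⇑d.φ) := by
  obtain ⟨I, hI, hQI, hPI⟩ := exists_prime hax P Q hP hQ H
  obtain ⟨p, h1, h2, h3, h4⟩ := exists_proj 𝒜 hi
  have h : Ctx 𝒜 I p := ⟨hI, hax, h1, h2, h3, fun C a b => h4 C a b⟩
  obtain ⟨α, β, hP⟩ := hP
  obtain ⟨α', β', hQ⟩ := hQ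
  exact ⟨theHom h, unit_of_not_mem h hP (fun hm => hPI ((hI.adm.mem_iff).1 hm)),
    not_unit_of_mem h hQ (Mem.of_mem hQI)⟩

end GrW

namespace GrW

section Fwd

variable {Γ : Type u} [Group Γ] {K : Type w} [Ring K]

/-- graded division rings -/
structure GD (𝒦 : Γ → AddSubgroup K) : Prop where
  ax : GrAx 𝒦
  nt : (1 : K) ≠ 0
  inv : ∀ {γ : Γ} {a : K}, a ∈ 𝒦 γ → a ≠ 0 → ∃ b ∈ 𝒦 γ⁻¹, a * b = 1 ∧ b * a = 1

variable {𝒦 : Γ → AddSubgroup K}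

lemma hsum {ι : Type*} (s : Finset ι) {f : ι → K} {γ : Γ} (hf : ∀ i ∈ s, f i ∈ 𝒦 γ) :
    ∑ i ∈ s, f i ∈ 𝒦 γ := AddSubgroup.sum_mem _ hf

lemma exists_hnull (h : GD 𝒦) (r : ℕ) : ∀ {κ : Type} [Fintype κ] [DecidableEq κ]
    (A : Matrix (Fin r) κ K) (α : Fin r → Γ) (β : κ → Γ), Hg 𝒦 A α β → r < Fintype.card κ →
    ∃ (γ : Γ) (v : κ → K), v ≠ 0 ∧ (∀ j, v j ∈ 𝒦 (β j * γ)) ∧ ∀ i, ∑ j, A i j * v j = 0 := by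
  induction r with
  | zero =>
    intro κ _ _ A α β hA hr
    obtain ⟨c⟩ := Fintype.card_pos_iff.1 hr
    refine ⟨(β c)⁻¹, Pi.single c 1, ?_, ?_, fun i => i.elim0⟩
    · intro h0
      have := congrFun h0 c
      simp only [Pi.single_eq_same, Pi.zero_apply] at this
      exact h.nt this
    · intro j
      by_cases hj : j = c
      · subst hj
        simpa using h.ax.one
      · rw [Pi.single_eq_of_ne hj]; exact AddSubgroup.zero_mem _
  | succ r ih =>
    intro κ _ _ A α β hA hr
    by_cases hz : ∀ j, A 0 j = 0
    · obtain ⟨γ, v, hv, hvm, hv0⟩ := ih (Matrix.of fun i j => A i.succ j) (fun i => α i.succ) β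
        (fun i j => hA i.succ j) (by omega)
      refine ⟨γ, v, hv, hvm, fun i => ?_⟩
      refine Fin.cases ?_ (fun i => hv0 i) i
      simp [hz]
    · push Not at hz
      obtain ⟨c, hc⟩ := hz
      obtain ⟨b, hb, hab, hba⟩ := h.inv (hA 0 c) hc
      have hB : Hg 𝒦 (Matrix.of fun (i : Fin r) (j : {j // j ≠ c}) =>
          A i.succ j - A i.succ c * b * A 0 j) (fun i => α i.succ) (fun j => β j) := by
        intro i j
        refine AddSubgroup.sub_mem _ (hA i.succ j) ?_
        have := h.ax.mul (h.ax.mul (hA i.succ c) hb) (hA 0 j)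
        convert this using 2
        group
      obtain ⟨γ, v, hv, hvm, hv0⟩ := ih _ _ _ hB (by
        rw [Fintype.card_subtype_compl, Fintype.card_subtype_eq]; omega)
      let s : K := ∑ j : {j // j ≠ c}, A 0 j * v j
      have hs : s ∈ 𝒦 (α 0 * γ) := hsum _ fun j _ => by
        have := h.ax.mul (hA 0 j) (hvm j)
        convert this using 2
        group
      refine ⟨γ, fun j => if hj : j = c then - (b * s) else v ⟨j, hj⟩, ?_, ?_, ?_⟩
      · intro h0
        refine hv (funext fun j => ?_)
        have := congrFun h0 j.1
        simpa [j.2] using this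
      · intro j
        by_cases hj : j = c
        · subst hj
          simp only [dif_pos]
          refine AddSubgroup.neg_mem _ ?_
          have := h.ax.mul hb hs
          convert this using 2
          group
        · simp only [dif_neg hj]
          exact hvm ⟨j, hj⟩
      · intro i
        rw [Fintype.sum_eq_add_sum_subtype_ne _ c]
        have e : ∀ j : {j // j ≠ c}, A i j * (if hj : (j : κ) = c then - (b * s) else v ⟨j, hj⟩) =
            A i j * v j := by
          intro j
          rw [dif_neg j.2]
        simp only [e, dif_pos]
        refine Fin.cases ?_ (fun i => ?_) i
        · rw [mul_neg, ← mul_assoc, hab, one_mul]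
          exact neg_add_cancel _
        · have := hv0 i
          simp only [Matrix.of_apply, sub_mul, Finset.sum_sub_distrib, mul_assoc, ← Finset.mul_sum]
            at this
          rw [mul_neg, neg_add_eq_zero]
          exact (sub_eq_zero.1 this).symm

/-- having a null vector -/
def Null {ι κ : Type*} [Fintype κ] (A : Matrix ι κ K) : Prop := ∃ v : κ → K, v ≠ 0 ∧ A *ᵥ v = 0

lemma Null.not_isUnit {n : ℕ} {A : Matrix (Fin n) (Fin n) K} (hA : Null A) : ¬ IsUnit A := by
  obtain ⟨v, hv, h0⟩ := hA
  rintro ⟨⟨_, B, h1, h2⟩, rfl⟩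
  refine hv ?_
  rw [← Matrix.one_mulVec v, ← h2, ← Matrix.mulVec_mulVec]
  simp only at h0
  rw [h0, Matrix.mulVec_zero]

lemma unit_of_inj (h : GD 𝒦) {n : ℕ} {A : Matrix (Fin n) (Fin n) K} {α β : Fin n → Γ}
    (hA : Hg 𝒦 A α β)
    (hn : ∀ (γ : Γ) (v : Fin n → K), (∀ j, v j ∈ 𝒦 (β j * γ)) → (∀ i, ∑ j, A i j * v j = 0) → v = 0) :
    IsUnit A := by
  have key : ∀ k : Fin n, ∃ x : Fin n → K, (∀ j, x j ∈ 𝒦 (β j * (α k)⁻¹)) ∧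
      ∀ i, ∑ j, A i j * x j = (1 : Matrix (Fin n) (Fin n) K) i k := by
    intro k
    have hB : Hg 𝒦 (fromCols A (Matrix.of fun i (_ : Unit) => (1 : Matrix (Fin n) (Fin n) K) i k)) α
        (Sum.elim β fun _ => α k) := by
      intro i j
      rcases j with j | j
      · exact hA i j
      · exact Hg.one h.ax i k
    obtain ⟨γ, v, hv, hvm, hv0⟩ := exists_hnull h n _ _ _ hB (by simp)
    simp only [Fintype.sum_sum_type, fromCols_apply_inl, fromCols_apply_inr, Matrix.of_apply,
      Finset.univ_unique, Finset.sum_singleton] at hv0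
    by_cases ht : v (Sum.inr default) = 0
    · exfalso
      have := hn γ (fun j => v (Sum.inl j)) (fun j => hvm (Sum.inl j)) (fun i => by
        have := hv0 i
        rwa [ht, mul_zero, add_zero] at this)
      refine hv (funext fun j => ?_)
      rcases j with j | j
      · exact congrFun this j
      · exact ht
    · obtain ⟨b, hb, hab, hba⟩ := h.inv (hvm (Sum.inr default)) ht
      refine ⟨fun j => - (v (Sum.inl j) * b), fun j => ?_, fun i => ?_⟩
      · refine AddSubgroup.neg_mem _ ?_
        have := h.ax.mul (hvm (Sum.inl j)) hb
        simp only [Sum.elim_inl, Sum.elim_inr] at this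
        convert this using 2
        group
      · have := hv0 i
        simp only [mul_neg, Finset.sum_neg_distrib, ← mul_assoc, ← Finset.sum_mul]
        rw [eq_neg_of_add_eq_zero_left this, neg_mul, neg_neg, mul_assoc, hab, mul_one]
  choose x hx hx1 using key
  let X : Matrix (Fin n) (Fin n) K := Matrix.of fun j k => x k j
  have hX : Hg 𝒦 X β α := fun j k => hx k j
  have h1 : A * X = 1 := by
    ext i k : 1
    rw [Matrix.mul_apply]
    exact hx1 k i
  have hXA : Hg 𝒦 (X * A) β β := Hg.mul h.ax hX hA
  have h2 : X * A = 1 := by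
    have h3 : A * (X * A - 1) = 0 := by
      rw [Matrix.mul_sub, ← Matrix.mul_assoc, h1, Matrix.one_mul, Matrix.mul_one, sub_self]
    ext j k : 1
    have := hn (β k)⁻¹ (fun j => (X * A - 1) j k)
      (fun j => AddSubgroup.sub_mem _ (hXA j k) (Hg.one h.ax j k)) (fun i => by
        have := congrFun (congrFun h3 i) k
        rwa [Matrix.mul_apply] at this)
    exact sub_eq_zero.1 (congrFun this j)
  exact ⟨⟨A, X, h1, h2⟩, rfl⟩

lemma exists_of_not_unit (h : GD 𝒦) {n : ℕ} {A : Matrix (Fin n) (Fin n) K} {α β : Fin n → Γ}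
    (hA : Hg 𝒦 A α β) (hu : ¬ IsUnit A) : ∃ (γ : Γ) (v : Fin n → K), v ≠ 0 ∧
      (∀ j, v j ∈ 𝒦 (β j * γ)) ∧ ∀ i, ∑ j, A i j * v j = 0 := by
  by_contra hcon
  push Not at hcon
  refine hu (unit_of_inj h hA fun γ v h1 h2 => ?_)
  by_contra h0
  obtain ⟨i, hi⟩ := hcon γ v h0 h1
  exact hi (h2 i)

lemma null_of_not_unit (h : GD 𝒦) {n : ℕ} {A : Matrix (Fin n) (Fin n) K} {α β : Fin n → Γ}
    (hA : Hg 𝒦 A α β) (hu : ¬ IsUnit A) : Null A := by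
  obtain ⟨γ, v, h0, -, h1⟩ := exists_of_not_unit h hA hu
  exact ⟨v, h0, funext h1⟩

lemma col_nonunit (h : GD 𝒦) {n : ℕ} {A B C : Matrix (Fin n) (Fin n) K} {α β : Fin n → Γ}
    (hA : Hg 𝒦 A α β) (hB : Hg 𝒦 B α β) (hAu : ¬ IsUnit A) (hBu : ¬ IsUnit B) (c : Fin n)
    (h1 : ∀ i j, j ≠ c → A i j = B i j)
    (h2 : ∀ i j, C i j = if j = c then A i j + B i j else A i j) : ¬ IsUnit C := by
  obtain ⟨γ, v, hv, hvm, hv0⟩ := exists_of_not_unit h hA hAu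
  obtain ⟨δ, w, hw, hwm, hw0⟩ := exists_of_not_unit h hB hBu
  have hC : ∀ (u : Fin n → K) i, ∑ j, C i j * u j =
      (A i c + B i c) * u c + ∑ j : {j // j ≠ c}, A i j * u j := by
    intro u i
    rw [Fintype.sum_eq_add_sum_subtype_ne _ c, h2, if_pos rfl]
    congr 1
    exact Finset.sum_congr rfl fun j _ => by rw [h2, if_neg j.2]
  have hA' : ∀ i, A i c * v c + ∑ j : {j // j ≠ c}, A i j * v j = 0 := by
    intro i
    rw [← hv0 i, Fintype.sum_eq_add_sum_subtype_ne _ c]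
  have hB' : ∀ i, B i c * w c + ∑ j : {j // j ≠ c}, A i j * w j = 0 := by
    intro i
    rw [← hw0 i, Fintype.sum_eq_add_sum_subtype_ne _ c]
    congr 1
    exact Finset.sum_congr rfl fun j _ => by rw [h1 _ _ j.2]
  refine Null.not_isUnit ?_
  by_cases hvc : v c = 0
  · refine ⟨v, hv, funext fun i => (hC v i).trans ?_⟩
    have := hA' i
    rw [hvc, mul_zero] at this ⊢
    exact this
  by_cases hwc : w c = 0
  · refine ⟨w, hw, funext fun i => (hC w i).trans ?_⟩
    have := hB' i
    rw [hwc, mul_zero] at this ⊢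
    exact this
  obtain ⟨s, -, hs, -⟩ := h.inv (hvm c) hvc
  obtain ⟨t, -, ht, -⟩ := h.inv (hwm c) hwc
  refine ⟨fun j => if j = c then 1 else v j * s + w j * t, ?_, funext fun i => (hC _ i).trans ?_⟩
  · intro h0
    have := congrFun h0 c
    simp only [if_true, Pi.zero_apply] at this
    exact h.nt this
  · have e : ∀ j : {j // j ≠ c}, A i j * (if (j : Fin n) = c then 1 else v j * s + w j * t) =
        A i j * v j * s + A i j * w j * t := by
      intro j
      rw [if_neg j.2, mul_add, mul_assoc, mul_assoc]
    simp only [e, if_true, Finset.sum_add_distrib, ← Finset.sum_mul, mul_one]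
    rw [eq_neg_of_add_eq_zero_right (hA' i), eq_neg_of_add_eq_zero_right (hB' i), neg_mul, neg_mul,
      mul_assoc, mul_assoc, hs, ht, mul_one, mul_one, Pi.zero_apply]
    abel

/-- opposite grading -/
def opG (𝒦 : Γ → AddSubgroup K) (γ : Γ) : AddSubgroup Kᵐᵒᵖ where
  carrier := {x | x.unop ∈ 𝒦 γ⁻¹}
  add_mem' := fun ha hb => AddSubgroup.add_mem _ ha hb
  zero_mem' := AddSubgroup.zero_mem _
  neg_mem' := fun ha => AddSubgroup.neg_mem _ ha

lemma mem_opG {γ : Γ} {x : Kᵐᵒᵖ} : x ∈ opG 𝒦 γ ↔ x.unop ∈ 𝒦 γ⁻¹ := Iff.rfl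

lemma GD.op (h : GD 𝒦) : GD (opG 𝒦) where
  ax := ⟨by rw [mem_opG, inv_one]; exact h.ax.one, fun {γ δ x y} hx hy => by
    rw [mem_opG, MulOpposite.unop_mul, _root_.mul_inv_rev]
    exact h.ax.mul hy hx⟩
  nt := fun h0 => h.nt (congrArg MulOpposite.unop h0)
  inv := fun {γ a} ha h0 => by
    obtain ⟨b, hb, h1, h2⟩ := h.inv (a := a.unop) ha
      (fun h1 => h0 (MulOpposite.unop_injective h1))
    exact ⟨MulOpposite.op b, hb, MulOpposite.unop_injective h2, MulOpposite.unop_injective h1⟩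

lemma mul_opT {n : ℕ} (A B : Matrix (Fin n) (Fin n) K) :
    Bᵀ.map MulOpposite.op * Aᵀ.map MulOpposite.op = (A * B)ᵀ.map MulOpposite.op := by
  ext i j : 1
  refine MulOpposite.unop_injective ?_
  simp only [Matrix.mul_apply, Finset.unop_sum, Matrix.map_apply, Matrix.transpose_apply,
    MulOpposite.unop_mul, MulOpposite.unop_op]

lemma one_opT {n : ℕ} : ((1 : Matrix (Fin n) (Fin n) K)ᵀ.map MulOpposite.op) = 1 := by
  rw [Matrix.transpose_one, Matrix.map_one _ rfl rfl]

lemma unit_opT {n : ℕ} {A : Matrix (Fin n) (Fin n) K} :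
    IsUnit (Aᵀ.map MulOpposite.op) ↔ IsUnit A := by
  constructor
  · rintro ⟨⟨X, Y, h1, h2⟩, rfl : X = _⟩
    have inj : Function.Injective (fun M : Matrix (Fin n) (Fin n) K => Mᵀ.map MulOpposite.op) := by
      intro M N hMN
      ext i j : 1
      exact MulOpposite.op_injective (congrFun (congrFun hMN j) i)
    have hY' : Y = ((Y.map MulOpposite.unop)ᵀ)ᵀ.map MulOpposite.op := by
      ext i j : 1
      rfl
    rw [hY', mul_opT] at h1 h2
    refine ⟨⟨A, (Y.map MulOpposite.unop)ᵀ, inj ?_, inj ?_⟩, rfl⟩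
    · exact h2.trans one_opT.symm
    · exact h1.trans one_opT.symm
  · rintro ⟨⟨X, B, h1, h2⟩, rfl : X = A⟩
    refine ⟨⟨Xᵀ.map MulOpposite.op, Bᵀ.map MulOpposite.op, ?_, ?_⟩, rfl⟩
    · rw [mul_opT, h2, one_opT]
    · rw [mul_opT, h1, one_opT]

lemma hg_opT {n : ℕ} {A : Matrix (Fin n) (Fin n) K} {α β : Fin n → Γ} (hA : Hg 𝒦 A α β) :
    Hg (opG 𝒦) (Aᵀ.map MulOpposite.op) β α := by
  intro i j
  rw [mem_opG, _root_.mul_inv_rev, inv_inv]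
  exact hA j i

lemma detSum_nonunit (h : GD 𝒦) {n : ℕ} {A B C : Matrix (Fin n) (Fin n) K} {α β : Fin n → Γ}
    (hA : Hg 𝒦 A α β) (hB : Hg 𝒦 B α β) (hAu : ¬ IsUnit A) (hBu : ¬ IsUnit B)
    (hd : IsDetSum A B C) : ¬ IsUnit C := by
  rcases hd with ⟨c, h1, h2⟩ | ⟨r, h1, h2⟩
  · exact col_nonunit h hA hB hAu hBu c h1 h2
  · rw [← unit_opT] at hAu hBu ⊢
    refine col_nonunit h.op (hg_opT hA) (hg_opT hB) hAu hBu r ?_ ?_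
    · intro i j hj
      exact congrArg MulOpposite.op (h1 j i hj)
    · intro i j
      refine (congrArg MulOpposite.op (h2 j i)).trans ?_
      split_ifs <;> rfl

lemma diagSum_mul {a b : ℕ} (A A' : Matrix (Fin a) (Fin a) K) (B B' : Matrix (Fin b) (Fin b) K) :
    diagSum A B * diagSum A' B' = diagSum (A * A') (B * B') := by
  simp only [diagSum, reindex_apply]
  rw [Matrix.submatrix_mul_equiv, Matrix.fromBlocks_multiply]
  simp

lemma diagSum_one {a b : ℕ} :
    diagSum (1 : Matrix (Fin a) (Fin a) K) (1 : Matrix (Fin b) (Fin b) K) = 1 := by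
  simp [diagSum]

lemma diagSum_unit {a b : ℕ} {A : Matrix (Fin a) (Fin a) K} {B : Matrix (Fin b) (Fin b) K}
    (hA : IsUnit A) (hB : IsUnit B) : IsUnit (diagSum A B) := by
  obtain ⟨⟨A, A', h1, h2⟩, rfl⟩ := hA
  obtain ⟨⟨B, B', h3, h4⟩, rfl⟩ := hB
  refine ⟨⟨diagSum A B, diagSum A' B', ?_, ?_⟩, rfl⟩
  · rw [diagSum_mul, h1, h3, diagSum_one]
  · rw [diagSum_mul, h2, h4, diagSum_one]

variable {R : Type v} [Ring R]

lemma diagSum_map (f : R →+* K) {a b : ℕ} (A : Matrix (Fin a) (Fin a) R)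
    (B : Matrix (Fin b) (Fin b) R) : (diagSum A B).map f = diagSum (A.map f) (B.map f) := by
  simp only [diagSum, reindex_apply]
  rw [← Matrix.submatrix_map, Matrix.fromBlocks_map, Matrix.map_zero _ (map_zero f),
    Matrix.map_zero _ (map_zero f)]

lemma diagIter_unit (f : R →+* K) {n : ℕ} (P : Matrix (Fin n) (Fin n) R) (hP : IsUnit (P.map f))
    (r : ℕ) : IsUnit ((diagIter P r).map f) := by
  induction r with
  | zero =>
    have : IsEmpty (Fin (n * 0)) := by rw [mul_zero]; infer_instance
    exact isUnit_of_subsingleton _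
  | succ r ih =>
    show IsUnit ((diagSum (diagIter P r) P).map f)
    rw [diagSum_map]
    exact diagSum_unit ih hP

lemma hg_map {𝒜 : Γ → AddSubgroup R} (f : R →+* K) (hf : ∀ {γ r}, r ∈ 𝒜 γ → f r ∈ 𝒦 γ)
    {ι κ : Type*} {A : Matrix ι κ R} {α β} (hA : Hg 𝒜 A α β) : Hg 𝒦 (A.map f) α β :=
  fun i j => hf (hA i j)

lemma detSumOf_nonunit (h : GD 𝒦) {𝒜 : Γ → AddSubgroup R} (f : R →+* K)
    (hf : ∀ {γ r}, r ∈ 𝒜 γ → f r ∈ 𝒦 γ) {nq : ℕ} {Q : Matrix (Fin nq) (Fin nq) R}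
    (hQ : IsHomogSq 𝒜 Q) (hQu : ¬ IsUnit (Q.map f)) (p : SqMat R)
    (hp : IsDetSumOf 𝒜 (NF 𝒜 ∪ GenP 𝒜 Q) p) : ¬ IsUnit (p.2.map f) := by
  induction hp with
  | base p hp =>
    refine Null.not_isUnit ?_
    rcases hp with ⟨-, hnf⟩ | ⟨k, A, e, g, hA, rfl⟩
    · unfold IsGrFull at hnf
      push Not at hnf
      obtain ⟨r, P, Q', α, lam, β, hP, hQ', hPQ, hr⟩ := hnf
      obtain ⟨γ, v, hv, -, h0⟩ := exists_hnull h r (Q'.map f) lam β (hg_map f hf hQ') (by simpa)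
      refine ⟨v, hv, ?_⟩
      rw [hPQ, Matrix.map_mul, ← Matrix.mulVec_mulVec]
      have : Q'.map f *ᵥ v = 0 := funext h0
      rw [this, Matrix.mulVec_zero]
    · obtain ⟨α, β, hQ⟩ := hQ
      obtain ⟨v, hv, h0⟩ := null_of_not_unit h (hg_map f hf hQ) hQu
      refine ⟨(Sum.elim v 0 ∘ finSumFinEquiv.symm) ∘ g, ?_, ?_⟩
      · intro h1
        refine hv (funext fun j => ?_)
        have := congrFun h1 (g.symm (finSumFinEquiv (Sum.inl j)))
        simpa using this
      · show ((diagSum Q A).map f).submatrix e g *ᵥ _ = 0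
        rw [Matrix.submatrix_mulVec_equiv, diagSum_map, diagSum, reindex_apply,
          Matrix.submatrix_mulVec_equiv]
        have : (((Sum.elim v 0 ∘ finSumFinEquiv.symm) ∘ g) ∘ g.symm) ∘ finSumFinEquiv.symm.symm =
          (Sum.elim v (0 : Fin k → K)) := by
          ext j
          simp
        rw [this, Matrix.fromBlocks_mulVec]
        have e1 : (Sum.elim v (0 : Fin k → K)) ∘ Sum.inl = v := rfl
        have e2 : (Sum.elim v (0 : Fin k → K)) ∘ Sum.inr = 0 := rfl
        rw [e1, e2, h0]
        ext j
        simp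
  | step A B C hA hB hd ihA ihB =>
    obtain ⟨⟨α, β, h1, h2⟩, hd⟩ := hd
    refine detSum_nonunit h (hg_map f hf h1) (hg_map f hf h2) ihA ihB ?_
    rcases hd with ⟨c, h3, h4⟩ | ⟨c, h3, h4⟩
    · refine Or.inl ⟨c, fun i j hj => congrArg f (h3 i j hj), fun i j => ?_⟩
      simp only [Matrix.map_apply, h4]
      split_ifs <;> simp
    · refine Or.inr ⟨c, fun i j hj => congrArg f (h3 i j hj), fun i j => ?_⟩
      simp only [Matrix.map_apply, h4]
      split_ifs <;> simp

lemma gd_of [DecidableEq Γ] [Nontrivial K] (hi : DirectSum.IsInternal 𝒦) (hax : GrAx 𝒦)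
    (hu : ∀ {γ : Γ} {x : K}, x ∈ 𝒦 γ → x ≠ 0 → IsUnit x) : GD 𝒦 where
  ax := hax
  nt := one_ne_zero
  inv := by
    intro γ a ha h0
    obtain ⟨⟨a, b, h1, h2⟩, rfl⟩ := hu ha h0
    obtain ⟨p, q1, q2, q3, q4⟩ := exists_proj 𝒦 hi
    have key : ∀ r, p 1 (a * r) = a * p γ⁻¹ r := by
      refine q4 _ ?_ ?_
      · intro δ r hr
        by_cases hd : δ = γ⁻¹
        · subst hd
          rw [q2 hr]
          refine q2 ?_
          have := hax.mul ha hr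
          rwa [mul_inv_cancel] at this
        · rw [q3 hr (Ne.symm hd), mul_zero]
          refine q3 (hax.mul ha hr) ?_
          intro h3
          exact hd (eq_inv_of_mul_eq_one_right h3.symm)
      · intro x y hx hy
        simp only [mul_add, map_add, hx, hy]
    have h3 : a * p γ⁻¹ b = 1 := by
      rw [← key, h1]
      exact q2 hax.one
    have h4 : b = p γ⁻¹ b := left_inv_eq_right_inv h2 h3
    refine ⟨b, ?_, h1, h2⟩
    rw [h4]
    exact q1 _ _

end Fwd

theorem forward {Γ : Type u} [Group Γ] [DecidableEq Γ] {R : Type v} [Ring R]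
    (𝒜 : Γ → AddSubgroup R)
    {np nq : ℕ} (P : Matrix (Fin np) (Fin np) R) (Q : Matrix (Fin nq) (Fin nq) R)
    (hQ : IsHomogSq 𝒜 Q) (d : GrDivRingHom Γ R 𝒜)
    (hPu : IsUnit (P.map ⇑d.φ)) (hQu : ¬ IsUnit (Q.map ⇑d.φ)) (r m : ℕ) :
    ¬ IsDetSumOf 𝒜 (NF 𝒜 ∪ GenP 𝒜 Q)
      (⟨np * r + m, diagSum (diagIter P r) (1 : Matrix (Fin m) (Fin m) R)⟩ : SqMat R) := by
  intro hd
  have h : GD d.grading := gd_of d.internal ⟨d.one_mem, d.mul_mem⟩ d.isUnit_of_ne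
  refine detSumOf_nonunit h d.φ d.map_mem hQ hQu _ hd ?_
  show IsUnit ((diagSum (diagIter P r) (1 : Matrix (Fin m) (Fin m) R)).map d.φ)
  rw [diagSum_map]
  refine diagSum_unit (diagIter_unit d.φ P hPu r) ?_
  rw [Matrix.map_one _ (map_zero _) (map_one _)]
  exact isUnit_one

end GrW

/-- Let `R` be a `Γ`-graded ring and let `P`, `Q` be square
homogeneous matrices over `R`.  There exist a `Γ`-graded division ring `K` and a
homomorphism of `Γ`-graded rings `φ : R → K` such that `P^φ` is invertible over
`K` and `Q^φ` is not, if and only if no matrix of the form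
`(P ⊕ ⋯ ⊕ P) ⊕ I_m` (with `r ≥ 1` copies of `P` and `m ≥ 0`) is an iterated
determinantal sum of matrices each of which is either a non-gr-full square
homogeneous matrix, or of the form `E (Q ⊕ A) F` for some `A ∈ 𝔐(R)` (possibly
absent) and permutation matrices `E`, `F`. -/
theorem exists_graded_hom_inverting_P_not_Q_iff
    {Γ : Type u} [Group Γ] [DecidableEq Γ] {R : Type v} [Ring R]
    (𝒜 : Γ → AddSubgroup R)
    (hinternal : DirectSum.IsInternal 𝒜)
    (hone : (1 : R) ∈ 𝒜 1)
    (hmul : ∀ {γ δ : Γ} {x y : R}, x ∈ 𝒜 γ → y ∈ 𝒜 δ → x * y ∈ 𝒜 (γ * δ))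
    {np nq : ℕ} (P : Matrix (Fin np) (Fin np) R) (Q : Matrix (Fin nq) (Fin nq) R)
    (hP : IsHomogSq 𝒜 P) (hQ : IsHomogSq 𝒜 Q) :
    (∃ d : GrDivRingHom Γ R 𝒜, IsUnit (P.map ⇑d.φ) ∧ ¬ IsUnit (Q.map ⇑d.φ)) ↔
      ∀ (r m : ℕ), 1 ≤ r →
        ¬ IsDetSumOf 𝒜
          ({p : SqMat R | IsHomogSq 𝒜 p.2 ∧ ¬ IsGrFull 𝒜 p.2} ∪
            {p : SqMat R | ∃ (k : ℕ) (A : Matrix (Fin k) (Fin k) R)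
                (e f : Equiv.Perm (Fin (nq + k))),
                IsHomogSq 𝒜 A ∧ p = ⟨nq + k, (diagSum Q A).submatrix ⇑e ⇑f⟩})
          (⟨np * r + m, diagSum (diagIter P r) (1 : Matrix (Fin m) (Fin m) R)⟩ :
            SqMat R) := by
  have hax : GrW.GrAx 𝒜 := ⟨hone, hmul⟩
  constructor
  · rintro ⟨d, h1, h2⟩ r m _
    exact GrW.forward 𝒜 P Q hQ d h1 h2 r m
  · intro H
    exact GrW.backward 𝒜 hinternal hax P Q hP hQ H
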